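/- arXiv:0708.2510 — 2 statements merged into one kernel-verified Lean document; each statement's English description precedes it below -/
import Mathlib

section
/- Let H be a complex Hilbert space, J a signature operator on H, L a densely defined positive self-adjoint operator in H, and B := JL, and assume B is similar to a self-adjoint operator in H. Let f : [0, ∞) → H satisfy: (a) for each x₁ > 0 there exist K > 0 and k ∈ (0, 1] with ‖f(x) − f(y)‖ ≤ K |x − y|^k for all 0 ≤ x, y ≤ x₁, and (b) ∫₀^∞ ‖f(x)‖ dx < ∞. Then for every φ₊ ∈ H₊ there exists a unique function ψ : [0, ∞) → H which is continuous on [0, ∞), continuously differentiable on (0, ∞), satisfies ψ(x) ∈ dom B and ψ′(x) = −Bψ(x) + f(x) for all x > 0, satisfies P₊ψ(0) = φ₊, and is bounded: sup_{x ≥ 0} ‖ψ(x)‖ < ∞. -/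
open scoped ComplexOrder InnerProductSpace

noncomputable section

variable {H : Type*} [NormedAddCommGroup H] [InnerProductSpace ℂ H] [CompleteSpace H]

/-- `J` is a signature operator: `J = J* = J⁻¹`. -/
def IsSignatureOperator (J : H →L[ℂ] H) : Prop :=
  IsSelfAdjoint J ∧ J.comp J = ContinuousLinearMap.id ℂ H

/-- The orthogonal projection onto `H₊ = ker (J - I)`, which equals `(I + J)/2`
for a signature operator `J`. -/
def Pplus (J : H →L[ℂ] H) : H →L[ℂ] H := (2⁻¹ : ℂ) • (ContinuousLinearMap.id ℂ H + J)

/-- The orthogonal projection onto `H₋ = ker (J + I)`, which equals `(I - J)/2`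
for a signature operator `J`. -/
def Pminus (J : H →L[ℂ] H) : H →L[ℂ] H := (2⁻¹ : ℂ) • (ContinuousLinearMap.id ℂ H - J)

/-- The composition `J ∘ L` of a bounded operator `J` with an unbounded operator `L`,
as an unbounded operator with the same domain as `L`. -/
def pmapComp (J : H →L[ℂ] H) (L : H →ₗ.[ℂ] H) : H →ₗ.[ℂ] H :=
  { domain := L.domain
    toFun := (J : H →ₗ[ℂ] H).comp L.toFun }

/-- `L` is a positive operator: `⟨L h, h⟩ > 0` for every nonzero `h ∈ dom L`. -/
def IsPositivePMap (L : H →ₗ.[ℂ] H) : Prop :=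
  ∀ h : L.domain, (h : H) ≠ 0 → 0 < ⟪L h, (h : H)⟫_ℂ

/-- `B` is similar to a self-adjoint operator: there is a bounded operator `S` with bounded
inverse mapping `dom B` onto the domain of a self-adjoint operator `A` such that
`A (S h) = S (B h)` for all `h ∈ dom B`. -/
def SimilarToSelfAdjoint (B : H →ₗ.[ℂ] H) : Prop :=
  ∃ (S : H ≃L[ℂ] H) (A : H →ₗ.[ℂ] H), IsSelfAdjoint A ∧
    (A.domain : Set H) = (fun h => S h) '' (B.domain : Set H) ∧
    ∀ (h : B.domain) (hSh : S (h : H) ∈ A.domain), A ⟨S (h : H), hSh⟩ = S (B h)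

/-- `ψ` solves `ψ' = -B ψ + f` on the set `s` with a continuous derivative:
on `s`, `ψ` takes values in `dom B`, is differentiable with derivative `ψ'`,
`ψ'` is continuous on `s`, and `ψ' x = -B (ψ x) + f x`. -/
def IsStrongSolutionOn (B : H →ₗ.[ℂ] H) (f : ℝ → H) (ψ : ℝ → H) (s : Set ℝ) : Prop :=
  ∃ ψ' : ℝ → H, ContinuousOn ψ' s ∧
    ∀ x ∈ s, HasDerivAt ψ (ψ' x) x ∧
      ∃ hx : ψ x ∈ B.domain, ψ' x = -(B ⟨ψ x, hx⟩) + f x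

open MeasureTheory

section

open Filter Topology
open scoped LinearPMap

set_option linter.unusedSectionVars false

namespace IsSelfAdjoint

variable {A : H →ₗ.[ℂ] H}

lemma inner_graph (hA : IsSelfAdjoint A) {x y x' y' : H} (h : (x, y) ∈ A.graph)
    (h' : (x', y') ∈ A.graph) : ⟪y, x'⟫_ℂ = ⟪x, y'⟫_ℂ := by
  obtain ⟨u, rfl, rfl⟩ := (LinearPMap.mem_graph_iff A).mp h
  obtain ⟨v, rfl, rfl⟩ := (LinearPMap.mem_graph_iff A).mp h'
  have h := LinearPMap.adjoint_isFormalAdjoint hA.dense_domain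
  rw [LinearPMap.isSelfAdjoint_def.mp hA] at h
  exact h u v

/-- Membership in the graph of a self-adjoint operator can be tested weakly. -/
lemma mem_graph_of_forall_inner (hA : IsSelfAdjoint A) {y w : H}
    (h : ∀ x x', (x, x') ∈ A.graph → ⟪w, x⟫_ℂ = ⟪y, x'⟫_ℂ) : (y, w) ∈ A.graph := by
  have h' : ∀ x : A.domain, ⟪w, (x : H)⟫_ℂ = ⟪y, A x⟫_ℂ := fun x => h _ _ (A.mem_graph x)
  have hy : y ∈ A†.domain := LinearPMap.mem_adjoint_domain_of_exists y ⟨w, h'⟩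
  have hw : (y, w) ∈ A†.graph := by
    rw [← LinearPMap.adjoint_apply_eq hA.dense_domain ⟨y, hy⟩ h']
    exact LinearPMap.mem_graph (A†) ⟨y, hy⟩
  rwa [LinearPMap.isSelfAdjoint_def.mp hA] at hw

/-- Pythagorean identity for `A + c` with `A` self-adjoint and `c` a purely imaginary unit. -/
lemma norm_sq_add_smul (hA : IsSelfAdjoint A) {c : ℂ} (hre : c.re = 0) (hc : ‖c‖ = 1)
    {x y : H} (h : (x, y) ∈ A.graph) : ‖y + c • x‖ ^ 2 = ‖y‖ ^ 2 + ‖x‖ ^ 2 := by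
  have him : (⟪y, x⟫_ℂ).im = 0 := by
    have h' := inner_conj_symm (𝕜 := ℂ) y x
    rw [← hA.inner_graph h h] at h'
    exact Complex.conj_eq_iff_im.mp h'
  rw [@norm_add_sq ℂ, inner_smul_right, norm_smul, hc]
  simp [hre, him]

/-- The resolvent `(A + c)⁻¹` of a self-adjoint operator at a purely imaginary unit `-c`. -/
lemma exists_resolvent (hA : IsSelfAdjoint A) {c : ℂ} (hre : c.re = 0) (hc : ‖c‖ = 1) :
    ∃ R : H →L[ℂ] H, (∀ h, (R h, h - c • R h) ∈ A.graph) ∧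
      ∀ x y, (x, y) ∈ A.graph → R (y + c • x) = x := by
  have hcomplete : CompleteSpace A.graph := (IsSelfAdjoint.isClosed hA).completeSpace_coe
  let T : A.graph →L[ℂ] H :=
    ((ContinuousLinearMap.snd ℂ H H) + c • (ContinuousLinearMap.fst ℂ H H)).comp
      A.graph.subtypeL
  have hT : ∀ p : A.graph, T p = p.1.2 + c • p.1.1 := fun p => rfl
  have hanti : AntilipschitzWith 1 T := by
    refine T.antilipschitz_of_bound fun p => ?_
    have h := hA.norm_sq_add_smul hre hc p.2
    rw [hT, NNReal.coe_one, one_mul]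
    change max ‖p.1.1‖ ‖p.1.2‖ ≤ _
    refine max_le ?_ ?_ <;> refine abs_le_of_sq_le_sq' ?_ (norm_nonneg _) |>.2 <;>
      nlinarith [sq_nonneg ‖p.1.1‖, sq_nonneg ‖p.1.2‖]
  have hrange : T.range = ⊤ := by
    have hcl : IsClosed (T.range : Set H) := hanti.isClosed_range T.uniformContinuous
    have : CompleteSpace T.range := hcl.completeSpace_coe
    rw [← Submodule.orthogonal_eq_bot_iff, Submodule.eq_bot_iff]
    intro y hy
    have hcc : (starRingEnd ℂ) c = -c := by
      apply Complex.ext <;> simp [hre]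
    have hAy : (y, c • y) ∈ A.graph := hA.mem_graph_of_forall_inner fun x x' hx => by
      have : ⟪y, x' + c • x⟫_ℂ = 0 := inner_eq_zero_symm.mp (hy _ ⟨⟨(x, x'), hx⟩, rfl⟩)
      rw [inner_add_right, inner_smul_right] at this
      rw [inner_smul_left, hcc]
      linear_combination -this
    have h1 := hA.norm_sq_add_smul (c := -c) (by simpa using hre) (by simpa using hc) hAy
    simp only [neg_smul, add_neg_cancel, norm_zero] at h1
    have : ‖y‖ = 0 := by nlinarith [sq_nonneg ‖c • y‖, sq_nonneg ‖y‖]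
    simpa using this
  let e := ContinuousLinearEquiv.ofBijective T (LinearMap.ker_eq_bot.mpr hanti.injective) hrange
  have he : ∀ h, (e.symm h).1.2 + c • (e.symm h).1.1 = h := fun h => e.apply_symm_apply h
  refine ⟨(ContinuousLinearMap.fst ℂ H H).comp (A.graph.subtypeL.comp (e.symm : H →L[ℂ] A.graph)),
    fun h => ?_, fun x y hxy => ?_⟩
  · change ((e.symm h).1.1, h - c • (e.symm h).1.1) ∈ A.graph
    rw [sub_eq_of_eq_add (he h).symm]
    exact (e.symm h).2
  · exact congrArg (fun p : A.graph => p.1.1) (e.symm_apply_apply ⟨(x, y), hxy⟩)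

/-- The pair of resolvents `(A + i)⁻¹` and `((A + i)⁻¹)* = (A - i)⁻¹`. -/
lemma exists_resolvent_I (hA : IsSelfAdjoint A) :
    ∃ R : H →L[ℂ] H, (∀ h, (R h, h - Complex.I • R h) ∈ A.graph) ∧
      (∀ x y, (x, y) ∈ A.graph → R (y + Complex.I • x) = x) ∧
      (∀ x y, (x, y) ∈ A.graph → star R (y - Complex.I • x) = x) ∧
      R - star R = (-2 * Complex.I) • (star R * R) ∧ IsStarNormal R := by
  obtain ⟨R, hR, hR'⟩ := hA.exists_resolvent (c := Complex.I) (by simp) (by simp)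
  obtain ⟨Q, hQ, hQ'⟩ := hA.exists_resolvent (c := -Complex.I) (by simp) (by simp)
  have hstar : star R = Q := by
    rw [ContinuousLinearMap.star_eq_adjoint]
    symm
    rw [ContinuousLinearMap.eq_adjoint_iff]
    intro x y
    have h := hA.inner_graph (hQ x) (hR y)
    simp only [inner_sub_left, inner_sub_right, inner_smul_left, inner_smul_right, map_neg,
      Complex.conj_I] at h
    linear_combination -h
  have h1 : ∀ h, R h - Q h = (-2 * Complex.I) • R (Q h) := fun h => by
    have h0 := hR' _ _ (hQ h)
    have : h - -Complex.I • Q h + Complex.I • Q h = h + (2 * Complex.I) • Q h := by module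
    rw [this, map_add, map_smul] at h0
    linear_combination (norm := module) h0
  have h2 : ∀ h, R h - Q h = (-2 * Complex.I) • Q (R h) := fun h => by
    have h0 := hQ' _ _ (hR h)
    have : h - Complex.I • R h + -Complex.I • R h = h - (2 * Complex.I) • R h := by module
    rw [this, map_sub, map_smul] at h0
    linear_combination (norm := module) -h0
  refine ⟨R, hR, hR', fun x y h => ?_, ?_, ⟨?_⟩⟩
  · rw [hstar, sub_eq_add_neg, ← neg_smul]
    exact hQ' x y h
  · ext h
    simpa [hstar] using h2 h
  · rw [hstar]
    ext h
    have := (h1 h).symm.trans (h2 h)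
    exact (smul_right_injective H (by simp : (-2 * Complex.I) ≠ 0) this).symm

end IsSelfAdjoint

/-- `R` is the resolvent `(A + i)⁻¹`; the remaining fields record its algebraic consequences. -/
structure IsResolventI (A : H →ₗ.[ℂ] H) (R : H →L[ℂ] H) : Prop where
  mem_graph : ∀ h, (R h, h - Complex.I • R h) ∈ A.graph
  apply_add : ∀ x y, (x, y) ∈ A.graph → R (y + Complex.I • x) = x
  star_apply_sub : ∀ x y, (x, y) ∈ A.graph → star R (y - Complex.I • x) = x
  sub_star : R - star R = (-2 * Complex.I) • (star R * R)
  normal : IsStarNormal R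

/-- A continuous function on the line vanishing at infinity. -/
structure IsC0 (g : ℝ → ℂ) : Prop where
  continuous : Continuous g
  tendsto : Tendsto g (cocompact ℝ) (𝓝 0)

namespace IsC0

variable {g g' : ℝ → ℂ}

lemma of_bound (hg : Continuous g) (C : ℝ) (h : ∀ l, ‖g l‖ * |l| ≤ C) : IsC0 g := by
  refine ⟨hg, ?_⟩
  have h0 : Tendsto (fun l : ℝ => C * |l|⁻¹) (cocompact ℝ) (𝓝 0) := by
    have : Tendsto (fun l : ℝ => |l|) (cocompact ℝ) atTop := tendsto_norm_cocompact_atTop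
    simpa using this.inv_tendsto_atTop.const_mul C
  refine squeeze_zero_norm' ?_ h0
  filter_upwards [(isCompact_singleton (x := (0 : ℝ))).compl_mem_cocompact] with l hl
  have hl' : 0 < |l| := abs_pos.mpr hl
  rw [← div_eq_mul_inv, le_div_iff₀ hl']
  exact h l

lemma add (h : IsC0 g) (h' : IsC0 g') : IsC0 (fun l => g l + g' l) :=
  ⟨h.continuous.add h'.continuous, by simpa using h.tendsto.add h'.tendsto⟩

lemma mul (h : IsC0 g) (h' : IsC0 g') : IsC0 (fun l => g l * g' l) :=
  ⟨h.continuous.mul h'.continuous, by simpa using h.tendsto.mul h'.tendsto⟩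

lemma const_mul (h : IsC0 g) (c : ℂ) : IsC0 (fun l => c * g l) :=
  ⟨h.continuous.const_mul c, by simpa using h.tendsto.const_mul c⟩

end IsC0

/-- The function of `z = (l + i)⁻¹` given by a function of the real variable `l`. -/
def resolventFun (g : ℝ → ℂ) (z : ℂ) : ℂ := if z = 0 then 0 else g (z⁻¹.re)

/-- The operator `g(A)`, expressed through the resolvent `R = (A + i)⁻¹`. -/
def lineCalculus (R : H →L[ℂ] H) (g : ℝ → ℂ) : H →L[ℂ] H := cfc (resolventFun g) R

namespace IsResolventI

variable {A : H →ₗ.[ℂ] H} {R : H →L[ℂ] H} {g g' : ℝ → ℂ}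

lemma inv_im_eq_one (hR : IsResolventI A R) {z : ℂ} (hz : z ∈ spectrum ℂ R) (h0 : z ≠ 0) :
    z⁻¹.im = 1 := by
  have := hR.normal
  have h1 : cfc (fun z : ℂ => z - star z) R =
      cfc (fun z : ℂ => (-2 * Complex.I) * (star z * z)) R := by
    rw [cfc_sub .., cfc_const_mul .., cfc_mul .., cfc_star .., cfc_id' ..]
    exact hR.sub_star
  have h2 := congrArg Complex.im ((cfc_eq_cfc_iff_eqOn (a := R)).mp h1 hz)
  have h3 : Complex.normSq z ≠ 0 := by simpa using h0
  simp only [Complex.star_def, Complex.sub_im, Complex.conj_im, ← Complex.normSq_eq_conj_mul_self]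
    at h2
  simp at h2
  rw [Complex.inv_im, div_eq_one_iff_eq h3]
  linarith

lemma continuousOn_resolventFun (hR : IsResolventI A R) (hg : IsC0 g) :
    ContinuousOn (resolventFun g) (spectrum ℂ R) := by
  intro z hz
  by_cases h0 : z = 0
  · subst h0
    rw [ContinuousWithinAt]
    have hval : resolventFun g 0 = 0 := by simp [resolventFun]
    rw [hval]
    have hpunct : Tendsto (resolventFun g) (𝓝[spectrum ℂ R ∩ {0}ᶜ] 0) (𝓝 0) := by
      have hinv : Tendsto (fun z : ℂ => z⁻¹ - Complex.I) (𝓝[spectrum ℂ R ∩ {0}ᶜ] 0)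
          (Bornology.cobounded ℂ) := by
        have h1 : Tendsto (fun z : ℂ => z⁻¹) (𝓝[spectrum ℂ R ∩ {0}ᶜ] 0)
            (Bornology.cobounded ℂ) :=
          Filter.tendsto_inv₀_nhdsNE_zero.mono_left (nhdsWithin_mono _ Set.inter_subset_right)
        exact tendsto_sub_const_cobounded (Complex.I) |>.comp h1
      have hre : Tendsto (fun z : ℂ => (z⁻¹).re) (𝓝[spectrum ℂ R ∩ {0}ᶜ] 0) (cocompact ℝ) := by
        rw [← Metric.cobounded_eq_cocompact, ← tendsto_norm_atTop_iff_cobounded]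
        rw [← tendsto_norm_atTop_iff_cobounded] at hinv
        refine hinv.congr' ?_
        filter_upwards [self_mem_nhdsWithin] with z hz
        have him := hR.inv_im_eq_one hz.1 hz.2
        have : z⁻¹ - Complex.I = ((z⁻¹.re : ℝ) : ℂ) := by
          apply Complex.ext
          · simp
          · simp only [Complex.sub_im, him]; simp
        rw [this, Complex.norm_real]
      refine (hg.tendsto.comp hre).congr' ?_
      filter_upwards [self_mem_nhdsWithin] with z hz
      have : z ≠ 0 := hz.2
      simp [resolventFun, this]
    have hsub : spectrum ℂ R ⊆ (spectrum ℂ R ∩ {0}ᶜ) ∪ {0} := fun z hz => by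
      by_cases h : z = 0
      · exact Or.inr h
      · exact Or.inl ⟨hz, h⟩
    refine Tendsto.mono_left ?_ (nhdsWithin_mono _ hsub)
    rw [nhdsWithin_union, tendsto_sup]
    refine ⟨hpunct, ?_⟩
    rw [nhdsWithin_singleton, tendsto_pure_left]
    intro s hs
    rw [hval]
    exact mem_of_mem_nhds hs
  · refine ContinuousAt.continuousWithinAt ?_
    have h1 : ContinuousAt (fun z : ℂ => g (z⁻¹.re)) z :=
      hg.continuous.continuousAt.comp
        (Complex.continuous_re.continuousAt.comp (continuousAt_inv₀ h0))
    refine h1.congr ?_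
    filter_upwards [isOpen_ne.mem_nhds h0] with w hw
    have : w ≠ 0 := hw
    simp [resolventFun, this]

lemma calculus_add (hR : IsResolventI A R) (hg : IsC0 g) (hg' : IsC0 g') :
    lineCalculus R (fun l => g l + g' l) = lineCalculus R g + lineCalculus R g' := by
  have := hR.normal
  rw [lineCalculus, lineCalculus, lineCalculus, ← cfc_add R _ _ (hR.continuousOn_resolventFun hg)
    (hR.continuousOn_resolventFun hg')]
  congr 1
  ext z
  by_cases h : z = 0 <;> simp [resolventFun, h]

lemma calculus_mul (hR : IsResolventI A R) (hg : IsC0 g) (hg' : IsC0 g') :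
    lineCalculus R (fun l => g l * g' l) = lineCalculus R g * lineCalculus R g' := by
  rw [lineCalculus, lineCalculus, lineCalculus, ← cfc_mul _ _ R (hR.continuousOn_resolventFun hg)
    (hR.continuousOn_resolventFun hg')]
  congr 1
  ext z
  by_cases h : z = 0 <;> simp [resolventFun, h]

lemma calculus_const_mul (hR : IsResolventI A R) (hg : IsC0 g) (c : ℂ) :
    lineCalculus R (fun l => c * g l) = c • lineCalculus R g := by
  rw [lineCalculus, lineCalculus, ← cfc_const_mul c _ R (hR.continuousOn_resolventFun hg)]
  congr 1
  ext z
  by_cases h : z = 0 <;> simp [resolventFun, h]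

lemma star_calculus (R : H →L[ℂ] H) (g : ℝ → ℝ) :
    star (lineCalculus R (fun l => (g l : ℂ))) = lineCalculus R (fun l => (g l : ℂ)) := by
  rw [lineCalculus, ← cfc_star]
  congr 1
  ext z
  by_cases h : z = 0 <;> simp [resolventFun, h]

lemma norm_calculus_le (R : H →L[ℂ] H) {C : ℝ} (hC : 0 ≤ C) (h : ∀ l, ‖g l‖ ≤ C) :
    ‖lineCalculus R g‖ ≤ C := by
  refine norm_cfc_le hC fun z _ => ?_
  by_cases h0 : z = 0
  · simpa [resolventFun, h0] using hC
  · simpa [resolventFun, h0] using h _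

lemma calculus_zero (R : H →L[ℂ] H) : lineCalculus R (fun _ => 0) = 0 :=
  norm_le_zero_iff.mp (norm_calculus_le R le_rfl (by simp))

lemma calculus_inv (hR : IsResolventI A R) :
    lineCalculus R (fun l => ((l : ℂ) + Complex.I)⁻¹) = R := by
  have := hR.normal
  conv_rhs => rw [← cfc_id' ℂ R]
  refine cfc_congr fun z hz => ?_
  by_cases h : z = 0
  · simp [resolventFun, h]
  · have him := hR.inv_im_eq_one hz h
    have : ((z⁻¹.re : ℝ) : ℂ) + Complex.I = z⁻¹ := by
      apply Complex.ext
      · simp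
      · simp only [Complex.add_im, him]; simp
    simp only [resolventFun, h, if_false]
    rw [this, inv_inv]

lemma commute_calculus {X : H →L[ℂ] H} (h : Commute R X) (h' : Commute (star R) X) (g : ℝ → ℂ) :
    Commute (lineCalculus R g) X := h.cfc h' _

lemma calculus_commute_calculus (R : H →L[ℂ] H) (g g' : ℝ → ℂ) :
    Commute (lineCalculus R g) (lineCalculus R g') := cfc_commute_cfc _ _ _

end IsResolventI

/-- A strongly continuous contraction semigroup `U`, differentiable in norm for positive times with
derivative `-D`, and satisfying the bound `‖D t‖ ≤ t⁻¹` typical of analytic semigroups.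
For negative times `U` is only required to be strongly continuous. -/
structure IsAnalyticSemigroup (U D : ℝ → H →L[ℂ] H) : Prop where
  norm_le : ∀ t, ‖U t‖ ≤ 1
  norm_deriv_le : ∀ t, 0 < t → ‖D t‖ ≤ t⁻¹
  zero : U 0 = 1
  continuous : ∀ h, Continuous fun t => U t h
  hasDerivAt : ∀ t, 0 < t → HasDerivAt U (-D t) t
  add : ∀ s t, 0 ≤ s → 0 ≤ t → U (s + t) = U s * U t
  deriv_add : ∀ s t, 0 < s → 0 ≤ t → D (s + t) = D s * U t
  commute : ∀ s t, Commute (U s) (D t)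

lemma abs_pow_mul_exp_le (n : ℕ) {t : ℝ} (ht : 0 < t) (l : ℝ) :
    |l| ^ n * Real.exp (-(t * |l|)) ≤ n.factorial / t ^ n := by
  have h := Real.pow_div_factorial_le_exp (t * |l|) (by positivity) n
  have hn : (0 : ℝ) < n.factorial := by positivity
  rw [div_le_iff₀ hn, mul_pow] at h
  rw [Real.exp_neg, ← div_eq_mul_inv, div_le_div_iff₀ (Real.exp_pos _) (by positivity)]
  linarith

lemma isC0_mul_exp {q : ℝ → ℝ} (hq : Continuous q) (hb : ∀ l, |q l| ≤ 1 + l ^ 2) {t : ℝ}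
    (ht : 0 < t) : IsC0 (fun l => ((q l * Real.exp (-(t * |l|)) : ℝ) : ℂ)) := by
  refine IsC0.of_bound (by fun_prop) (1 / t + 6 / t ^ 3) fun l => ?_
  rw [Complex.norm_real, Real.norm_eq_abs, abs_mul, Real.abs_exp]
  have h1 := abs_pow_mul_exp_le 1 ht l
  have h3 := abs_pow_mul_exp_le 3 ht l
  have he := Real.exp_pos (-(t * |l|))
  norm_num [Nat.factorial] at h1 h3
  calc |q l| * Real.exp (-(t * |l|)) * |l|
      ≤ (1 + l ^ 2) * Real.exp (-(t * |l|)) * |l| := by gcongr; exact hb l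
    _ = |l| * Real.exp (-(t * |l|)) + |l| ^ 3 * Real.exp (-(t * |l|)) := by
        rw [← sq_abs l]; ring
    _ ≤ _ := by rw [one_div]; exact add_le_add h1 h3

lemma isC0_inv : IsC0 (fun l => ((l : ℂ) + Complex.I)⁻¹) := by
  have h0 : ∀ l : ℝ, (l : ℂ) + Complex.I ≠ 0 := fun l h => by
    simpa using congrArg Complex.im h
  refine IsC0.of_bound (Continuous.inv₀ (by fun_prop) h0) 1 fun l => ?_
  rw [norm_inv, inv_mul_le_iff₀ (norm_pos_iff.mpr (h0 l)), mul_one]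
  simpa using Complex.abs_re_le_norm ((l : ℂ) + Complex.I)

lemma abs_exp_sub_one_sub_self_le (y : ℝ) :
    |Real.exp y - 1 - y| ≤ y ^ 2 * Real.exp |y| := by
  have h1 := Real.add_one_le_exp y
  have h2 := Real.add_one_le_exp (-y)
  have h3 : Real.exp (-y) * Real.exp y = 1 := by rw [← Real.exp_add]; simp
  have h4 := Real.exp_pos y
  rw [abs_of_nonneg (by linarith)]
  have h5 : Real.exp y - 1 ≤ y * Real.exp y := by nlinarith
  rcases le_total 0 y with hy | hy
  · rw [abs_of_nonneg hy]
    nlinarith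
  · have h6 : 1 ≤ Real.exp |y| := Real.one_le_exp (abs_nonneg y)
    nlinarith [sq_nonneg y]

/-- `l ↦ q(l) exp(-t|l|)` applied to the operator with resolvent `R`. -/
def expCalculus (R : H →L[ℂ] H) (q : ℝ → ℝ) (t : ℝ) : H →L[ℂ] H :=
  lineCalculus R (fun l => ((q l * Real.exp (-(t * |l|)) : ℝ) : ℂ))

open scoped Classical in
/-- The semigroup `exp(-t|A|)`, extended by the identity to negative times. -/
def absSemigroup (R : H →L[ℂ] H) (t : ℝ) : H →L[ℂ] H :=
  if t ≤ 0 then 1 else expCalculus R (fun _ => 1) t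

/-- A weight that can be inserted in `expCalculus`. -/
structure IsWeight (q : ℝ → ℝ) : Prop where
  continuous : Continuous q
  bound : ∀ l, |q l| ≤ 1 + l ^ 2

namespace IsWeight

lemma one : IsWeight (fun _ => 1) := ⟨by fun_prop, fun l => by simp; positivity⟩

lemma id : IsWeight (fun l => l) :=
  ⟨by fun_prop, fun l => abs_le.mpr ⟨by nlinarith, by nlinarith⟩⟩

lemma abs : IsWeight (fun l => |l|) :=
  ⟨by fun_prop, fun l => by rw [abs_abs]; exact id.bound l⟩

lemma sqrt : IsWeight (fun l => √|l|) := ⟨by fun_prop, fun l => by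
  rw [abs_of_nonneg (Real.sqrt_nonneg _), Real.sqrt_le_left (by positivity)]
  nlinarith [id.bound l, abs_nonneg l, sq_nonneg l, sq_nonneg (l ^ 2)]⟩

lemma posPart : IsWeight (fun l => max l 0) := ⟨by fun_prop, fun l => by
  rw [abs_of_nonneg (le_max_right _ _)]
  exact max_le (by nlinarith) (by positivity)⟩

lemma negPart : IsWeight (fun l => max (-l) 0) := ⟨by fun_prop, fun l => by
  rw [abs_of_nonneg (le_max_right _ _)]
  exact max_le (by nlinarith) (by positivity)⟩

lemma one_add_sq : IsWeight (fun l => 1 + l ^ 2) := ⟨by fun_prop, fun l => by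
  rw [abs_of_nonneg (by positivity)]⟩

end IsWeight

namespace IsResolventI

variable {A : H →ₗ.[ℂ] H} {R : H →L[ℂ] H} {q q' q'' : ℝ → ℝ}

lemma expCalculus_mul (hR : IsResolventI A R) (hq : IsWeight q) (hq' : IsWeight q')
    (h : ∀ l, q'' l = q l * q' l) {s t : ℝ} (hs : 0 < s) (ht : 0 < t) :
    expCalculus R q'' (s + t) = expCalculus R q s * expCalculus R q' t := by
  rw [expCalculus, expCalculus, expCalculus, ← hR.calculus_mul
    (isC0_mul_exp hq.continuous hq.bound hs) (isC0_mul_exp hq'.continuous hq'.bound ht)]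
  congr 1
  ext l
  rw [h, ← Complex.ofReal_mul, add_mul, neg_add, Real.exp_add]
  congr 1
  ring

lemma expCalculus_add (hR : IsResolventI A R) (hq : IsWeight q) (hq' : IsWeight q')
    (h : ∀ l, q'' l = q l + q' l) {t : ℝ} (ht : 0 < t) :
    expCalculus R q'' t = expCalculus R q t + expCalculus R q' t := by
  rw [expCalculus, expCalculus, expCalculus, ← hR.calculus_add
    (isC0_mul_exp hq.continuous hq.bound ht) (isC0_mul_exp hq'.continuous hq'.bound ht)]
  congr 1
  ext l
  rw [h, ← Complex.ofReal_add, add_mul]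

lemma star_expCalculus (R : H →L[ℂ] H) (q : ℝ → ℝ) (t : ℝ) :
    star (expCalculus R q t) = expCalculus R q t := star_calculus R _

lemma absSemigroup_of_pos {t : ℝ} (ht : 0 < t) :
    absSemigroup R t = expCalculus R (fun _ => 1) t := by
  simp [absSemigroup, ht]

lemma absSemigroup_of_nonpos {t : ℝ} (ht : t ≤ 0) : absSemigroup R t = 1 := by
  simp [absSemigroup, ht]

lemma norm_absSemigroup_le (R : H →L[ℂ] H) (t : ℝ) : ‖absSemigroup R t‖ ≤ 1 := by
  rcases le_or_gt t 0 with ht | ht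
  · rw [absSemigroup_of_nonpos ht]
    exact ContinuousLinearMap.norm_id_le
  · rw [absSemigroup_of_pos ht]
    refine norm_calculus_le R zero_le_one fun l => ?_
    rw [Complex.norm_real, one_mul, Real.norm_eq_abs, Real.abs_exp, Real.exp_le_one_iff]
    have := mul_nonneg ht.le (abs_nonneg l)
    linarith

lemma hasDerivAt_absSemigroup (hR : IsResolventI A R) {t : ℝ} (ht : 0 < t) :
    HasDerivAt (absSemigroup R) (-expCalculus R (fun l => |l|) t) t := by
  set D := expCalculus R (fun l => |l|) t with hD
  have hO : (fun s => absSemigroup R s - absSemigroup R t + ((s - t : ℝ) : ℂ) • D) =O[𝓝 t]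
      fun s => ‖s - t‖ ^ 2 := by
    refine Asymptotics.IsBigO.of_bound (2 / (t / 2) ^ 2) ?_
    have hball : ∀ᶠ s in 𝓝 t, |s - t| < t / 2 :=
      (continuous_abs.comp (continuous_id.sub continuous_const)).continuousAt.eventually_lt
        continuousAt_const (by simpa using ht)
    filter_upwards [hball] with s hs
    have hs0 : 0 < s := by linarith [abs_lt.mp hs]
    have h1 := isC0_mul_exp IsWeight.one.continuous IsWeight.one.bound hs0
    have h2 := isC0_mul_exp IsWeight.one.continuous IsWeight.one.bound ht
    have h3 := isC0_mul_exp IsWeight.abs.continuous IsWeight.abs.bound ht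
    have heq : absSemigroup R s - absSemigroup R t + ((s - t : ℝ) : ℂ) • D =
        lineCalculus R (fun l => ((1 * Real.exp (-(s * |l|)) : ℝ) : ℂ) +
          ((-1 : ℂ) * ((1 * Real.exp (-(t * |l|)) : ℝ) : ℂ) +
            ((s - t : ℝ) : ℂ) * ((|l| * Real.exp (-(t * |l|)) : ℝ) : ℂ))) := by
      rw [hR.calculus_add h1 ((h2.const_mul _).add (h3.const_mul _)),
        hR.calculus_add (h2.const_mul _) (h3.const_mul _), hR.calculus_const_mul h2,
        hR.calculus_const_mul h3, absSemigroup_of_pos hs0, absSemigroup_of_pos ht]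
      simp only [hD, expCalculus, neg_smul, one_smul]
      abel
    rw [heq]
    refine norm_calculus_le R (by positivity) fun l => ?_
    have hsplit : ((1 * Real.exp (-(s * |l|)) : ℝ) : ℂ) +
          ((-1 : ℂ) * ((1 * Real.exp (-(t * |l|)) : ℝ) : ℂ) +
            ((s - t : ℝ) : ℂ) * ((|l| * Real.exp (-(t * |l|)) : ℝ) : ℂ)) =
        ((Real.exp (-(t * |l|)) *
          (Real.exp (-((s - t) * |l|)) - 1 - (-((s - t) * |l|))) : ℝ) : ℂ) := by
      have : Real.exp (-(s * |l|)) = Real.exp (-(t * |l|)) * Real.exp (-((s - t) * |l|)) := by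
        rw [← Real.exp_add]; congr 1; ring
      rw [this]
      push_cast
      ring
    rw [hsplit, Complex.norm_real, Real.norm_eq_abs, abs_mul, Real.abs_exp]
    have hy := abs_exp_sub_one_sub_self_le (-((s - t) * |l|))
    have hexp : Real.exp |-((s - t) * |l|)| ≤ Real.exp (t / 2 * |l|) := by
      rw [Real.exp_le_exp, abs_neg, abs_mul, abs_abs]
      gcongr
    have h2' := abs_pow_mul_exp_le 2 (half_pos ht) l
    calc Real.exp (-(t * |l|)) * |Real.exp (-((s - t) * |l|)) - 1 - (-((s - t) * |l|))|
        ≤ Real.exp (-(t * |l|)) * ((-((s - t) * |l|)) ^ 2 * Real.exp (t / 2 * |l|)) := by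
          gcongr
          exact hy.trans (by gcongr)
      _ = (|l| ^ 2 * (Real.exp (-(t * |l|)) * Real.exp (t / 2 * |l|))) * (s - t) ^ 2 := by ring
      _ = (|l| ^ 2 * Real.exp (-(t / 2 * |l|))) * (s - t) ^ 2 := by
          rw [← Real.exp_add]; congr 3; ring
      _ ≤ ((2 : ℕ).factorial / (t / 2) ^ 2) * (s - t) ^ 2 := by gcongr
      _ = _ := by simp [Nat.factorial]
  have h0 : HasDerivAt
      (fun s => absSemigroup R s - absSemigroup R t + ((s - t : ℝ) : ℂ) • D) 0 t := by
    have := (hO.hasFDerivAt (by norm_num)).hasDerivAt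
    simpa using this
  have h1 : HasDerivAt (fun s : ℝ => ((s - t : ℝ) : ℂ) • D) D t := by
    have := ((hasDerivAt_id t).sub_const t).ofReal_comp.smul_const D
    simpa using this
  have h2 := (h0.sub h1).add_const (absSemigroup R t)
  rw [zero_sub] at h2
  refine h2.congr_of_eventuallyEq (Eventually.of_forall fun s => ?_)
  simp only [Pi.sub_apply]
  abel

lemma denseRange (hA : IsSelfAdjoint A) (hR : IsResolventI A R) : DenseRange R := by
  refine hA.dense_domain.mono fun x hx => ?_
  exact ⟨_, hR.apply_add x _ (A.mem_graph ⟨x, hx⟩)⟩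

lemma norm_absSemigroup_mul_sub_le (hR : IsResolventI A R) {t : ℝ} (ht : 0 < t) :
    ‖absSemigroup R t * R - R‖ ≤ t := by
  have h1 := isC0_mul_exp IsWeight.one.continuous IsWeight.one.bound ht
  have h : absSemigroup R t * R - R = lineCalculus R (fun l =>
      ((1 * Real.exp (-(t * |l|)) : ℝ) : ℂ) * ((l : ℂ) + Complex.I)⁻¹ +
        (-1) * ((l : ℂ) + Complex.I)⁻¹) := by
    rw [hR.calculus_add (h1.mul isC0_inv) (isC0_inv.const_mul _), hR.calculus_mul h1 isC0_inv,
      hR.calculus_const_mul isC0_inv, hR.calculus_inv, absSemigroup_of_pos ht, expCalculus]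
    simp [sub_eq_add_neg]
  rw [h]
  refine norm_calculus_le R ht.le fun l => ?_
  have h0 : (l : ℂ) + Complex.I ≠ 0 := fun h => by simpa using congrArg Complex.im h
  have h2 : |l| ≤ ‖(l : ℂ) + Complex.I‖ := by
    simpa using Complex.abs_re_le_norm ((l : ℂ) + Complex.I)
  have h3 : 1 - Real.exp (-(t * |l|)) ≤ t * |l| := by
    linarith [Real.add_one_le_exp (-(t * |l|))]
  have h4 : Real.exp (-(t * |l|)) ≤ 1 := by
    rw [Real.exp_le_one_iff]
    linarith [mul_nonneg ht.le (abs_nonneg l)]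
  rw [← add_mul, norm_mul, norm_inv, ← div_eq_mul_inv, div_le_iff₀ (norm_pos_iff.mpr h0)]
  have h5 : ((1 * Real.exp (-(t * |l|)) : ℝ) : ℂ) + -1 =
      ((Real.exp (-(t * |l|)) - 1 : ℝ) : ℂ) := by push_cast; ring
  rw [h5, Complex.norm_real, Real.norm_eq_abs, abs_sub_comm, abs_of_nonneg (by linarith)]
  exact h3.trans (by gcongr)

lemma continuous_absSemigroup (hA : IsSelfAdjoint A) (hR : IsResolventI A R) (h : H) :
    Continuous fun t => absSemigroup R t h := by
  have hdense : ∀ h ∈ Set.range R, Continuous fun t => absSemigroup R t h := by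
    rintro _ ⟨k, rfl⟩
    rw [continuous_iff_continuousAt]
    intro t
    rcases lt_trichotomy t 0 with ht | rfl | ht
    · refine (continuousAt_const (y := R k)).congr ?_
      filter_upwards [gt_mem_nhds ht] with s hs
      rw [absSemigroup_of_nonpos hs.le]
      rfl
    · rw [ContinuousAt, absSemigroup_of_nonpos le_rfl, tendsto_iff_norm_sub_tendsto_zero]
      refine squeeze_zero (g := fun t : ℝ => |t| * ‖k‖) (fun _ => norm_nonneg _) (fun s => ?_) ?_
      · rcases le_or_gt s 0 with hs | hs
        · rw [absSemigroup_of_nonpos hs, sub_self, norm_zero]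
          positivity
        · rw [abs_of_pos hs]
          exact ((absSemigroup R s * R - R).le_opNorm k).trans
            (by gcongr; exact hR.norm_absSemigroup_mul_sub_le hs)
      · have : Continuous fun t : ℝ => |t| * ‖k‖ := by fun_prop
        simpa using this.tendsto 0
    · exact (hR.hasDerivAt_absSemigroup ht).continuousAt.clm_apply continuousAt_const
  rw [continuous_iff_continuousAt]
  intro t
  rw [Metric.continuousAt_iff']
  intro ε hε
  obtain ⟨k, hk, hhk⟩ := Metric.mem_closure_iff.mp (hR.denseRange hA h) (ε / 3) (by positivity)
  filter_upwards [Metric.continuousAt_iff'.mp (hdense k hk).continuousAt (ε / 3) (by positivity)]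
    with s hs
  have hle : ∀ s, dist (absSemigroup R s h) (absSemigroup R s k) < ε / 3 := fun s => by
    refine lt_of_le_of_lt ?_ hhk
    rw [dist_eq_norm, dist_eq_norm, ← map_sub]
    exact ((absSemigroup R s).le_of_opNorm_le (norm_absSemigroup_le R s) _).trans (by simp)
  have h1 := dist_triangle4 (absSemigroup R s h) (absSemigroup R s k) (absSemigroup R t k)
    (absSemigroup R t h)
  have h2 := hle t
  rw [dist_comm] at h2
  linarith [hle s]

lemma isAnalyticSemigroup (hA : IsSelfAdjoint A) (hR : IsResolventI A R) :
    IsAnalyticSemigroup (absSemigroup R) (expCalculus R fun l => |l|) where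
  norm_le := norm_absSemigroup_le R
  norm_deriv_le t ht := norm_calculus_le R (by positivity) fun l => by
    have := abs_pow_mul_exp_le 1 ht l
    rw [Complex.norm_real, Real.norm_eq_abs, abs_mul, abs_abs, Real.abs_exp]
    simpa using this
  zero := absSemigroup_of_nonpos le_rfl
  continuous := hR.continuous_absSemigroup hA
  hasDerivAt t ht := hR.hasDerivAt_absSemigroup ht
  add s t hs ht := by
    rcases hs.eq_or_lt with rfl | hs
    · rw [zero_add, absSemigroup_of_nonpos le_rfl, one_mul]
    rcases ht.eq_or_lt with rfl | ht
    · rw [add_zero, absSemigroup_of_nonpos le_rfl, mul_one]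
    rw [absSemigroup_of_pos hs, absSemigroup_of_pos ht, absSemigroup_of_pos (by positivity)]
    exact hR.expCalculus_mul IsWeight.one IsWeight.one (by simp) hs ht
  deriv_add s t hs ht := by
    rcases ht.eq_or_lt with rfl | ht
    · rw [add_zero, absSemigroup_of_nonpos le_rfl, mul_one]
    rw [absSemigroup_of_pos ht]
    exact hR.expCalculus_mul IsWeight.abs IsWeight.one (by simp) hs ht
  commute s t := by
    rcases le_or_gt s 0 with hs | hs
    · rw [absSemigroup_of_nonpos hs]
      exact Commute.one_left _
    · rw [absSemigroup_of_pos hs]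
      exact calculus_commute_calculus R _ _

end IsResolventI

/-- A commuting idempotent `E` splitting the operator `A` into its nonnegative part `|A|`
and its nonpositive part `-|A|`, where `U t = exp (-t|A|)` and `D t = |A| exp (-t|A|)`. -/
structure IsSplitting (A : H →ₗ.[ℂ] H) (U D : ℝ → H →L[ℂ] H) (E : H →L[ℂ] H) : Prop where
  idem : ∀ v, E (E v) = E v
  commute_semigroup : ∀ t v, E (U t v) = U t (E v)
  graph_pos : ∀ v w, E v = v → (∀ ε, 0 < ε → D ε v = U ε w) → (v, w) ∈ A.graph
  graph_neg : ∀ v w, E v = 0 → (∀ ε, 0 < ε → D ε v = U ε w) → (v, -w) ∈ A.graph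
  deriv_pos : ∀ v w, (v, w) ∈ A.graph → ∀ ε, 0 < ε → D ε (E v) = U ε (E w)
  deriv_neg : ∀ v w, (v, w) ∈ A.graph → ∀ ε, 0 < ε → D ε (v - E v) = -U ε (w - E w)
  injective : ∀ v, (∀ ε, 0 < ε → D ε v = 0) → v = 0

namespace IsResolventI

variable {A : H →ₗ.[ℂ] H} {R : H →L[ℂ] H}

lemma resolvent_mul_expCalculus (hR : IsResolventI A R) {t : ℝ} (ht : 0 < t) :
    R * expCalculus R (fun l => l) t =
      absSemigroup R t + (-Complex.I) • (R * absSemigroup R t) := by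
  have h1 := isC0_mul_exp IsWeight.one.continuous IsWeight.one.bound ht
  have hl := isC0_mul_exp IsWeight.id.continuous IsWeight.id.bound ht
  rw [absSemigroup_of_pos ht]
  conv_lhs => enter [1]; rw [← hR.calculus_inv]
  conv_rhs => enter [2, 2, 1]; rw [← hR.calculus_inv]
  rw [expCalculus, expCalculus, ← hR.calculus_mul isC0_inv hl, ← hR.calculus_mul isC0_inv h1,
    ← hR.calculus_const_mul (isC0_inv.mul h1), ← hR.calculus_add h1 ((isC0_inv.mul h1).const_mul _)]
  congr 1
  ext l
  have h0 : (l : ℂ) + Complex.I ≠ 0 := fun h => by simpa using congrArg Complex.im h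
  push_cast
  field_simp
  ring

lemma mem_graph_iff_apply (hR : IsResolventI A R) {x y : H} :
    (x, y) ∈ A.graph ↔ R y = x - Complex.I • R x := by
  constructor
  · intro h
    have := hR.apply_add x y h
    rw [map_add, map_smul] at this
    rw [eq_sub_iff_add_eq, this]
  · intro h
    have h1 := hR.mem_graph (y + Complex.I • x)
    have h2 : R (y + Complex.I • x) = x := by rw [map_add, map_smul, h]; abel
    rw [h2] at h1
    simpa using h1

lemma mem_graph_semigroup (hR : IsResolventI A R) {t : ℝ} (ht : 0 < t) (h : H) :
    (absSemigroup R t h, expCalculus R (fun l => l) t h) ∈ A.graph := by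
  rw [hR.mem_graph_iff_apply]
  have := congrArg (fun T : H →L[ℂ] H => T h) (hR.resolvent_mul_expCalculus ht)
  simp only [mul_apply_eq_comp, add_apply,
    smul_apply] at this
  rw [this]
  module

lemma commute_expCalculus_resolvent (hR : IsResolventI A R) (q : ℝ → ℝ) (t : ℝ) :
    Commute (expCalculus R q t) R :=
  commute_calculus (Commute.refl R) hR.normal.star_comm_self _

lemma commute_absSemigroup {X : H →L[ℂ] H}
    (h : ∀ t, Commute (expCalculus R (fun _ => 1) t) X) (t : ℝ) :
    Commute (absSemigroup R t) X := by
  rcases le_or_gt t 0 with ht | ht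
  · rw [absSemigroup_of_nonpos ht]; exact Commute.one_left _
  · rw [absSemigroup_of_pos ht]; exact h t

lemma semigroup_apply_of_mem_graph (hR : IsResolventI A R) {x y : H} (h : (x, y) ∈ A.graph)
    {t : ℝ} (ht : 0 < t) : absSemigroup R t y = expCalculus R (fun l => l) t x := by
  have hc : Commute (absSemigroup R t) R :=
    commute_absSemigroup (fun t => hR.commute_expCalculus_resolvent _ t) t
  have hc' := hR.commute_expCalculus_resolvent (fun l => l) t
  have h1 := congrArg (fun T : H →L[ℂ] H => T (y + Complex.I • x))
    (hR.resolvent_mul_expCalculus ht)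
  rw [← hc'.eq] at h1
  rw [← hc.eq] at h1
  simp only [mul_apply_eq_comp, add_apply,
    smul_apply, hR.apply_add x y h] at h1
  rw [h1, map_add, map_smul]
  module

lemma eq_zero_of_absSemigroup_apply (hA : IsSelfAdjoint A) (hR : IsResolventI A R) {v : H} {t : ℝ}
    (ht : 0 < t) (hv : absSemigroup R t v = 0) : v = 0 := by
  have hU := hR.isAnalyticSemigroup hA
  have h : ∀ n : ℕ, absSemigroup R (t * 2⁻¹ ^ n) v = 0 := fun n => by
    induction n with
    | zero => simpa using hv
    | succ n ih =>
      have hs : 0 < t * 2⁻¹ ^ (n + 1) := by positivity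
      have e : t * 2⁻¹ ^ n = t * 2⁻¹ ^ (n + 1) + t * 2⁻¹ ^ (n + 1) := by ring
      rw [e, hU.add _ _ hs.le hs.le, mul_apply_eq_comp] at ih
      rw [← inner_self_eq_zero (𝕜 := ℂ), ← ContinuousLinearMap.adjoint_inner_right,
        ← ContinuousLinearMap.star_eq_adjoint]
      nth_rewrite 1 [absSemigroup_of_pos hs]
      rw [star_expCalculus, ← absSemigroup_of_pos hs, ih, inner_zero_right]
  have h0 : Tendsto (fun n : ℕ => t * (2⁻¹ : ℝ) ^ n) atTop (𝓝 0) := by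
    simpa using (tendsto_pow_atTop_nhds_zero_of_lt_one (r := (2⁻¹ : ℝ)) (by norm_num)
      (by norm_num)).const_mul t
  have hlim := ((hU.continuous v).tendsto 0).comp h0
  rw [hU.zero] at hlim
  refine tendsto_nhds_unique hlim ?_
  simp only [Function.comp_def, h]
  exact tendsto_const_nhds

/-- `|A| exp(-t|A|)` is injective when `A` is. -/
lemma eq_zero_of_expCalculus_abs (hA : IsSelfAdjoint A) (hR : IsResolventI A R)
    (hker : ∀ x, (x, 0) ∈ A.graph → x = 0) {v : H} {t : ℝ} (ht : 0 < t)
    (hv : expCalculus R (fun l => |l|) t v = 0) : v = 0 := by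
  refine hR.eq_zero_of_absSemigroup_apply hA ht (hker _ ?_)
  have h2 : expCalculus R (fun l => l) t v = 0 := by
    have e : expCalculus R (fun l => l) t * expCalculus R (fun l => l) t =
        expCalculus R (fun l => |l|) t * expCalculus R (fun l => |l|) t := by
      rw [expCalculus, expCalculus]
      rw [← hR.calculus_mul (isC0_mul_exp IsWeight.id.continuous IsWeight.id.bound ht)
        (isC0_mul_exp IsWeight.id.continuous IsWeight.id.bound ht),
        ← hR.calculus_mul (isC0_mul_exp IsWeight.abs.continuous IsWeight.abs.bound ht)
        (isC0_mul_exp IsWeight.abs.continuous IsWeight.abs.bound ht)]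
      congr 1
      ext l
      norm_cast
      rw [mul_mul_mul_comm, mul_mul_mul_comm |l|, abs_mul_abs_self]
    have e' := congrArg (fun T : H →L[ℂ] H => T v) e
    simp only [mul_apply_eq_comp, hv, map_zero] at e'
    rw [← inner_self_eq_zero (𝕜 := ℂ), ← ContinuousLinearMap.adjoint_inner_right,
      ← ContinuousLinearMap.star_eq_adjoint, star_expCalculus, e', inner_zero_right]
  have := hR.mem_graph_semigroup ht v
  rwa [h2] at this

lemma isC0_posPart : IsC0 (fun l => ((max l 0 / (1 + l ^ 2) : ℝ) : ℂ)) := by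
  refine IsC0.of_bound ?_ 1 fun l => ?_
  · refine Complex.continuous_ofReal.comp (Continuous.div (by fun_prop) (by fun_prop) fun l => ?_)
    positivity
  · have : (0 : ℝ) < 1 + l ^ 2 := by positivity
    rw [Complex.norm_real, Real.norm_eq_abs, abs_div, abs_of_pos this,
      abs_of_nonneg (le_max_right _ _), div_mul_eq_mul_div, div_le_one this]
    rcases le_total l 0 with h | h
    · rw [max_eq_right h]; nlinarith
    · rw [max_eq_left h, abs_of_nonneg h]; nlinarith

/-- The kernel of (a bounded version of) the positive part of `A`. -/
def negSubspace (R : H →L[ℂ] H) : Submodule ℂ H :=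
  (lineCalculus R (fun l => ((max l 0 / (1 + l ^ 2) : ℝ) : ℂ))).ker

lemma mem_negSubspace {v : H} : v ∈ negSubspace R ↔
    lineCalculus R (fun l => ((max l 0 / (1 + l ^ 2) : ℝ) : ℂ)) v = 0 := Iff.rfl

instance : CompleteSpace (negSubspace R) :=
  (ContinuousLinearMap.isClosed_ker _).completeSpace_coe

/-- The spectral projection of `A` for the open positive half-line. -/
def posProj (R : H →L[ℂ] H) : H →L[ℂ] H := (negSubspace R)ᗮ.starProjection

lemma posProj_eq (v : H) : posProj R v = v - (negSubspace R).starProjection v := by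
  rw [posProj, Submodule.starProjection_orthogonal]; rfl

lemma commute_posProj {X : H →L[ℂ] H}
    (h : Commute (lineCalculus R (fun l => ((max l 0 / (1 + l ^ 2) : ℝ) : ℂ))) X)
    (h' : Commute (lineCalculus R (fun l => ((max l 0 / (1 + l ^ 2) : ℝ) : ℂ))) (star X)) (v : H) :
    posProj R (X v) = X (posProj R v) := by
  have key : ∀ Y : H →L[ℂ] H,
      Commute (lineCalculus R (fun l => ((max l 0 / (1 + l ^ 2) : ℝ) : ℂ))) Y →
      ∀ v ∈ negSubspace R, Y v ∈ negSubspace R := fun Y hY v hv => by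
    rw [mem_negSubspace] at hv ⊢
    rw [← mul_apply_eq_comp, hY.eq, mul_apply_eq_comp, hv, map_zero]
  refine Submodule.eq_starProjection_of_mem_orthogonal (K := (negSubspace R)ᗮ)
    (v := X (posProj R v)) ?_ ?_
  · rw [Submodule.mem_orthogonal]
    intro u hu
    rw [← ContinuousLinearMap.adjoint_inner_left, ← ContinuousLinearMap.star_eq_adjoint]
    exact (Submodule.mem_orthogonal _ _).mp (Submodule.starProjection_apply_mem _ v) _
      (key _ h' u hu)
  · rw [← map_sub, posProj_eq, sub_sub_cancel, Submodule.orthogonal_orthogonal]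
    exact key _ h _ (Submodule.starProjection_apply_mem _ v)

lemma expCalculus_posPart_apply (hR : IsResolventI A R) {v : H} (hv : posProj R v = 0) {t : ℝ}
    (ht : 0 < t) : expCalculus R (fun l => max l 0) t v = 0 := by
  have hv' : v ∈ negSubspace R := by
    rw [posProj_eq, sub_eq_zero] at hv
    rw [hv]
    exact Submodule.starProjection_apply_mem _ v
  have h : expCalculus R (fun l => max l 0) t = expCalculus R (fun l => 1 + l ^ 2) t *
      lineCalculus R (fun l => ((max l 0 / (1 + l ^ 2) : ℝ) : ℂ)) := by
    rw [expCalculus, expCalculus, ← hR.calculus_mul (isC0_mul_exp IsWeight.one_add_sq.continuous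
      IsWeight.one_add_sq.bound ht) isC0_posPart]
    congr 1
    ext l
    norm_cast
    have : (1 + l ^ 2 : ℝ) ≠ 0 := by positivity
    field_simp
  rw [h, mul_apply_eq_comp, mem_negSubspace.mp hv', map_zero]

lemma expCalculus_negPart_apply (hR : IsResolventI A R) {v : H} (hv : posProj R v = v) {t : ℝ}
    (ht : 0 < t) : expCalculus R (fun l => max (-l) 0) t v = 0 := by
  have hv' : v ∈ (negSubspace R)ᗮ := by
    rw [← hv]
    exact Submodule.starProjection_apply_mem _ v
  have h : lineCalculus R (fun l => ((max l 0 / (1 + l ^ 2) : ℝ) : ℂ)) *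
      expCalculus R (fun l => max (-l) 0) t = 0 := by
    rw [expCalculus, ← hR.calculus_mul isC0_posPart (isC0_mul_exp IsWeight.negPart.continuous
      IsWeight.negPart.bound ht), ← calculus_zero R]
    congr 1
    ext l
    norm_cast
    rcases le_total l 0 with h | h
    · simp [max_eq_right h]
    · simp [h]
  rw [← inner_self_eq_zero (𝕜 := ℂ), ← ContinuousLinearMap.adjoint_inner_left,
    ← ContinuousLinearMap.star_eq_adjoint, star_expCalculus]
  refine (Submodule.mem_orthogonal _ _).mp hv' _ ?_
  rw [mem_negSubspace, ← mul_apply_eq_comp, h, zero_apply]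

lemma expCalculus_abs_eq (hR : IsResolventI A R) {t : ℝ} (ht : 0 < t) :
    expCalculus R (fun l => |l|) t =
      expCalculus R (fun l => max l 0) t + expCalculus R (fun l => max (-l) 0) t :=
  hR.expCalculus_add IsWeight.posPart IsWeight.negPart (fun l => by
    rcases le_total l 0 with h | h
    · simp [h, abs_of_nonpos]
    · simp [h, abs_of_nonneg]) ht

lemma expCalculus_posPart_eq (hR : IsResolventI A R) {t : ℝ} (ht : 0 < t) :
    expCalculus R (fun l => max l 0) t =
      expCalculus R (fun l => l) t + expCalculus R (fun l => max (-l) 0) t :=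
  hR.expCalculus_add IsWeight.id IsWeight.negPart (fun l => by
    rcases le_total l 0 with h | h <;> simp [h]) ht

lemma expCalculus_id_pos (hR : IsResolventI A R) {v : H} (hv : posProj R v = v) {t : ℝ}
    (ht : 0 < t) : expCalculus R (fun l => l) t v = expCalculus R (fun l => |l|) t v := by
  have h := hR.expCalculus_negPart_apply hv ht
  rw [hR.expCalculus_abs_eq ht, hR.expCalculus_posPart_eq ht, add_apply, add_apply, h]
  simp

lemma expCalculus_id_neg (hR : IsResolventI A R) {v : H} (hv : posProj R v = 0) {t : ℝ}
    (ht : 0 < t) : expCalculus R (fun l => l) t v = -expCalculus R (fun l => |l|) t v := by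
  have h := hR.expCalculus_posPart_apply hv ht
  have h' := congrArg (fun T : H →L[ℂ] H => T v) (hR.expCalculus_posPart_eq ht)
  simp only [add_apply, h] at h'
  rw [hR.expCalculus_abs_eq ht, add_apply, h, zero_add, eq_neg_iff_add_eq_zero]
  exact h'.symm

lemma posProj_idem (v : H) : posProj R (posProj R v) = posProj R v :=
  Submodule.starProjection_eq_self_iff.mpr (Submodule.starProjection_apply_mem _ v)

lemma posProj_expCalculus (q : ℝ → ℝ) (t : ℝ) (v : H) :
    posProj R (expCalculus R q t v) = expCalculus R q t (posProj R v) :=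
  commute_posProj (calculus_commute_calculus _ _ _)
    (by rw [star_calculus]; exact calculus_commute_calculus _ _ _) v

lemma posProj_absSemigroup (t : ℝ) (v : H) :
    posProj R (absSemigroup R t v) = absSemigroup R t (posProj R v) := by
  rcases le_or_gt t 0 with ht | ht
  · rw [absSemigroup_of_nonpos ht]; rfl
  · rw [absSemigroup_of_pos ht]; exact posProj_expCalculus _ t v

lemma posProj_resolvent (hR : IsResolventI A R) (v : H) : posProj R (R v) = R (posProj R v) :=
  commute_posProj (commute_calculus (Commute.refl R) hR.normal.star_comm_self _)
    (commute_calculus hR.normal.star_comm_self.symm (Commute.refl _) _) v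

lemma mem_graph_posProj (hR : IsResolventI A R) {v w : H} (h : (v, w) ∈ A.graph) :
    (posProj R v, posProj R w) ∈ A.graph := by
  rw [hR.mem_graph_iff_apply] at h ⊢
  rw [← hR.posProj_resolvent, ← hR.posProj_resolvent, h, map_sub, map_smul]

/-- The graph of `A` can be tested after regularization by the semigroup. -/
lemma mem_graph_of_semigroup (hA : IsSelfAdjoint A) (hR : IsResolventI A R) {v w : H}
    (h : ∀ ε, 0 < ε → expCalculus R (fun l => l) ε v = absSemigroup R ε w) :
    (v, w) ∈ A.graph := by
  have hU := hR.isAnalyticSemigroup hA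
  have hlim : ∀ v, Tendsto (fun ε => absSemigroup R ε v) (𝓝[>] 0) (𝓝 v) := fun v => by
    have := (hU.continuous v).tendsto 0
    rw [hU.zero] at this
    exact this.mono_left nhdsWithin_le_nhds
  refine (IsSelfAdjoint.isClosed hA).mem_of_tendsto ((hlim v).prodMk_nhds (hlim w)) ?_
  filter_upwards [self_mem_nhdsWithin] with ε hε
  rw [← h ε hε]
  exact hR.mem_graph_semigroup hε v

lemma isSplitting (hA : IsSelfAdjoint A) (hR : IsResolventI A R)
    (hker : ∀ x, (x, 0) ∈ A.graph → x = 0) :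
    IsSplitting A (absSemigroup R) (expCalculus R fun l => |l|) (posProj R) where
  idem := posProj_idem
  commute_semigroup := posProj_absSemigroup
  graph_pos v w hv h := hR.mem_graph_of_semigroup hA fun ε hε => by
    rw [hR.expCalculus_id_pos hv hε, h ε hε]
  graph_neg v w hv h := hR.mem_graph_of_semigroup hA fun ε hε => by
    rw [hR.expCalculus_id_neg hv hε, h ε hε, map_neg]
  deriv_pos v w h ε hε := by
    rw [hR.semigroup_apply_of_mem_graph (hR.mem_graph_posProj h) hε,
      hR.expCalculus_id_pos (posProj_idem v) hε]
  deriv_neg v w h ε hε := by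
    have hsub := A.graph.sub_mem h (hR.mem_graph_posProj h)
    rw [hR.semigroup_apply_of_mem_graph hsub hε, hR.expCalculus_id_neg _ hε, neg_neg]
    rw [map_sub, posProj_idem, sub_self]
  injective v hv := hR.eq_zero_of_expCalculus_abs hA hker one_pos (hv 1 one_pos)

end IsResolventI

namespace IsResolventI

variable {A : H →ₗ.[ℂ] H} {R : H →L[ℂ] H}

lemma denseRange_expCalculus_sqrt (hA : IsSelfAdjoint A) (hR : IsResolventI A R)
    (hker : ∀ x, (x, 0) ∈ A.graph → x = 0) :
    DenseRange (expCalculus R (fun l => √|l|) 1) := by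
  have hY : expCalculus R (fun l => |l|) (1 + 1) =
      expCalculus R (fun l => √|l|) 1 * expCalculus R (fun l => √|l|) 1 :=
    hR.expCalculus_mul IsWeight.sqrt IsWeight.sqrt
      (fun l => (Real.mul_self_sqrt (abs_nonneg l)).symm) one_pos one_pos
  have h : (expCalculus R (fun l => √|l|) 1).range.topologicalClosure = ⊤ := by
    rw [Submodule.topologicalClosure_eq_top_iff, ContinuousLinearMap.orthogonal_range,
      ← ContinuousLinearMap.star_eq_adjoint, star_expCalculus, Submodule.eq_bot_iff]
    intro v hv
    refine hR.eq_zero_of_expCalculus_abs hA hker (t := 1 + 1) (by norm_num) ?_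
    have hv' : expCalculus R (fun l => √|l|) 1 v = 0 := hv
    rw [hY, mul_apply_eq_comp, hv', map_zero]
  exact Submodule.dense_iff_topologicalClosure_eq_top.mpr h

/-- A bounded self-adjoint operator `M` commuting with `A` such that `M A` is nonnegative
also makes `M sgn(A)` nonnegative. -/
lemma re_inner_sign_nonneg (hA : IsSelfAdjoint A) (hR : IsResolventI A R)
    (hker : ∀ x, (x, 0) ∈ A.graph → x = 0) {M : H →L[ℂ] H} (hM : star M = M)
    (hMA : ∀ x y, (x, y) ∈ A.graph → (M x, M y) ∈ A.graph)
    (hpos : ∀ x y, (x, y) ∈ A.graph → 0 ≤ (⟪M y, x⟫_ℂ).re) (k : H) :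
    0 ≤ (⟪M ((2 : ℂ) • posProj R k - k), k⟫_ℂ).re := by
  have hcR : Commute R M := by
    ext h
    have h1 := hR.apply_add _ _ (hMA _ _ (hR.mem_graph h))
    rw [map_sub, map_smul, sub_add_cancel] at h1
    exact h1
  have hcR' : Commute (star R) M := by
    have := hcR.star_star
    rwa [hM] at this
  have hcalc : ∀ q t v, M (expCalculus R q t v) = expCalculus R q t (M v) := fun q t v => by
    have h : Commute (expCalculus R q t) M := commute_calculus hcR hcR' _
    exact (congrArg (fun T : H →L[ℂ] H => T v) h.eq).symm
  have hsymm : ∀ q t v w, ⟪expCalculus R q t v, w⟫_ℂ = ⟪v, expCalculus R q t w⟫_ℂ :=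
    fun q t v w => by
      rw [← ContinuousLinearMap.adjoint_inner_right, ← ContinuousLinearMap.star_eq_adjoint,
        star_expCalculus]
  have hclosed : IsClosed {k : H | 0 ≤ (⟪M ((2 : ℂ) • posProj R k - k), k⟫_ℂ).re} :=
    isClosed_le continuous_const (Complex.continuous_re.comp
      (Continuous.inner (by fun_prop) (by fun_prop)))
  refine hclosed.closure_subset_iff.mpr ?_ (hR.denseRange_expCalculus_sqrt hA hker k)
  rintro _ ⟨h, rfl⟩
  have h2 : (0 : ℝ) < 1 + 1 := by norm_num
  have hY : expCalculus R (fun l => |l|) (1 + 1) =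
      expCalculus R (fun l => √|l|) 1 * expCalculus R (fun l => √|l|) 1 :=
    hR.expCalculus_mul IsWeight.sqrt IsWeight.sqrt
      (fun l => (Real.mul_self_sqrt (abs_nonneg l)).symm) one_pos one_pos
  have hU : expCalculus R (fun l => l) (1 + 1) =
      expCalculus R (fun _ => 1) 1 * expCalculus R (fun l => l) 1 :=
    hR.expCalculus_mul IsWeight.one IsWeight.id (fun l => (one_mul l).symm) one_pos one_pos
  have hsign : expCalculus R (fun l => |l|) (1 + 1) ((2 : ℂ) • posProj R h - h) =
      expCalculus R (fun l => l) (1 + 1) h := by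
    have e1 := hR.expCalculus_id_pos (posProj_idem (R := R) h) h2
    have e2 := hR.expCalculus_id_neg (v := h - posProj R h) (by
      rw [map_sub, posProj_idem, sub_self]) h2
    rw [map_sub, map_sub, e1] at e2
    rw [map_sub, map_smul, eq_add_of_sub_eq e2]
    module
  have e : ⟪M ((2 : ℂ) • posProj R (expCalculus R (fun l => √|l|) 1 h) -
      expCalculus R (fun l => √|l|) 1 h), expCalculus R (fun l => √|l|) 1 h⟫_ℂ =
      ⟪M (expCalculus R (fun l => l) 1 h), absSemigroup R 1 h⟫_ℂ := by
    rw [posProj_expCalculus, ← map_smul, ← map_sub, ← hsymm, ← hcalc,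
      ← mul_apply_eq_comp (expCalculus R _ 1), ← hY, hsign, hU, mul_apply_eq_comp, hcalc, hsymm, absSemigroup_of_pos one_pos]
  rw [Set.mem_ofPred_eq, e]
  exact hpos _ _ (hR.mem_graph_semigroup one_pos h)

end IsResolventI

lemma bijective_one_add_of_re_inner_nonneg {T : H →L[ℂ] H} (hT : ∀ h, 0 ≤ (⟪T h, h⟫_ℂ).re) :
    Function.Bijective fun h => h + T h := by
  have h : IsUnit (1 + T) := by
    refine ContinuousLinearMap.isUnit_of_forall_le_norm_inner_map _ (c := 1) one_pos fun x => ?_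
    refine le_trans ?_ (Complex.re_le_norm _)
    rw [add_apply, inner_add_left, Complex.add_re, one_apply_eq_self]
    have : (⟪x, x⟫_ℂ).re = ‖x‖ ^ 2 := inner_self_eq_norm_sq (𝕜 := ℂ) x
    simp only [NNReal.coe_one, mul_one]
    linarith [hT x]
  exact ContinuousLinearMap.isUnit_iff_bijective.mp h

/-- The graph of `A` is the image of that of `J L` under the similarity `S`. -/
lemma SimilarToSelfAdjoint.exists_graph {J : H →L[ℂ] H} (hJ : IsSignatureOperator J)
    {L : H →ₗ.[ℂ] H} (hsim : SimilarToSelfAdjoint (pmapComp J L)) :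
    ∃ (S : H ≃L[ℂ] H) (A : H →ₗ.[ℂ] H), IsSelfAdjoint A ∧
      ∀ x y, (S x, S y) ∈ A.graph ↔ (x, J y) ∈ L.graph := by
  obtain ⟨S, A, hA, hdom, hS⟩ := hsim
  have hJJ : ∀ x, J (J x) = x := fun x => congrArg (fun T : H →L[ℂ] H => T x) hJ.2
  refine ⟨S, A, hA, fun x y => ⟨fun h => ?_, fun h => ?_⟩⟩
  · obtain ⟨u, hu, hu'⟩ := (LinearPMap.mem_graph_iff A).mp h
    simp only at hu hu'
    have hmem : S x ∈ (A.domain : Set H) := hu ▸ u.2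
    have hmem' := hmem
    rw [hdom] at hmem'
    obtain ⟨x', hx', hxx'⟩ := hmem'
    obtain rfl : x' = x := S.injective hxx'
    have e := hS ⟨x', hx'⟩ hmem
    have e' : A ⟨S x', hmem⟩ = S y := by rw [← hu']; congr 1; exact Subtype.ext hu.symm
    rw [e] at e'
    have e'' : J (L ⟨x', hx'⟩) = y := S.injective e'
    rw [← e'', hJJ]
    exact L.mem_graph ⟨x', hx'⟩
  · obtain ⟨u, rfl, hu'⟩ := (LinearPMap.mem_graph_iff L).mp h
    have hmem : S u ∈ (A.domain : Set H) := by rw [hdom]; exact ⟨u, u.2, rfl⟩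
    have e : A ⟨S u, hmem⟩ = S (J (L u)) := hS u hmem
    rw [hu', hJJ] at e
    rw [← e]
    exact A.mem_graph ⟨S u, hmem⟩

/-- The semigroup, the spectral splitting, and the invertibility of `P₊Q₊ + P₋Q₋`. -/
lemma SimilarToSelfAdjoint.exists_splitting {J : H →L[ℂ] H} (hJ : IsSignatureOperator J)
    {L : H →ₗ.[ℂ] H} (hLsa : IsSelfAdjoint L) (hLpos : IsPositivePMap L)
    (hsim : SimilarToSelfAdjoint (pmapComp J L)) :
    ∃ (S : H ≃L[ℂ] H) (A : H →ₗ.[ℂ] H) (U D : ℝ → H →L[ℂ] H) (E : H →L[ℂ] H),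
      (∀ x y, (S x, S y) ∈ A.graph ↔ (x, J y) ∈ L.graph) ∧
      IsAnalyticSemigroup U D ∧ IsSplitting A U D E ∧
      Function.Bijective fun h => h + J (S.symm ((2 : ℂ) • E (S h) - S h)) := by
  obtain ⟨S, A, hA, hS⟩ := hsim.exists_graph hJ
  have hS' : ∀ x y, (x, y) ∈ A.graph → (S.symm x, J (S.symm y)) ∈ L.graph := fun x y h =>
    (hS _ _).mp (by simpa using h)
  have hLnonneg : ∀ x y, (x, y) ∈ L.graph → 0 ≤ (⟪y, x⟫_ℂ).re ∧ (y = 0 → x = 0) := by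
    intro x y h
    obtain ⟨u, rfl, rfl⟩ := (LinearPMap.mem_graph_iff L).mp h
    by_cases hu : (u : H) = 0
    · simp [hu]
    · have := hLpos u hu
      refine ⟨(Complex.le_def.mp this.le).1, fun h0 => ?_⟩
      simp [h0] at this
  have hker : ∀ x, (x, 0) ∈ A.graph → x = 0 := fun x h => by
    simpa using (hLnonneg _ _ (hS' _ _ h)).2 (by simp)
  obtain ⟨R, h1, h2, h3, h4, h5⟩ := hA.exists_resolvent_I
  have hR : IsResolventI A R := ⟨h1, h2, h3, h4, h5⟩
  refine ⟨S, A, _, _, _, hS, hR.isAnalyticSemigroup hA, hR.isSplitting hA hker, ?_⟩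
  let S' : H →L[ℂ] H := S.symm
  have hJsymm : ∀ x y, ⟪J x, y⟫_ℂ = ⟪x, J y⟫_ℂ := fun x y => by
    rw [← ContinuousLinearMap.adjoint_inner_right, ← ContinuousLinearMap.star_eq_adjoint,
      hJ.1.star_eq]
  have hJJ : ∀ x, J (J x) = x := fun x => congrArg (fun T : H →L[ℂ] H => T x) hJ.2
  have hM : ∀ x y, ⟪(star S' * J * S') x, y⟫_ℂ = ⟪J (S.symm x), S.symm y⟫_ℂ := fun x y => by
    rw [mul_apply_eq_comp, mul_apply_eq_comp, ContinuousLinearMap.star_eq_adjoint,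
      ContinuousLinearMap.adjoint_inner_left]
    rfl
  have hT : ∀ h, 0 ≤ (⟪(J * S' * ((2 : ℂ) • IsResolventI.posProj R - 1) * (S : H →L[ℂ] H)) h,
      h⟫_ℂ).re := fun h => by
    have := hR.re_inner_sign_nonneg hA hker (M := star S' * J * S')
      (by simp [mul_assoc, hJ.1.star_eq]) (fun x y hxy => ?_) (fun x y hxy => ?_) (S h)
    · rw [hM] at this
      simpa [S'] using this
    · refine hA.mem_graph_of_forall_inner fun x' y' hxy' => ?_
      rw [hM, hM, hLsa.inner_graph (hS' _ _ hxy) (hS' _ _ hxy'), hJsymm]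
    · rw [hM]
      exact (hLnonneg _ _ (hS' _ _ hxy)).1
  exact bijective_one_add_of_re_inner_nonneg hT

/-- Convolution of a semigroup with an inhomogeneity. -/
def duhamel (U : ℝ → H →L[ℂ] H) (g : ℝ → H) (t : ℝ) : H := ∫ s in (0 : ℝ)..t, U (t - s) (g s)

/-- The derivative of `duhamel U g` for Hölder continuous `g`. -/
def duhamelDeriv (U D : ℝ → H →L[ℂ] H) (g : ℝ → H) (t : ℝ) : H :=
  U t (g t) - ∫ s in (0 : ℝ)..t, D s (g (t - s) - g t)

namespace IsAnalyticSemigroup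

variable {U D : ℝ → H →L[ℂ] H} {g : ℝ → H}

lemma continuous_uncurry (hU : IsAnalyticSemigroup U D) :
    Continuous fun p : ℝ × H => U p.1 p.2 := by
  rw [continuous_iff_continuousAt]
  rintro ⟨t, h⟩
  have h1 : Tendsto (fun p : ℝ × H => U p.1 h) (𝓝 (t, h)) (𝓝 (U t h)) :=
    ((hU.continuous h).comp continuous_fst).tendsto _
  have h2 : Tendsto (fun p : ℝ × H => U p.1 (p.2 - h)) (𝓝 (t, h)) (𝓝 0) := by
    refine squeeze_zero_norm (a := fun p : ℝ × H => ‖p.2 - h‖) (fun p => ?_) ?_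
    · simpa using (U p.1).le_of_opNorm_le (hU.norm_le p.1) (p.2 - h)
    · have : Continuous fun p : ℝ × H => ‖p.2 - h‖ := by fun_prop
      simpa using this.tendsto (t, h)
  have := h1.add h2
  simp only [add_zero, ← map_add, add_sub_cancel] at this
  exact this

lemma norm_apply_le (hU : IsAnalyticSemigroup U D) (t : ℝ) (h : H) : ‖U t h‖ ≤ ‖h‖ := by
  simpa using (U t).le_of_opNorm_le (hU.norm_le t) h

lemma norm_deriv_apply_le (hU : IsAnalyticSemigroup U D) {t : ℝ} (ht : 0 < t) (h : H) :
    ‖D t h‖ ≤ t⁻¹ * ‖h‖ := (D t).le_of_opNorm_le (hU.norm_deriv_le t ht) h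

lemma continuousAt_deriv_apply (hU : IsAnalyticSemigroup U D) {X : Type*} [TopologicalSpace X]
    {c : X → ℝ} {η : X → H} {x : X} (hc : ContinuousAt c x) (hη : ContinuousAt η x)
    (hpos : 0 < c x) : ContinuousAt (fun x => D (c x) (η x)) x := by
  have h1 : ContinuousAt (fun y => D (c x / 2) (U (c y - c x / 2) (η y))) x := by
    refine (D (c x / 2)).continuous.continuousAt.comp ?_
    exact hU.continuous_uncurry.continuousAt.comp ((hc.sub continuousAt_const).prodMk hη)
  refine h1.congr ?_
  filter_upwards [hc.eventually (lt_mem_nhds (half_lt_self hpos))] with y hy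
  rw [← mul_apply_eq_comp, ← hU.deriv_add _ _ (half_pos hpos) (sub_nonneg.mpr hy.le),
    add_sub_cancel]

lemma continuous_apply (hU : IsAnalyticSemigroup U D) {X : Type*} [TopologicalSpace X]
    {c : X → ℝ} {η : X → H} (hc : Continuous c) (hη : Continuous η) :
    Continuous fun x => U (c x) (η x) := hU.continuous_uncurry.comp (hc.prodMk hη)

lemma deriv_add_apply (hU : IsAnalyticSemigroup U D) {s t : ℝ} (hs : 0 < s) (ht : 0 ≤ t) (h : H) :
    D (s + t) h = D s (U t h) := by rw [hU.deriv_add s t hs ht, mul_apply_eq_comp]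

lemma deriv_add_apply' (hU : IsAnalyticSemigroup U D) {s t : ℝ} (hs : 0 < s) (ht : 0 ≤ t) (h : H) :
    D (s + t) h = U t (D s h) := by
  rw [hU.deriv_add s t hs ht, ← (hU.commute t s).eq, mul_apply_eq_comp]

lemma semigroup_add_apply (hU : IsAnalyticSemigroup U D) {s t : ℝ} (hs : 0 ≤ s) (ht : 0 ≤ t)
    (h : H) :
    U (s + t) h = U s (U t h) := by rw [hU.add s t hs ht, mul_apply_eq_comp]

lemma tendsto_zero (hU : IsAnalyticSemigroup U D) (h : H) :
    Tendsto (fun ε => U ε h) (𝓝[>] 0) (𝓝 h) := by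
  have := (hU.continuous h).tendsto 0
  rw [hU.zero] at this
  exact this.mono_left nhdsWithin_le_nhds

lemma ext_apply (hU : IsAnalyticSemigroup U D) {v w : H} (h : ∀ ε, 0 < ε → U ε v = U ε w) :
    v = w := by
  refine tendsto_nhds_unique (hU.tendsto_zero v) ((hU.tendsto_zero w).congr' ?_)
  filter_upwards [self_mem_nhdsWithin] with ε hε
  exact (h ε hε).symm

lemma hasDerivAt_apply (hU : IsAnalyticSemigroup U D) {c : ℝ → ℝ} {η : ℝ → H} {c' t : ℝ} {η' : H}
    (hc : HasDerivAt c c' t) (hpos : 0 < c t) (hη : HasDerivAt η η' t) :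
    HasDerivAt (fun t => U (c t) (η t)) (-(c' • D (c t) (η t)) + U (c t) η') t := by
  have h1 : HasDerivAt (fun t => U (c t)) (c' • -D (c t)) t :=
    (hU.hasDerivAt _ hpos).scomp t hc
  have h2 := (ContinuousLinearMap.restrictScalarsL ℂ H H ℝ ℝ).hasFDerivAt.comp_hasDerivAt t h1
  refine HasDerivAt.congr_deriv (f := fun t => U (c t) (η t)) (h2.clm_apply hη) ?_
  change (c' • -D (c t)) (η t) + U (c t) η' = _
  simp

lemma integral_deriv_apply (hU : IsAnalyticSemigroup U D) {ε t : ℝ} (hε : 0 < ε) (ht : 0 ≤ t)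
    (h : H) : ∫ s in (0 : ℝ)..t, D ε (U s h) = U ε h - U (ε + t) h := by
  have hd : ∀ s ∈ Set.uIcc 0 t, HasDerivAt (fun s => -U (ε + s) h) (D ε (U s h)) s := by
    intro s hs
    rw [Set.uIcc_of_le ht] at hs
    have hpos : 0 < ε + s := by linarith [hs.1]
    have := (hU.hasDerivAt_apply ((hasDerivAt_id s).const_add ε) hpos (hasDerivAt_const s h)).neg
    refine HasDerivAt.congr_deriv (f := fun s => -U (ε + s) h) this ?_
    change -(-((1 : ℝ) • D (ε + s) h) + U (ε + s) 0) = _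
    rw [hU.deriv_add_apply hε hs.1]
    simp
  have hc : Continuous fun s => D ε (U s h) := (D ε).continuous.comp (hU.continuous h)
  rw [intervalIntegral.integral_eq_sub_of_hasDerivAt hd (hc.intervalIntegrable _ _)]
  simp only [add_zero]
  abel

lemma continuous_duhamel (hU : IsAnalyticSemigroup U D) (hg : Continuous g) :
    Continuous (duhamel U g) := by
  refine intervalIntegral.continuous_parametric_intervalIntegral_of_continuous
    (f := fun t s => U (t - s) (g s)) ?_ continuous_id
  exact hU.continuous_apply (by fun_prop) (by fun_prop)

lemma semigroup_duhamel (hU : IsAnalyticSemigroup U D) (hg : Continuous g) {a t : ℝ} (ha : 0 ≤ a)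
    (ht : 0 ≤ t) : U a (duhamel U g t) = ∫ s in (0 : ℝ)..t, U (a + (t - s)) (g s) := by
  have hc : Continuous fun s => U (t - s) (g s) := hU.continuous_apply (by fun_prop) hg
  rw [duhamel, ← ContinuousLinearMap.intervalIntegral_comp_comm _ (hc.intervalIntegrable _ _)]
  refine intervalIntegral.integral_congr fun s hs => ?_
  rw [Set.uIcc_of_le ht] at hs
  rw [hU.semigroup_add_apply ha (by linarith [hs.2])]

lemma hasDerivAt_semigroup_duhamel (hU : IsAnalyticSemigroup U D) (hg : Continuous g) {ε t : ℝ}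
    (hε : 0 < ε) (ht : 0 < t) :
    HasDerivAt (fun t => U ε (duhamel U g t)) (U ε (g t) - D ε (duhamel U g t)) t := by
  set δ := ε / 2 with hδ
  have hδ0 : 0 < δ := half_pos hε
  have hεδ : ε = δ + δ := (add_halves ε).symm
  have hc : Continuous fun s => U (δ + (t - s)) (g s) := hU.continuous_apply (by fun_prop) hg
  have hprim : HasDerivAt (fun u => ∫ s in (0 : ℝ)..u, U (δ + (t - s)) (g s))
      (U (δ + (t - t)) (g t)) t :=
    intervalIntegral.integral_hasDerivAt_right (hc.intervalIntegrable _ _)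
      (hc.stronglyMeasurableAtFilter _ _) hc.continuousAt
  have hshift : HasDerivAt (fun u : ℝ => δ + (u - t)) 1 t :=
    ((hasDerivAt_id t).sub_const t).const_add δ
  have h := hU.hasDerivAt_apply hshift (by simpa using hδ0) hprim
  simp only [sub_self, add_zero, one_smul] at h
  rw [← hU.semigroup_duhamel hg hδ0.le ht.le, ← hU.deriv_add_apply hδ0 hδ0.le,
    ← hU.semigroup_add_apply hδ0.le hδ0.le, ← hεδ, neg_add_eq_sub] at h
  refine h.congr_of_eventuallyEq ?_
  filter_upwards [lt_mem_nhds ht, lt_mem_nhds (sub_lt_self t hδ0),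
    gt_mem_nhds (lt_add_of_pos_right t hδ0)]
    with u hu hu1 hu2
  rw [hU.semigroup_duhamel hg hε.le hu.le,
    ← ContinuousLinearMap.intervalIntegral_comp_comm _ (hc.intervalIntegrable _ _)]
  refine intervalIntegral.integral_congr fun s hs => ?_
  rw [Set.uIcc_of_le hu.le] at hs
  rw [← hU.semigroup_add_apply (by linarith) (by linarith [hs.2])]
  congr 2
  rw [hεδ]
  ring

section Holder

variable {K k : ℝ}

lemma continuous_of_holder (hk : 0 < k) (hg : ∀ x y, ‖g x - g y‖ ≤ K * |x - y| ^ k) :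
    Continuous g := by
  rw [continuous_iff_continuousAt]
  intro x
  rw [ContinuousAt, tendsto_iff_norm_sub_tendsto_zero]
  refine squeeze_zero (fun _ => norm_nonneg _) (fun y => hg y x) ?_
  have : Continuous fun y : ℝ => K * |y - x| ^ k :=
    continuous_const.mul ((by fun_prop : Continuous fun y : ℝ => |y - x|).rpow_const
      fun _ => Or.inr hk.le)
  simpa [Real.zero_rpow hk.ne'] using this.tendsto x

lemma norm_deriv_apply_sub_le (hU : IsAnalyticSemigroup U D)
    (hg : ∀ x y, ‖g x - g y‖ ≤ K * |x - y| ^ k) {s : ℝ} (hs : 0 < s) (t : ℝ) :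
    ‖D s (g (t - s) - g t)‖ ≤ K * s ^ (k - 1) := by
  refine (hU.norm_deriv_apply_le hs _).trans ?_
  have h := hg (t - s) t
  rw [sub_sub_cancel_left, abs_neg, abs_of_pos hs] at h
  calc s⁻¹ * ‖g (t - s) - g t‖ ≤ s⁻¹ * (K * s ^ k) := by gcongr
    _ = K * s ^ (k - 1) := by rw [Real.rpow_sub_one hs.ne']; ring

lemma continuousOn_deriv_apply_sub (hU : IsAnalyticSemigroup U D) (hc : Continuous g) (t : ℝ) :
    ContinuousOn (fun s => D s (g (t - s) - g t)) (Set.Ioi 0) := fun s hs =>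
  (hU.continuousAt_deriv_apply (c := fun s => s) continuousAt_id
    (by fun_prop) hs).continuousWithinAt

lemma intervalIntegrable_deriv_apply_sub (hU : IsAnalyticSemigroup U D) (hk : 0 < k)
    (hg : ∀ x y, ‖g x - g y‖ ≤ K * |x - y| ^ k) {t : ℝ} (ht : 0 ≤ t) :
    IntervalIntegrable (fun s => D s (g (t - s) - g t)) volume 0 t := by
  have hb : IntervalIntegrable (fun s : ℝ => K * s ^ (k - 1)) volume 0 t :=
    (intervalIntegral.intervalIntegrable_rpow' (by linarith)).const_mul K
  rw [intervalIntegrable_iff_integrableOn_Ioc_of_le ht] at hb ⊢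
  refine Integrable.mono' hb ?_ ?_
  · exact ((continuousOn_deriv_apply_sub hU (continuous_of_holder hk hg) t).mono
      fun s hs => hs.1).aestronglyMeasurable measurableSet_Ioc
  · filter_upwards [ae_restrict_mem measurableSet_Ioc] with s hs
    exact hU.norm_deriv_apply_sub_le hg hs.1 t

lemma continuousAt_duhamelDeriv (hU : IsAnalyticSemigroup U D) (hk : 0 < k)
    (hg : ∀ x y, ‖g x - g y‖ ≤ K * |x - y| ^ k) {t : ℝ} (ht : 0 < t) :
    ContinuousAt (duhamelDeriv U D g) t := by
  have hc := continuous_of_holder hk hg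
  have hK : 0 ≤ K := by simpa using (norm_nonneg _).trans (hg 1 0)
  refine (hU.continuous_apply continuous_id hc).continuousAt.sub ?_
  let F : ℝ → ℝ → H := fun t => (Set.Ioi 0).indicator fun s => D s (g (t - s) - g t)
  have hF : ContinuousAt (fun p : ℝ × ℝ => ∫ s in (0 : ℝ)..p.2, F p.1 s) (t, t) := by
    refine intervalIntegral.continuousAt_parametric_primitive_of_dominated
      (fun s => K * |s ^ (k - 1)|) (-1) (t + 1) (fun x => ?_) (Eventually.of_forall fun x => ?_)
      ?_ (Eventually.of_forall fun s => ?_) ⟨by norm_num, by linarith⟩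
      ⟨by linarith, by linarith⟩ (by simp)
    · refine AEStronglyMeasurable.mono_measure (μ := volume) ?_ Measure.restrict_le_self
      rw [aestronglyMeasurable_indicator_iff measurableSet_Ioi]
      exact (continuousOn_deriv_apply_sub hU hc x).aestronglyMeasurable measurableSet_Ioi
    · refine Eventually.of_forall fun s => ?_
      by_cases hs : 0 < s
      · simp only [F, Set.indicator_of_mem (Set.mem_Ioi.mpr hs)]
        exact (hU.norm_deriv_apply_sub_le hg hs x).trans (by gcongr; exact le_abs_self _)
      · simp only [F, Set.indicator_of_notMem (show s ∉ Set.Ioi 0 by simpa using hs), norm_zero]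
        positivity
    · exact (intervalIntegral.intervalIntegrable_rpow' (by linarith)).norm.const_mul K
    · by_cases hs : 0 < s
      · simp only [F, Set.indicator_of_mem (Set.mem_Ioi.mpr hs)]
        fun_prop
      · simp only [F, Set.indicator_of_notMem (show s ∉ Set.Ioi 0 by simpa using hs)]
        exact continuousAt_const
  have h2 : ContinuousAt (fun u => ∫ s in (0 : ℝ)..u, F u s) t :=
    ContinuousAt.comp (f := fun u : ℝ => (u, u)) hF (by fun_prop)
  refine h2.congr ?_
  filter_upwards [lt_mem_nhds ht] with u hu
  refine intervalIntegral.integral_congr_ae (Eventually.of_forall fun s hs => ?_)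
  rw [Set.uIoc_of_le hu.le] at hs
  exact Set.indicator_of_mem (Set.mem_Ioi.mpr hs.1) _

lemma deriv_duhamel (hU : IsAnalyticSemigroup U D) (hk : 0 < k)
    (hg : ∀ x y, ‖g x - g y‖ ≤ K * |x - y| ^ k) {ε t : ℝ} (hε : 0 < ε) (ht : 0 ≤ t) :
    D ε (duhamel U g t) = U ε (g t - duhamelDeriv U D g t) := by
  have hc := continuous_of_holder hk hg
  have h1 : Continuous fun s => U s (g (t - s)) := hU.continuous_apply continuous_id (by fun_prop)
  have h2 : Continuous fun s => U s (g t) := hU.continuous (g t)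
  have h1' : Continuous fun s => D ε (U s (g (t - s))) := (D ε).continuous.comp h1
  have h2' : Continuous fun s => D ε (U s (g t)) := (D ε).continuous.comp h2
  have hv : duhamel U g t = ∫ s in (0 : ℝ)..t, U s (g (t - s)) := by
    have := intervalIntegral.integral_comp_sub_left (fun s => U s (g (t - s))) t (a := 0) (b := t)
    simpa [duhamel] using this
  have e : ∫ s in (0 : ℝ)..t, D ε (U s (g (t - s) - g t)) =
      U ε (∫ s in (0 : ℝ)..t, D s (g (t - s) - g t)) := by
    rw [← ContinuousLinearMap.intervalIntegral_comp_comm _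
      (hU.intervalIntegrable_deriv_apply_sub hk hg ht)]
    refine intervalIntegral.integral_congr_ae (Eventually.of_forall fun s hs => ?_)
    rw [Set.uIoc_of_le ht] at hs
    rw [← hU.deriv_add_apply hε hs.1.le, add_comm, hU.deriv_add_apply' hs.1 hε.le]
  have e' : ∫ s in (0 : ℝ)..t, D ε (U s (g (t - s) - g t)) =
      D ε (duhamel U g t) - (U ε (g t) - U (ε + t) (g t)) := by
    rw [← hU.integral_deriv_apply hε ht, hv,
      ← ContinuousLinearMap.intervalIntegral_comp_comm _ (h1.intervalIntegrable _ _),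
      ← intervalIntegral.integral_sub (h1'.intervalIntegrable _ _)
        (h2'.intervalIntegrable _ _)]
    simp only [map_sub]
  rw [e', hU.semigroup_add_apply hε.le ht] at e
  rw [duhamelDeriv, map_sub, map_sub, ← e]
  abel

lemma hasDerivAt_duhamel (hU : IsAnalyticSemigroup U D) (hk : 0 < k)
    (hg : ∀ x y, ‖g x - g y‖ ≤ K * |x - y| ^ k) {t : ℝ} (ht : 0 < t) :
    HasDerivAt (duhamel U g) (duhamelDeriv U D g t) t := by
  have hc := continuous_of_holder hk hg
  have hcont : ContinuousOn (duhamelDeriv U D g) (Set.Ioi 0) := fun s hs =>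
    (hU.continuousAt_duhamelDeriv hk hg hs).continuousWithinAt
  have hpos : 0 < t / 2 := half_pos ht
  have hsub : ∀ u, 0 < u → Set.uIcc (t / 2) u ⊆ Set.Ioi 0 := fun u hu s hs =>
    lt_of_lt_of_le (lt_min hpos hu) hs.1
  have hint : ∀ u, 0 < u → IntervalIntegrable (duhamelDeriv U D g) volume (t / 2) u := fun u hu =>
    (hcont.mono (hsub u hu)).intervalIntegrable
  have hftc : ∀ u, 0 < u → duhamel U g u =
      duhamel U g (t / 2) + ∫ s in (t / 2)..u, duhamelDeriv U D g s := fun u hu => by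
    refine hU.ext_apply fun ε hε => ?_
    rw [map_add, ← ContinuousLinearMap.intervalIntegral_comp_comm _ (hint u hu)]
    rw [intervalIntegral.integral_eq_sub_of_hasDerivAt
      (f := fun s => U ε (duhamel U g s)) (f' := fun s => U ε (duhamelDeriv U D g s))
      (fun s hs => ?_)
      (((U ε).continuous.comp_continuousOn (hcont.mono (hsub u hu))).intervalIntegrable)]
    · abel
    · have hs0 : 0 < s := hsub u hu hs
      have := hU.hasDerivAt_semigroup_duhamel hc hε hs0
      rwa [hU.deriv_duhamel hk hg hε hs0.le, ← map_sub, sub_sub_cancel] at this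
  have h := (intervalIntegral.integral_hasDerivAt_right (hint t ht)
    (hcont.stronglyMeasurableAtFilter isOpen_Ioi t ht)
    (hcont.continuousAt (Ioi_mem_nhds ht))).const_add (duhamel U g (t / 2))
  refine h.congr_of_eventuallyEq ?_
  filter_upwards [lt_mem_nhds ht] with u hu
  exact hftc u hu

end Holder

/-- Regularity of `duhamel` for an inhomogeneity which is Hölder continuous on `[0, T]`. -/
lemma exists_duhamelDeriv (hU : IsAnalyticSemigroup U D) {K k T : ℝ} (hK : 0 ≤ K) (hk : 0 < k)
    (hg : ∀ x ∈ Set.Icc 0 T, ∀ y ∈ Set.Icc 0 T, ‖g x - g y‖ ≤ K * |x - y| ^ k) :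
    ∃ z : ℝ → H, ∀ t ∈ Set.Ioo 0 T, ContinuousAt z t ∧ HasDerivAt (duhamel U g) (z t) t ∧
      ∀ ε, 0 < ε → D ε (duhamel U g t) = U ε (g t - z t) := by
  let p : ℝ → ℝ := fun s => max 0 (min s T)
  refine ⟨duhamelDeriv U D (g ∘ p), fun t ht => ?_⟩
  have hT : 0 < T := ht.1.trans ht.2
  have hp : ∀ s, p s ∈ Set.Icc 0 T := fun s => ⟨le_max_left _ _, max_le hT.le (min_le_right _ _)⟩
  have hp' : ∀ s ∈ Set.Icc 0 T, p s = s := fun s hs => by simp [p, hs.1, hs.2]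
  have hpl : ∀ x y, |p x - p y| ≤ |x - y| := fun x y => by
    refine (abs_max_sub_max_le_max 0 (min x T) 0 (min y T)).trans ?_
    rw [sub_self, abs_zero, max_eq_right (abs_nonneg _)]
    refine (abs_min_sub_min_le_max x T y T).trans ?_
    rw [sub_self, abs_zero, max_eq_left (abs_nonneg _)]
  have hgp : ∀ x y, ‖(g ∘ p) x - (g ∘ p) y‖ ≤ K * |x - y| ^ k := fun x y =>
    (hg _ (hp x) _ (hp y)).trans (by
      have := Real.rpow_le_rpow (abs_nonneg _) (hpl x y) hk.le
      gcongr)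
  have heq : ∀ u ∈ Set.Ioo 0 T, duhamel U g u = duhamel U (g ∘ p) u := fun u hu => by
    refine intervalIntegral.integral_congr fun s hs => ?_
    rw [Set.uIcc_of_le hu.1.le] at hs
    simp only [Function.comp, hp' s ⟨hs.1, hs.2.trans hu.2.le⟩]
  refine ⟨hU.continuousAt_duhamelDeriv hk hgp ht.1, ?_, fun ε hε => ?_⟩
  · refine (hU.hasDerivAt_duhamel hk hgp ht.1).congr_of_eventuallyEq ?_
    filter_upwards [isOpen_Ioo.mem_nhds ht] with u hu
    exact heq u hu
  · rw [heq t ht, hU.deriv_duhamel hk hgp hε ht.1.le]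
    simp only [Function.comp, hp' t ⟨ht.1.le, ht.2.le⟩]

end IsAnalyticSemigroup

/-- The solution of the backward problem `b' = |A| b - g` decaying from infinity. -/
def backward (U : ℝ → H →L[ℂ] H) (g : ℝ → H) (x : ℝ) : H := ∫ y in Set.Ioi x, U (y - x) (g y)

/-- Hölder continuity on every interval `[0, X]`. -/
def IsLocallyHolder (g : ℝ → H) : Prop :=
  ∀ X, 0 < X → ∃ K k : ℝ, 0 ≤ K ∧ 0 < k ∧
    ∀ x ∈ Set.Icc 0 X, ∀ y ∈ Set.Icc 0 X, ‖g x - g y‖ ≤ K * |x - y| ^ k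

lemma IsLocallyHolder.clm_apply {g : ℝ → H} (hg : IsLocallyHolder g) (T : H →L[ℂ] H) :
    IsLocallyHolder fun x => T (g x) := fun X hX => by
  obtain ⟨K, k, hK, hk, h⟩ := hg X hX
  refine ⟨‖T‖ * K, k, by positivity, hk, fun x hx y hy => ?_⟩
  rw [← map_sub, mul_assoc]
  exact T.le_opNorm_of_le (h x hx y hy)

lemma eq_of_hasDerivAt_zero {y : ℝ → H} {a b : ℝ} (hab : a ≤ b)
    (hc : ContinuousOn y (Set.Icc a b)) (hd : ∀ x ∈ Set.Ioo a b, HasDerivAt y 0 x) : y b = y a := by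
  have := intervalIntegral.integral_eq_sub_of_hasDerivAt_of_le hab hc hd
    (_root_.intervalIntegrable_const (μ := volume))
  rw [intervalIntegral.integral_zero] at this
  exact sub_eq_zero.mp this.symm

namespace IsAnalyticSemigroup

variable {U D : ℝ → H →L[ℂ] H} {g : ℝ → H}

lemma integrableOn_apply (hU : IsAnalyticSemigroup U D) (hg : Continuous g) {a : ℝ}
    (hi : IntegrableOn g (Set.Ioi a)) (x : ℝ) :
    IntegrableOn (fun y => U (y - x) (g y)) (Set.Ioi a) := by
  have hc : Continuous fun y => U (y - x) (g y) := hU.continuous_apply (by fun_prop) hg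
  exact Integrable.mono hi hc.aestronglyMeasurable
    (Eventually.of_forall fun y => hU.norm_apply_le _ _)

lemma backward_eq (hU : IsAnalyticSemigroup U D) (hg : Continuous g) {x X : ℝ} (hx : x ≤ X)
    (hi : IntegrableOn g (Set.Ioi X)) : backward U g x =
      duhamel U (fun s => g (X - s)) (X - x) + U (X - x) (backward U g X) := by
  have hc : Continuous fun y => U (y - x) (g y) := hU.continuous_apply (by fun_prop) hg
  have h1 : backward U g x = (∫ y in x..X, U (y - x) (g y)) +
      ∫ y in Set.Ioi X, U (y - x) (g y) := by
    rw [backward, ← Set.Ioc_union_Ioi_eq_Ioi hx, setIntegral_union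
      (Set.Ioc_disjoint_Ioi le_rfl) measurableSet_Ioi
      ((hc.intervalIntegrable x X).1) (hU.integrableOn_apply hg hi x),
      intervalIntegral.integral_of_le hx]
  rw [h1]
  congr 1
  · have := intervalIntegral.integral_comp_sub_left (fun s => U (s - x) (g s)) X
      (a := 0) (b := X - x)
    rw [sub_sub_cancel, sub_zero] at this
    rw [← this, duhamel]
    simp only [sub_right_comm]
  · rw [backward, ← ContinuousLinearMap.integral_comp_comm _ (hU.integrableOn_apply hg hi X)]
    refine setIntegral_congr_fun measurableSet_Ioi fun y hy => ?_
    have hy' : X < y := hy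
    rw [← hU.semigroup_add_apply (by linarith) (by linarith)]
    congr 2
    ring

lemma norm_backward_le (hU : IsAnalyticSemigroup U D) (hi : IntegrableOn g (Set.Ioi 0)) {x : ℝ}
    (hx : 0 ≤ x) : ‖backward U g x‖ ≤ ∫ y in Set.Ioi 0, ‖g y‖ := by
  refine (norm_integral_le_of_norm_le ((hi.mono_set (Set.Ioi_subset_Ioi hx)).norm)
    (Eventually.of_forall fun y => hU.norm_apply_le _ _)).trans ?_
  exact setIntegral_mono_set hi.norm (Eventually.of_forall fun y => norm_nonneg _)
    (Set.Ioi_subset_Ioi hx).eventuallyLE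

lemma norm_duhamel_le (hU : IsAnalyticSemigroup U D) (hi : IntegrableOn g (Set.Ioi 0)) {x : ℝ}
    (hx : 0 ≤ x) : ‖duhamel U g x‖ ≤ ∫ y in Set.Ioi 0, ‖g y‖ := by
  rw [duhamel, intervalIntegral.integral_of_le hx]
  refine (norm_integral_le_of_norm_le ((hi.mono_set Set.Ioc_subset_Ioi_self).norm)
    (Eventually.of_forall fun y => hU.norm_apply_le _ _)).trans ?_
  exact setIntegral_mono_set hi.norm (Eventually.of_forall fun y => norm_nonneg _)
    Set.Ioc_subset_Ioi_self.eventuallyLE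

lemma continuous_backward (hU : IsAnalyticSemigroup U D) (hg : Continuous g)
    (hi : IntegrableOn g (Set.Ioi 0)) : Continuous (backward U g) := by
  rw [continuous_iff_continuousAt]
  intro x
  have hc : Continuous fun x' => duhamel U (fun s => g (max x 0 + 1 - s)) (max x 0 + 1 - x') +
      U (max x 0 + 1 - x') (backward U g (max x 0 + 1)) :=
    ((hU.continuous_duhamel (by fun_prop)).comp (by fun_prop)).add
      (hU.continuous_apply (by fun_prop) continuous_const)
  refine hc.continuousAt.congr ?_
  have hx : x < max x 0 + 1 := by linarith [le_max_left x 0]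
  filter_upwards [gt_mem_nhds hx] with x' hx'
  refine (hU.backward_eq hg hx'.le (hi.mono_set (Set.Ioi_subset_Ioi ?_))).symm
  linarith [le_max_right x 0]

lemma exists_backwardDeriv (hU : IsAnalyticSemigroup U D) (hg : Continuous g)
    (hi : IntegrableOn g (Set.Ioi 0)) (hgh : IsLocallyHolder g) {X : ℝ} (hX : 0 < X) :
    ∃ z : ℝ → H, ∀ x ∈ Set.Ioo 0 X, ContinuousAt z x ∧ HasDerivAt (backward U g) (z x) x ∧
      ∀ ε, 0 < ε → D ε (backward U g x) = U ε (g x + z x) := by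
  obtain ⟨K, k, hK, hk, h⟩ := hgh X hX
  have hiX : IntegrableOn g (Set.Ioi X) := hi.mono_set (Set.Ioi_subset_Ioi hX.le)
  obtain ⟨z, hz⟩ := hU.exists_duhamelDeriv (g := fun s => g (X - s)) (T := X) hK hk
    fun x hx y hy => by
      have := h (X - x) ⟨by linarith [hx.2], by linarith [hx.1]⟩ (X - y)
        ⟨by linarith [hy.2], by linarith [hy.1]⟩
      rwa [sub_sub_sub_cancel_left, abs_sub_comm] at this
  refine ⟨fun x => -z (X - x) + D (X - x) (backward U g X), fun x hx => ?_⟩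
  have hx' : X - x ∈ Set.Ioo 0 X := ⟨by linarith [hx.2], by linarith [hx.1]⟩
  obtain ⟨h1, h2, h3⟩ := hz _ hx'
  have hsub : HasDerivAt (fun x => X - x) (-1) x := by
    simpa using (hasDerivAt_id x).const_sub X
  refine ⟨?_, ?_, fun ε hε => ?_⟩
  · refine ContinuousAt.add (ContinuousAt.neg ?_) ?_
    · exact ContinuousAt.comp (f := fun x => X - x) h1 (by fun_prop)
    · exact hU.continuousAt_deriv_apply (c := fun x => X - x) (by fun_prop) continuousAt_const hx'.1
  · have e1 := HasDerivAt.scomp x h2 hsub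
    have e2 := hU.hasDerivAt_apply hsub hx'.1 (hasDerivAt_const x (backward U g X))
    have e3 := e1.add e2
    refine HasDerivAt.congr_of_eventuallyEq (e3.congr_deriv ?_) ?_
    · simp
    · filter_upwards [gt_mem_nhds hx.2] with x' hx'
      exact hU.backward_eq hg hx'.le hiX
  · rw [hU.backward_eq hg hx.2.le hiX, map_add, h3 ε hε, sub_sub_cancel,
      ← hU.deriv_add_apply hε hx'.1.le, add_comm ε, hU.deriv_add_apply' hx'.1 hε.le, ← map_add]
    congr 1
    module

end IsAnalyticSemigroup

namespace IsSplitting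

variable {A : H →ₗ.[ℂ] H} {U D : ℝ → H →L[ℂ] H} {E : H →L[ℂ] H} {g : ℝ → H}

/-- Bounded solutions of `η' = -A η + g` on the half-line with prescribed `E η(0)`. -/
lemma exists_bounded_solution (hE : IsSplitting A U D E) (hU : IsAnalyticSemigroup U D)
    (hg : Continuous g) (hi : IntegrableOn g (Set.Ioi 0)) (hgh : IsLocallyHolder g) :
    ∃ b : H, ∀ k : H, ∃ η : ℝ → H, Continuous η ∧ η 0 = E k - b ∧
      (∃ C, ∀ x, 0 ≤ x → ‖η x‖ ≤ C) ∧
      ∀ X, 0 < X → ∃ z : ℝ → H, ∀ x ∈ Set.Ioo 0 X, ContinuousAt z x ∧ HasDerivAt η (z x) x ∧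
        (η x, g x - z x) ∈ A.graph := by
  let F : H →L[ℂ] H := 1 - E
  have hF : ∀ v, F v = v - E v := fun v => rfl
  have hEF : ∀ v, E (F v) = 0 := fun v => by rw [hF, map_sub, hE.idem, sub_self]
  let p : ℝ → H := fun x => E (g x)
  let q : ℝ → H := fun x => F (g x)
  have hpc : Continuous p := E.continuous.comp hg
  have hqc : Continuous q := F.continuous.comp hg
  have hpi : IntegrableOn p (Set.Ioi 0) := E.integrable_comp hi
  have hqi : IntegrableOn q (Set.Ioi 0) := F.integrable_comp hi
  have hEp : ∀ x, E (duhamel U p x) = duhamel U p x := fun x => by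
    have hc : Continuous fun s => U (x - s) (p s) := hU.continuous_apply (by fun_prop) hpc
    rw [duhamel, ← ContinuousLinearMap.intervalIntegral_comp_comm _ (hc.intervalIntegrable _ _)]
    simp only [hE.commute_semigroup, p, hE.idem]
  have hEq : ∀ x, 0 ≤ x → E (backward U q x) = 0 := fun x hx => by
    rw [backward, ← ContinuousLinearMap.integral_comp_comm _ (hU.integrableOn_apply hqc
      (hqi.mono_set (Set.Ioi_subset_Ioi hx)) x)]
    simp only [hE.commute_semigroup, q, hEF, map_zero, integral_zero]
  refine ⟨backward U q 0, fun k => ⟨fun x => U x (E k) + duhamel U p x - backward U q x,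
    ?_, ?_, ?_, fun X hX => ?_⟩⟩
  · exact ((hU.continuous _).add (hU.continuous_duhamel hpc)).sub (hU.continuous_backward hqc hqi)
  · simp [hU.zero, duhamel]
  · refine ⟨‖E k‖ + (∫ y in Set.Ioi 0, ‖p y‖) + ∫ y in Set.Ioi 0, ‖q y‖, fun x hx => ?_⟩
    refine (norm_sub_le _ _).trans (add_le_add ((norm_add_le _ _).trans (add_le_add ?_ ?_)) ?_)
    · exact hU.norm_apply_le _ _
    · exact hU.norm_duhamel_le hpi hx
    · exact hU.norm_backward_le hqi hx
  · obtain ⟨K, κ, hK, hκ, h⟩ := hgh.clm_apply E X hX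
    obtain ⟨z₁, hz₁⟩ := hU.exists_duhamelDeriv hK hκ h
    obtain ⟨z₂, hz₂⟩ := hU.exists_backwardDeriv hqc hqi (hgh.clm_apply F) hX
    refine ⟨fun x => -D x (E k) + z₁ x - z₂ x, fun x hx => ?_⟩
    obtain ⟨a1, a2, a3⟩ := hz₁ x hx
    obtain ⟨b1, b2, b3⟩ := hz₂ x hx
    have hsemi : HasDerivAt (fun x => U x (E k)) (-D x (E k)) x := by
      simpa using hU.hasDerivAt_apply (hasDerivAt_id x) hx.1 (hasDerivAt_const x (E k))
    refine ⟨?_, (hsemi.add a2).sub b2, ?_⟩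
    · exact ((hU.continuousAt_deriv_apply (c := fun x => x) continuousAt_id continuousAt_const
        hx.1).neg.add a1).sub b1
    · have g1 : (U x (E k) + duhamel U p x, p x - (-D x (E k) + z₁ x)) ∈ A.graph := by
        refine hE.graph_pos _ _ ?_ fun ε hε => ?_
        · rw [map_add, hE.commute_semigroup, hE.idem, hEp]
        · rw [map_add, a3 ε hε, ← hU.deriv_add_apply hε hx.1.le, add_comm ε,
            hU.deriv_add_apply' hx.1 hε.le, ← map_add]
          congr 1
          simp only [p]
          abel
      have g2 := hE.graph_neg _ _ (hEq x hx.1.le) b3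
      have := A.graph.sub_mem g1 g2
      convert this using 1
      refine Prod.ext rfl ?_
      simp only [p, q, hF, Prod.snd_sub]
      abel

variable {η : ℝ → H} {C : ℝ}

lemma apply_eq_self_of_bounded (hE : IsSplitting A U D E) (hU : IsAnalyticSemigroup U D)
    (hη : ContinuousOn η (Set.Ici 0))
    (hd : ∀ x, 0 < x → ∃ η', HasDerivAt η η' x ∧ (η x, -η') ∈ A.graph)
    (hb : ∀ x, 0 ≤ x → ‖η x‖ ≤ C) : ∀ x, 0 ≤ x → E (η x) = η x := by
  let F : H →L[ℂ] H := 1 - E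
  have hF : ∀ v, F v = v - E v := fun v => rfl
  have hpos : ∀ x, 0 < x → F (η x) = 0 := fun x hx => by
    refine hE.injective _ fun δ hδ => ?_
    have hδ2 : 0 < δ / 2 := half_pos hδ
    have hconst : ∀ s, 0 ≤ s → U (s + δ / 2) (F (η (x + s))) = U (δ / 2) (F (η x)) := by
      intro s hs
      have hder : ∀ r, 0 ≤ r → HasDerivAt (fun s => U (s + δ / 2) (F (η (x + s)))) 0 r := by
        intro r hr
        obtain ⟨η', h1, h2⟩ := hd (x + r) (by linarith)
        have h3 : HasDerivAt (fun s => F (η (x + s))) (F η') r :=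
          (F.restrictScalars ℝ).hasFDerivAt.comp_hasDerivAt r
            (HasDerivAt.comp_const_add x r h1)
        have hr' : 0 < r + δ / 2 := by linarith
        refine (hU.hasDerivAt_apply ((hasDerivAt_id r).add_const (δ / 2)) hr' h3).congr_deriv ?_
        have h4 := hE.deriv_neg _ _ h2 _ hr'
        rw [map_neg, ← neg_sub', map_neg, neg_neg, ← hF, ← hF] at h4
        simp [h4]
      have := eq_of_hasDerivAt_zero hs
        (fun r hr => (hder r hr.1).continuousAt.continuousWithinAt) fun r hr => hder r hr.1.le
      simpa using this
    have hle : ∀ s, 0 < s → ‖D δ (F (η x))‖ ≤ s⁻¹ * (‖F‖ * C) := fun s hs => by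
      have e : D δ (F (η x)) = D (δ + s) (F (η (x + s))) := by
        have h1 : D δ (F (η x)) = D (δ / 2) (U (δ / 2) (F (η x))) := by
          rw [← hU.deriv_add_apply hδ2 hδ2.le, add_halves]
        rw [h1, ← hconst s hs.le, ← hU.deriv_add_apply hδ2 (by linarith)]
        congr 2
        ring
      rw [e]
      refine (hU.norm_deriv_apply_le (by linarith) _).trans ?_
      have h1 : ‖F (η (x + s))‖ ≤ ‖F‖ * C := F.le_opNorm_of_le (hb _ (by linarith))
      gcongr
      linarith
    have hlim : Tendsto (fun s : ℝ => s⁻¹ * (‖F‖ * C)) atTop (𝓝 0) := by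
      simpa using tendsto_inv_atTop_zero.mul_const (‖F‖ * C)
    refine norm_le_zero_iff.mp (ge_of_tendsto hlim ?_)
    filter_upwards [eventually_gt_atTop 0] with s hs using hle s hs
  intro x hx
  have hx' : F (η x) = 0 := by
    rcases hx.eq_or_lt with rfl | hx
    · have h1 : Tendsto (fun x => F (η x)) (𝓝[>] 0) (𝓝 (F (η 0))) :=
        (F.continuous.continuousAt.comp_continuousWithinAt (hη 0 Set.self_mem_Ici)).mono
          Set.Ioi_subset_Ici_self
      refine tendsto_nhds_unique h1 (tendsto_const_nhds.congr' ?_)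
      filter_upwards [self_mem_nhdsWithin] with y hy
      exact (hpos y hy).symm
    · exact hpos x hx
  rw [hF, sub_eq_zero] at hx'
  exact hx'.symm

lemma eq_zero_of_apply_eq_self (hE : IsSplitting A U D E) (hU : IsAnalyticSemigroup U D)
    (hη : ContinuousOn η (Set.Ici 0))
    (hd : ∀ x, 0 < x → ∃ η', HasDerivAt η η' x ∧ (η x, -η') ∈ A.graph)
    (hEη : ∀ x, 0 ≤ x → E (η x) = η x) (h0 : η 0 = 0) {x : ℝ} (hx : 0 ≤ x) : η x = 0 := by
  refine hU.ext_apply fun ε hε => ?_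
  have hc : ContinuousOn (fun s => U (x + ε - s) (E (η s))) (Set.Icc 0 x) :=
    hU.continuous_uncurry.comp_continuousOn ((by fun_prop : Continuous fun s => x + ε - s)
      |>.continuousOn.prodMk (E.continuous.comp_continuousOn
        (hη.mono Set.Icc_subset_Ici_self)))
  have h := eq_of_hasDerivAt_zero hx hc fun s hs => by
    obtain ⟨η', h1, h2⟩ := hd s hs.1
    have h3 : HasDerivAt (fun s => E (η s)) (E η') s :=
      (E.restrictScalars ℝ).hasFDerivAt.comp_hasDerivAt s h1
    have hs' : 0 < x + ε - s := by linarith [hs.2]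
    have hsub : HasDerivAt (fun s => x + ε - s) (-1) s := by
      simpa using (hasDerivAt_id s).const_sub (x + ε)
    refine (hU.hasDerivAt_apply hsub hs' h3).congr_deriv ?_
    rw [hE.deriv_pos _ _ h2 _ hs']
    simp
  simpa [h0, hEη x hx] using h

end IsSplitting

lemma mem_graph_iff_pmapComp {J : H →L[ℂ] H} (hJJ : ∀ v, J (J v) = v) {L : H →ₗ.[ℂ] H} {u w : H} :
    (u, J w) ∈ L.graph ↔ ∃ hu : u ∈ (pmapComp J L).domain, pmapComp J L ⟨u, hu⟩ = w := by
  rw [LinearPMap.mem_graph_iff]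
  constructor
  · rintro ⟨y, rfl, hy⟩
    refine ⟨y.2, ?_⟩
    change J (L y) = w
    rw [hy, hJJ]
  · rintro ⟨hu, rfl⟩
    exact ⟨⟨u, hu⟩, rfl, (hJJ _).symm⟩

lemma add_apply_eq_two_smul_Pplus (J : H →L[ℂ] H) (v : H) : v + J v = (2 : ℂ) • Pplus J v := by
  simp [Pplus]

lemma continuousOn_of_holder {f : ℝ → H}
    (hf : ∀ x₁ > (0 : ℝ), ∃ K > (0 : ℝ), ∃ k ∈ Set.Ioc (0 : ℝ) 1,
      ∀ x ∈ Set.Icc (0 : ℝ) x₁, ∀ y ∈ Set.Icc (0 : ℝ) x₁, ‖f x - f y‖ ≤ K * |x - y| ^ k) :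
    ContinuousOn f (Set.Ici 0) := by
  intro x hx
  have hx0 : 0 ≤ x := hx
  obtain ⟨K, hK, k, hk, h⟩ := hf (x + 1) (by linarith)
  have hlim : Tendsto (fun y => K * |y - x| ^ k) (𝓝[Set.Ici 0] x) (𝓝 0) := by
    have hc : ContinuousAt (fun y : ℝ => K * |y - x| ^ k) x :=
      continuousAt_const.mul (ContinuousAt.rpow_const (by fun_prop) (Or.inr hk.1.le))
    have := hc.tendsto
    rw [sub_self, abs_zero, Real.zero_rpow hk.1.ne', mul_zero] at this
    exact this.mono_left nhdsWithin_le_nhds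
  refine tendsto_iff_norm_sub_tendsto_zero.mpr (squeeze_zero' (Eventually.of_forall fun _ =>
    norm_nonneg _) ?_ hlim)
  filter_upwards [self_mem_nhdsWithin, nhdsWithin_le_nhds (gt_mem_nhds (lt_add_one x))]
    with y hy hy'
  exact h y ⟨hy, hy'.le⟩ x ⟨hx0, by linarith⟩

end

/-- Nonhomogeneous half-space problem: if `f` is locally Hölder continuous
on `[0, ∞)` and `∫₀^∞ ‖f(x)‖ dx < ∞`, then the problem `dψ/dx = -Bψ + f` on `(0, ∞)`,
`P₊ψ(0) = φ₊`, `‖ψ(x)‖ = O(1)` has a unique solution. -/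
theorem statement6 (J : H →L[ℂ] H) (hJ : IsSignatureOperator J)
    (L : H →ₗ.[ℂ] H) (hdense : Dense (L.domain : Set H))
    (hLsa : IsSelfAdjoint L) (hLpos : IsPositivePMap L)
    (hsim : SimilarToSelfAdjoint (pmapComp J L))
    (f : ℝ → H)
    (hf : ∀ x₁ > (0 : ℝ), ∃ K > (0 : ℝ), ∃ k ∈ Set.Ioc (0 : ℝ) 1,
      ∀ x ∈ Set.Icc (0 : ℝ) x₁, ∀ y ∈ Set.Icc (0 : ℝ) x₁, ‖f x - f y‖ ≤ K * |x - y| ^ k)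
    (hfint : IntegrableOn (fun x => ‖f x‖) (Set.Ici (0 : ℝ)) volume)
    (φp : H) (hφp : J φp = φp) :
    (∃ ψ : ℝ → H,
        ContinuousOn ψ (Set.Ici 0) ∧
        IsStrongSolutionOn (pmapComp J L) f ψ (Set.Ioi 0) ∧
        Pplus J (ψ 0) = φp ∧
        (∃ C : ℝ, ∀ x ∈ Set.Ici (0 : ℝ), ‖ψ x‖ ≤ C)) ∧
    (∀ ψ₁ ψ₂ : ℝ → H,
        (ContinuousOn ψ₁ (Set.Ici 0) ∧
          IsStrongSolutionOn (pmapComp J L) f ψ₁ (Set.Ioi 0) ∧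
          Pplus J (ψ₁ 0) = φp ∧
          (∃ C : ℝ, ∀ x ∈ Set.Ici (0 : ℝ), ‖ψ₁ x‖ ≤ C)) →
        (ContinuousOn ψ₂ (Set.Ici 0) ∧
          IsStrongSolutionOn (pmapComp J L) f ψ₂ (Set.Ioi 0) ∧
          Pplus J (ψ₂ 0) = φp ∧
          (∃ C : ℝ, ∀ x ∈ Set.Ici (0 : ℝ), ‖ψ₂ x‖ ≤ C)) →
        Set.EqOn ψ₁ ψ₂ (Set.Ici 0)) := by
  have hJJ : ∀ v, J (J v) = v := fun v => by
    simpa using congrArg (fun T : H →L[ℂ] H => T v) hJ.2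
  obtain ⟨S, A, U, D, E, hA, hU, hE, hbij⟩ := hsim.exists_splitting hJ hLsa hLpos
  constructor
  · have hfc := continuousOn_of_holder hf
    have hgc : Continuous fun x : ℝ => S (f (max x 0)) :=
      S.continuous.comp (hfc.comp_continuous (by fun_prop) fun x => le_max_right x 0)
    have hfi : IntegrableOn f (Set.Ioi 0) :=
      (integrable_norm_iff ((hfc.mono Set.Ioi_subset_Ici_self).aestronglyMeasurable
        measurableSet_Ioi)).mp (hfint.mono_set Set.Ioi_subset_Ici_self)
    have hgi : IntegrableOn (fun x : ℝ => S (f (max x 0))) (Set.Ioi 0) := by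
      refine IntegrableOn.congr_fun ((S : H →L[ℂ] H).integrable_comp hfi) (fun x hx => ?_)
        measurableSet_Ioi
      have hx' : (0 : ℝ) < x := hx
      simp [max_eq_left hx'.le]
    have hgh : IsLocallyHolder fun x : ℝ => S (f (max x 0)) := by
      refine IsLocallyHolder.clm_apply (g := fun x => f (max x 0)) (fun X hX => ?_) (S : H →L[ℂ] H)
      obtain ⟨K, hK, k, hk, h⟩ := hf X hX
      refine ⟨K, k, hK.le, hk.1, fun x hx y hy => ?_⟩
      simp only [max_eq_left hx.1, max_eq_left hy.1]
      exact h x hx y hy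
    obtain ⟨b, hb⟩ := hE.exists_bounded_solution hU hgc hgi hgh
    obtain ⟨h, hh⟩ := hbij.2 ((2 : ℂ) • (φp + Pplus J (S.symm b)))
    obtain ⟨η, hηc, hη0, ⟨C, hC⟩, hη⟩ := hb (S h)
    have hψd : ∀ x, 0 < x → ∃ z : ℝ → H, ContinuousAt z x ∧
        (∀ᶠ y in nhds x, HasDerivAt (fun x => S.symm (η x)) (S.symm (z y)) y) ∧
        (η x, S (f x) - z x) ∈ A.graph := fun x hx => by
      obtain ⟨z, hz⟩ := hη (x + 1) (by linarith)
      have hz' := hz x ⟨hx, by linarith⟩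
      rw [max_eq_left hx.le] at hz'
      refine ⟨z, hz'.1, ?_, hz'.2.2⟩
      filter_upwards [Ioo_mem_nhds hx (lt_add_one x)] with y hy
      exact ((S.symm : H →L[ℂ] H).restrictScalars ℝ).hasFDerivAt.comp_hasDerivAt y (hz y hy).2.1
    refine ⟨fun x => S.symm (η x), (S.symm.continuous.comp hηc).continuousOn,
      ⟨deriv fun x => S.symm (η x), fun x hx => ?_, fun x hx => ?_⟩, ?_,
      ‖(S.symm : H →L[ℂ] H)‖ * C, fun x hx => ?_⟩
    · obtain ⟨z, h1, h2, -⟩ := hψd x hx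
      refine ContinuousAt.continuousWithinAt (ContinuousAt.congr
        (S.symm.continuous.continuousAt.comp h1) ?_)
      filter_upwards [h2] with y hy
      exact hy.deriv.symm
    · obtain ⟨z, -, h2, h3⟩ := hψd x hx
      have hd := h2.self_of_nhds
      refine ⟨hd.differentiableAt.hasDerivAt, ?_⟩
      have h4 : (S.symm (η x), J (f x - S.symm (z x))) ∈ L.graph := by
        rw [← hA]
        simpa using h3
      obtain ⟨hu, hB⟩ := (mem_graph_iff_pmapComp hJJ).mp h4
      refine ⟨hu, ?_⟩
      rw [hB, hd.deriv]
      abel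
    · have key : (2 : ℂ) • Pplus J (S.symm (E (S h))) = (2 : ℂ) • (φp + Pplus J (S.symm b)) := by
        have hJP : ∀ v, Pplus J (J v) = Pplus J v := fun v => by
          simp [Pplus, hJJ, add_comm]
        have hPP : ∀ v, Pplus J (Pplus J v) = Pplus J v := fun v => by
          nth_rewrite 2 [Pplus]
          simp only [smul_apply, add_apply,
            ContinuousLinearMap.id_apply, map_smul, map_add, hJP]
          module
        have hPφ : Pplus J φp = φp := by
          simp only [Pplus, smul_apply, add_apply,
            ContinuousLinearMap.id_apply, hφp]
          module
        have := congrArg (Pplus J) hh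
        simp only [map_add, map_smul, map_sub, hJP, hPP, hPφ, S.symm_apply_apply] at this
        rwa [add_sub_cancel] at this
      have key' := smul_right_injective H (two_ne_zero' ℂ) key
      simp only [hη0, map_sub]
      rw [key', add_sub_cancel_right]
    · exact (S.symm : H →L[ℂ] H).le_opNorm_of_le (hC x hx)
  · rintro ψ₁ ψ₂ ⟨hc₁, ⟨ψ₁', -, hs₁⟩, hp₁, C₁, hC₁⟩ ⟨hc₂, ⟨ψ₂', -, hs₂⟩, hp₂, C₂, hC₂⟩
    have hgraph : ∀ {x : ℝ} {ψ : ℝ → H} {ψ' : H}, (∃ hx : ψ x ∈ (pmapComp J L).domain,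
        ψ' = -(pmapComp J L ⟨ψ x, hx⟩) + f x) → (S (ψ x), S (f x - ψ')) ∈ A.graph := by
      rintro x ψ _ ⟨hx, rfl⟩
      rw [hA, mem_graph_iff_pmapComp hJJ]
      exact ⟨hx, by abel⟩
    have hηc : ContinuousOn (fun x => S (ψ₁ x - ψ₂ x)) (Set.Ici 0) :=
      S.continuous.comp_continuousOn (hc₁.sub hc₂)
    have hηd : ∀ x, 0 < x → ∃ η', HasDerivAt (fun x => S (ψ₁ x - ψ₂ x)) η' x ∧
        (S (ψ₁ x - ψ₂ x), -η') ∈ A.graph := fun x hx => by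
      refine ⟨S (ψ₁' x - ψ₂' x), ((S : H →L[ℂ] H).restrictScalars ℝ).hasFDerivAt.comp_hasDerivAt x
        ((hs₁ x hx).1.sub (hs₂ x hx).1), ?_⟩
      convert A.graph.sub_mem (hgraph (hs₁ x hx).2) (hgraph (hs₂ x hx).2) using 1
      refine Prod.ext (map_sub _ _ _) ?_
      simp only [Prod.snd_sub, map_sub]
      abel
    have hEη := hE.apply_eq_self_of_bounded hU hηc hηd (C := ‖(S : H →L[ℂ] H)‖ * (C₁ + C₂))
      fun x hx => (S : H →L[ℂ] H).le_opNorm_of_le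
        ((norm_sub_le _ _).trans (add_le_add (hC₁ x hx) (hC₂ x hx)))
    have h0 : ψ₁ 0 - ψ₂ 0 = 0 := by
      refine hbij.1 ?_
      simp only [hEη 0 le_rfl, two_smul, add_sub_cancel_right, S.symm_apply_apply, map_zero,
        sub_zero, add_zero]
      rw [add_apply_eq_two_smul_Pplus, map_sub, hp₁, hp₂, sub_self, smul_zero]
    intro x hx
    have := hE.eq_zero_of_apply_eq_self hU hηc hηd hEη (by simp [h0]) hx
    exact sub_eq_zero.mp (S.map_eq_zero_iff.mp this)

end
end

section
/- Let H be a complex Hilbert space, J a signature operator on H, and L a densely defined self-adjoint operator in H which is uniformly positive: there is λ₀ > 0 with ⟨Lh, h⟩ ≥ λ₀‖h‖² for all h ∈ dom L. Let B := JL and assume B is similar to a self-adjoint operator in H. Let f : [0, ∞) → H satisfy: (a) for each x₁ > 0 there exist K > 0 and k ∈ (0, 1] with ‖f(x) − f(y)‖ ≤ K |x − y|^k for all 0 ≤ x, y ≤ x₁, and (b) sup_{x ≥ 0} ‖f(x)‖ < ∞. Then for every φ₊ ∈ H₊ there exists a unique function ψ : [0, ∞) → H which is continuous on [0, ∞), continuously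 differentiable on (0, ∞), satisfies ψ(x) ∈ dom B and ψ′(x) = −Bψ(x) + f(x) for all x > 0, satisfies P₊ψ(0) = φ₊, and is bounded: sup_{x ≥ 0} ‖ψ(x)‖ < ∞. -/
open scoped ComplexOrder InnerProductSpace

noncomputable section

variable {H : Type*} [NormedAddCommGroup H] [InnerProductSpace ℂ H] [CompleteSpace H]

open Set Filter Topology MeasureTheory

set_option linter.unusedSectionVars false

/-- For a nonnegative operator `R`, the semigroup `exp (-τ R⁻¹)` for `τ > 0`, extended by the
identity to `τ ≤ 0`. -/
def invSemigroup (R : H →L[ℂ] H) (τ : ℝ) : H →L[ℂ] H :=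
  if τ ≤ 0 then 1 else cfc (fun t : ℝ => expNegInvGlue (t / τ)) R

/-- The derivative `-R⁻¹ exp (-τ R⁻¹)` of `invSemigroup R` at `τ > 0`. -/
def invSemigroupDeriv (R : H →L[ℂ] H) (τ : ℝ) : H →L[ℂ] H :=
  -cfc (fun t : ℝ => t⁻¹ * expNegInvGlue (t / τ)) R

theorem expNegInvGlue_div_of_pos {t : ℝ} (ht : 0 < t) {τ : ℝ} (hτ : 0 < τ) :
    expNegInvGlue (t / τ) = Real.exp (-(τ / t)) := by
  rw [expNegInvGlue, if_neg (not_le.2 (div_pos ht hτ)), inv_div]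

theorem continuous_expNegInvGlue_div (τ : ℝ) : Continuous fun t : ℝ => expNegInvGlue (t / τ) :=
  (expNegInvGlue.contDiff (n := 0)).continuous.comp (continuous_id.div_const τ)

theorem continuous_inv_mul_expNegInvGlue_div {τ : ℝ} (hτ : 0 < τ) :
    Continuous fun t : ℝ => t⁻¹ * expNegInvGlue (t / τ) := by
  have h := ((expNegInvGlue.continuous_polynomial_eval_inv_mul Polynomial.X).comp
    (continuous_id.div_const τ)).const_mul τ⁻¹
  refine h.congr fun t => ?_
  simp only [Function.comp, Polynomial.eval_X, id, inv_div]
  rw [← mul_assoc]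
  congr 1
  field_simp

theorem invSemigroup_zero (R : H →L[ℂ] H) : invSemigroup R 0 = 1 := by simp [invSemigroup]

theorem invSemigroup_of_pos (R : H →L[ℂ] H) {τ : ℝ} (hτ : 0 < τ) :
    invSemigroup R τ = cfc (fun t : ℝ => expNegInvGlue (t / τ)) R :=
  if_neg (not_le.2 hτ)

theorem Commute.invSemigroup {R M : H →L[ℂ] H} (h : Commute R M) (τ : ℝ) :
    Commute (invSemigroup R τ) M := by
  unfold _root_.invSemigroup
  split_ifs
  · exact Commute.one_left _
  · exact h.cfc_real _

theorem Commute.invSemigroupDeriv {R M : H →L[ℂ] H} (h : Commute R M) (τ : ℝ) :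
    Commute (invSemigroupDeriv R τ) M :=
  (h.cfc_real _).neg_left

section

variable {R : H →L[ℂ] H}

theorem spectrum_mem_of_nonneg (hR : 0 ≤ R) {t : ℝ} (ht : t ∈ spectrum ℝ R) :
    0 ≤ t ∧ t ≤ ‖R‖ := by
  refine ⟨spectrum_nonneg_of_nonneg hR ht, ?_⟩
  have hsa : IsSelfAdjoint R := .of_nonneg hR
  have := norm_apply_le_norm_cfc (fun x : ℝ => x) R ht
  rw [cfc_id' ℝ R] at this
  exact (le_abs_self t).trans this

theorem mul_invSemigroupDeriv (hR : 0 ≤ R) {τ : ℝ} (hτ : 0 < τ) :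
    R * invSemigroupDeriv R τ = -invSemigroup R τ := by
  have hsa : IsSelfAdjoint R := .of_nonneg hR
  rw [invSemigroupDeriv, invSemigroup_of_pos R hτ, mul_neg]
  congr 1
  nth_rewrite 1 [← cfc_id' ℝ R]
  rw [← cfc_mul _ _ R (by fun_prop) (continuous_inv_mul_expNegInvGlue_div hτ).continuousOn]
  refine cfc_congr fun t ht => ?_
  rcases (spectrum_mem_of_nonneg hR ht).1.eq_or_lt with rfl | h
  · simp
  · field_simp

theorem expNegInvGlue_div_mul {t σ τ : ℝ} (ht : 0 ≤ t) (hσ : 0 < σ) (hτ : 0 < τ) :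
    expNegInvGlue (t / σ) * expNegInvGlue (t / τ) = expNegInvGlue (t / (σ + τ)) := by
  rcases ht.eq_or_lt with rfl | h
  · simp
  · rw [expNegInvGlue_div_of_pos h hσ, expNegInvGlue_div_of_pos h hτ,
      expNegInvGlue_div_of_pos h (by positivity), ← Real.exp_add]
    congr 1
    ring

theorem invSemigroupDeriv_mul (hR : 0 ≤ R) {σ τ : ℝ} (hσ : 0 < σ) (hτ : 0 < τ) :
    invSemigroupDeriv R σ * invSemigroup R τ = invSemigroupDeriv R (σ + τ) := by
  rw [invSemigroup_of_pos R hτ, invSemigroupDeriv, invSemigroupDeriv, neg_mul,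
    ← cfc_mul _ _ R (continuous_inv_mul_expNegInvGlue_div hσ).continuousOn
      (continuous_expNegInvGlue_div τ).continuousOn]
  congr 1
  refine cfc_congr fun t ht => ?_
  rw [mul_assoc, expNegInvGlue_div_mul (spectrum_mem_of_nonneg hR ht).1 hσ hτ]

/-- A decay rate for `invSemigroup R`. -/
def decayRate (R : H →L[ℂ] H) : ℝ := (‖R‖ + 1)⁻¹

theorem decayRate_pos (R : H →L[ℂ] H) : 0 < decayRate R := by unfold decayRate; positivity

theorem decayRate_mul_le {t τ : ℝ} (ht : 0 < t) (htR : t ≤ ‖R‖) (hτ : 0 ≤ τ) :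
    decayRate R * τ ≤ τ / t := by
  rw [div_eq_inv_mul]
  refine mul_le_mul_of_nonneg_right ?_ hτ
  exact inv_anti₀ ht (by linarith)

theorem norm_invSemigroup_le_exp (hR : 0 ≤ R) {τ : ℝ} (hτ : 0 < τ) :
    ‖invSemigroup R τ‖ ≤ Real.exp (-(decayRate R * τ)) := by
  rw [invSemigroup_of_pos R hτ]
  refine norm_cfc_le (Real.exp_pos _).le fun t ht => ?_
  obtain ⟨h0, h1⟩ := spectrum_mem_of_nonneg hR ht
  rcases h0.eq_or_lt with rfl | h
  · simpa using (Real.exp_pos _).le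
  · rw [expNegInvGlue_div_of_pos h hτ, Real.norm_eq_abs, Real.abs_exp, Real.exp_le_exp]
    exact neg_le_neg (decayRate_mul_le h h1 hτ.le)

theorem norm_invSemigroup_le_one (hR : 0 ≤ R) (τ : ℝ) : ‖invSemigroup R τ‖ ≤ 1 := by
  rcases le_or_gt τ 0 with h | h
  · rw [invSemigroup, if_pos h]
    exact ContinuousLinearMap.norm_id_le
  · refine (norm_invSemigroup_le_exp hR h).trans (Real.exp_le_one_iff.2 ?_)
    have := mul_pos (decayRate_pos R) h
    linarith

theorem norm_invSemigroupDeriv_le (hR : 0 ≤ R) {τ : ℝ} (hτ : 0 < τ) :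
    ‖invSemigroupDeriv R τ‖ ≤ 2 * τ⁻¹ * Real.exp (-(decayRate R / 2 * τ)) := by
  rw [invSemigroupDeriv, norm_neg]
  refine norm_cfc_le (by positivity) fun t ht => ?_
  obtain ⟨h0, h1⟩ := spectrum_mem_of_nonneg hR ht
  rcases h0.eq_or_lt with rfl | h
  · simp; positivity
  · rw [expNegInvGlue_div_of_pos h hτ, Real.norm_eq_abs, abs_of_nonneg (by positivity)]
    have e1 : t⁻¹ = τ⁻¹ * (τ / t) := by field_simp
    have e2 : τ / t ≤ 2 * Real.exp (τ / t / 2) := by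
      have := Real.add_one_le_exp (τ / t / 2)
      linarith
    calc t⁻¹ * Real.exp (-(τ / t)) = τ⁻¹ * (τ / t) * Real.exp (-(τ / t)) := by rw [← e1]
      _ ≤ τ⁻¹ * (2 * Real.exp (τ / t / 2)) * Real.exp (-(τ / t)) := by gcongr
      _ = 2 * τ⁻¹ * Real.exp (-(τ / t) / 2) := by
        rw [mul_assoc, mul_assoc, ← Real.exp_add]
        ring_nf
      _ ≤ _ := by
        gcongr
        have := decayRate_mul_le h h1 hτ.le
        linarith

theorem exp_neg_sub_one_add_le (y : ℝ) : |Real.exp (-y) - 1 + y| ≤ y ^ 2 * Real.exp |y| := by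
  have h1 := Real.add_one_le_exp (-y)
  have h2 := Real.add_one_le_exp y
  have h3 : Real.exp (-y) * Real.exp y = 1 := by rw [← Real.exp_add]; simp
  rw [abs_of_nonneg (by linarith)]
  rcases le_total 0 y with h | h
  · rw [abs_of_nonneg h]
    have : Real.exp (-y) ≤ 1 := Real.exp_le_one_iff.2 (by linarith)
    have : 1 ≤ Real.exp y := Real.one_le_exp h
    nlinarith [Real.exp_pos (-y), mul_nonneg h h, Real.exp_pos y]
  · rw [abs_of_nonpos h]
    have : 1 ≤ Real.exp (-y) := Real.one_le_exp (by linarith)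
    nlinarith [Real.exp_pos (-y), mul_nonneg_of_nonpos_of_nonpos h h, Real.exp_pos y]

theorem norm_invSemigroup_sub_sub_le (hR : 0 ≤ R) {τ h : ℝ} (hτ : 0 < τ) (hh : |h| ≤ τ / 2) :
    ‖invSemigroup R (τ + h) - invSemigroup R τ - h • invSemigroupDeriv R τ‖
      ≤ 32 * (τ ^ 2)⁻¹ * h ^ 2 := by
  have hτh : 0 < τ + h := by linarith [neg_abs_le h]
  have hc1 := (continuous_expNegInvGlue_div (τ + h)).continuousOn (s := spectrum ℝ R)
  have hc2 := (continuous_expNegInvGlue_div τ).continuousOn (s := spectrum ℝ R)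
  have hc3 := (continuous_inv_mul_expNegInvGlue_div hτ).continuousOn (s := spectrum ℝ R)
  have hsa : IsSelfAdjoint R := .of_nonneg hR
  rw [invSemigroup_of_pos R hτ, invSemigroup_of_pos R hτh, invSemigroupDeriv, smul_neg,
    sub_neg_eq_add, ← cfc_sub _ _ R hc1 hc2, ← cfc_smul h _ R hc3,
    ← cfc_add R (fun t => expNegInvGlue (t / (τ + h)) - expNegInvGlue (t / τ))
      (fun t => h • (t⁻¹ * expNegInvGlue (t / τ))) (hc1.sub hc2) (hc3.const_smul h)]
  refine norm_cfc_le (by positivity) fun t ht => ?_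
  obtain ⟨h0, h1⟩ := spectrum_mem_of_nonneg hR ht
  rcases h0.eq_or_lt with rfl | ht0
  · simp; positivity
  · rw [expNegInvGlue_div_of_pos ht0 hτ, expNegInvGlue_div_of_pos ht0 hτh]
    have e1 : Real.exp (-((τ + h) / t)) - Real.exp (-(τ / t)) + h • (t⁻¹ * Real.exp (-(τ / t)))
        = Real.exp (-(τ / t)) * (Real.exp (-(h / t)) - 1 + h / t) := by
      rw [show -((τ + h) / t) = -(τ / t) + -(h / t) by ring, Real.exp_add, smul_eq_mul]
      field_simp
    rw [e1, norm_mul, Real.norm_eq_abs, Real.abs_exp, Real.norm_eq_abs]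
    have e2 : Real.exp |h / t| ≤ Real.exp (τ / t / 2) := by
      rw [Real.exp_le_exp, abs_div, abs_of_pos ht0, div_right_comm]
      gcongr
    have e3 : (τ / t) ^ 2 ≤ 32 * Real.exp (τ / t / 2) := by
      have hy : 0 ≤ τ / t := by positivity
      have := Real.add_one_le_exp (τ / t / 4)
      have e : Real.exp (τ / t / 2) = Real.exp (τ / t / 4) ^ 2 := by
        rw [← Real.exp_nat_mul]; congr 1; push_cast; ring
      rw [e]
      nlinarith
    calc Real.exp (-(τ / t)) * |Real.exp (-(h / t)) - 1 + h / t|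
        ≤ Real.exp (-(τ / t)) * ((h / t) ^ 2 * Real.exp (τ / t / 2)) := by
          gcongr
          exact (exp_neg_sub_one_add_le _).trans (by gcongr)
      _ = (τ ^ 2)⁻¹ * h ^ 2 * ((τ / t) ^ 2 * Real.exp (-(τ / t)) * Real.exp (τ / t / 2)) := by
          field_simp
      _ ≤ (τ ^ 2)⁻¹ * h ^ 2 * (32 * Real.exp (τ / t / 2) * Real.exp (-(τ / t))
            * Real.exp (τ / t / 2)) := by gcongr
      _ = 32 * (τ ^ 2)⁻¹ * h ^ 2 := by
          rw [show 32 * Real.exp (τ / t / 2) * Real.exp (-(τ / t)) * Real.exp (τ / t / 2)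
            = 32 * Real.exp (τ / t / 2 + -(τ / t) + τ / t / 2) by
              rw [Real.exp_add, Real.exp_add]; ring,
            show τ / t / 2 + -(τ / t) + τ / t / 2 = 0 by ring, Real.exp_zero]
          ring

theorem hasDerivAt_invSemigroup (hR : 0 ≤ R) {τ : ℝ} (hτ : 0 < τ) :
    HasDerivAt (invSemigroup R) (invSemigroupDeriv R τ) τ := by
  rw [hasDerivAt_iff_isLittleO_nhds_zero]
  refine Asymptotics.IsBigO.trans_isLittleO (g := fun h : ℝ => h ^ 2) ?_ ?_
  · refine Asymptotics.IsBigO.of_bound (32 * (τ ^ 2)⁻¹) ?_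
    filter_upwards [Metric.closedBall_mem_nhds (0 : ℝ) (half_pos hτ)] with h hh
    rw [mem_closedBall_zero_iff, Real.norm_eq_abs] at hh
    rw [Real.norm_eq_abs, abs_of_nonneg (sq_nonneg h)]
    exact norm_invSemigroup_sub_sub_le hR hτ hh
  · simpa using Asymptotics.isLittleO_pow_pow (𝕜 := ℝ) one_lt_two

theorem continuousOn_invSemigroup (hR : 0 ≤ R) : ContinuousOn (invSemigroup R) (Ioi 0) :=
  fun _ hτ => (hasDerivAt_invSemigroup hR hτ).continuousAt.continuousWithinAt

theorem continuousOn_invSemigroupDeriv (hR : 0 ≤ R) :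
    ContinuousOn (invSemigroupDeriv R) (Ioi 0) := by
  intro τ hτ
  rw [mem_Ioi] at hτ
  refine ContinuousAt.continuousWithinAt ?_
  have h : ContinuousAt (fun σ => invSemigroupDeriv R (τ / 2) * invSemigroup R (σ - τ / 2)) τ := by
    refine continuousAt_const.mul (ContinuousAt.comp (g := invSemigroup R) ?_ (by fun_prop))
    exact (hasDerivAt_invSemigroup hR (by linarith)).continuousAt
  refine h.congr ?_
  filter_upwards [Ioi_mem_nhds (half_lt_self hτ)] with σ hσ
  rw [invSemigroupDeriv_mul hR (half_pos hτ) (sub_pos.2 hσ)]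
  congr 1
  ring

theorem norm_mul_invSemigroup_sub_le (hR : 0 ≤ R) {τ : ℝ} (hτ : 0 ≤ τ) :
    ‖R * invSemigroup R τ - R‖ ≤ τ := by
  rcases hτ.eq_or_lt with rfl | hτ
  · simp [invSemigroup_zero]
  have hsa : IsSelfAdjoint R := .of_nonneg hR
  have hc := (continuous_expNegInvGlue_div τ).continuousOn (s := spectrum ℝ R)
  have e : R * invSemigroup R τ - R = cfc (fun t : ℝ => t * expNegInvGlue (t / τ) - t) R := by
    rw [cfc_sub (fun t : ℝ => t * expNegInvGlue (t / τ)) (fun t => t) R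
      (continuousOn_id.mul hc) (by fun_prop), cfc_mul _ _ R (by fun_prop) hc,
      cfc_id' ℝ R, invSemigroup_of_pos R hτ]
  rw [e]
  refine norm_cfc_le hτ.le fun t ht => ?_
  rcases (spectrum_mem_of_nonneg hR ht).1.eq_or_lt with rfl | ht0
  · simpa using hτ.le
  · rw [expNegInvGlue_div_of_pos ht0 hτ, Real.norm_eq_abs]
    have h1 := Real.add_one_le_exp (-(τ / t))
    have h2 : Real.exp (-(τ / t)) ≤ 1 := Real.exp_le_one_iff.2 (by have := div_pos hτ ht0; linarith)
    have h3 : t * (τ / t) = τ := by field_simp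
    rw [abs_le]
    constructor <;> nlinarith

theorem hasDerivAt_mul_invSemigroup (hR : 0 ≤ R) {τ : ℝ} (hτ : 0 < τ) :
    HasDerivAt (fun τ => R * invSemigroup R τ) (-invSemigroup R τ) τ := by
  rw [← mul_invSemigroupDeriv hR hτ]
  exact (hasDerivAt_invSemigroup hR hτ).const_mul R

theorem denseRange_of_injective (hsa : IsSelfAdjoint R) (hinj : Function.Injective R) :
    DenseRange R := by
  have hker : R.ker = ⊥ := LinearMap.ker_eq_bot.2 hinj
  have h := ContinuousLinearMap.orthogonal_range R
  rw [hsa.adjoint_eq, hker, ← Submodule.topologicalClosure_eq_top_iff,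
    ← Submodule.dense_iff_topologicalClosure_eq_top] at h
  exact h

theorem continuousWithinAt_invSemigroup_zero (hR : 0 ≤ R) (hinj : Function.Injective R) (a : H) :
    ContinuousWithinAt (fun τ => invSemigroup R τ a) (Ici 0) 0 := by
  have hsa : IsSelfAdjoint R := .of_nonneg hR
  rw [ContinuousWithinAt, invSemigroup_zero, Metric.tendsto_nhds]
  intro ε hε
  obtain ⟨_, hk, k, rfl⟩ := Metric.dense_iff.1 (denseRange_of_injective hsa hinj) a (ε / 3)
    (by positivity)
  rw [Metric.mem_ball, dist_eq_norm] at hk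
  have hδ : 0 < ε / 3 / (‖k‖ + 1) := by positivity
  filter_upwards [self_mem_nhdsWithin, mem_nhdsWithin_of_mem_nhds (Iio_mem_nhds hδ)] with τ h0 h1
  rw [mem_Ici] at h0
  rw [mem_Iio, lt_div_iff₀ (by positivity)] at h1
  have hcomm : invSemigroup R τ (R k) = R (invSemigroup R τ k) :=
    congrArg (fun M : H →L[ℂ] H => M k) ((Commute.refl R).invSemigroup τ).eq
  have e : invSemigroup R τ a - (1 : H →L[ℂ] H) a
      = (R k - a) - invSemigroup R τ (R k - a) + (R * invSemigroup R τ - R) k := by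
    simp only [one_apply_eq_self, map_sub, hcomm, sub_apply,
      mul_apply_eq_comp]
    abel
  rw [dist_eq_norm, e]
  have b1 : ‖invSemigroup R τ (R k - a)‖ ≤ ‖R k - a‖ :=
    ((invSemigroup R τ).le_of_opNorm_le (norm_invSemigroup_le_one hR τ) _).trans (by simp)
  have b2 : ‖(R * invSemigroup R τ - R) k‖ ≤ τ * ‖k‖ :=
    ContinuousLinearMap.le_of_opNorm_le _ (norm_mul_invSemigroup_sub_le hR h0) _
  have b3 := norm_add_le ((R k - a) - invSemigroup R τ (R k - a)) ((R * invSemigroup R τ - R) k)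
  have b4 := norm_sub_le (R k - a) (invSemigroup R τ (R k - a))
  linarith

end

/-- Hölder continuity on every interval `[-N, N]`, with exponent and constant depending on `N`. -/
def LocallyHolder (g : ℝ → H) : Prop :=
  ∀ N > (0 : ℝ), ∃ K > (0 : ℝ), ∃ k ∈ Ioc (0 : ℝ) 1,
    ∀ x ∈ Icc (-N) N, ∀ y ∈ Icc (-N) N, ‖g x - g y‖ ≤ K * |x - y| ^ k

theorem LocallyHolder.continuous {g : ℝ → H} (hg : LocallyHolder g) : Continuous g := by
  rw [continuous_iff_continuousAt]
  intro x
  obtain ⟨K, -, k, hk, h⟩ := hg (|x| + 1) (by positivity)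
  have hx : x ∈ Icc (-(|x| + 1)) (|x| + 1) := by
    constructor <;> linarith [neg_abs_le x, le_abs_self x]
  rw [ContinuousAt, tendsto_iff_norm_sub_tendsto_zero]
  have hlim : Tendsto (fun y => K * |y - x| ^ k) (𝓝 x) (𝓝 0) := by
    have : ContinuousAt (fun y => K * |y - x| ^ k) x := by
      refine continuousAt_const.mul (ContinuousAt.rpow_const (by fun_prop) (Or.inr hk.1.le))
    simpa [ContinuousAt, Real.zero_rpow hk.1.ne'] using this
  refine squeeze_zero' (Eventually.of_forall fun _ => norm_nonneg _) ?_ hlim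
  filter_upwards [Metric.ball_mem_nhds x one_pos] with y hy
  rw [Metric.mem_ball, Real.dist_eq, abs_lt] at hy
  refine h y ?_ x hx
  constructor <;> linarith [neg_abs_le x, le_abs_self x]

theorem LocallyHolder.map {g : ℝ → H} (hg : LocallyHolder g) (M : H →L[ℂ] H) :
    LocallyHolder fun x => M (g x) := by
  intro N hN
  obtain ⟨K, hK, k, hk, h⟩ := hg N hN
  refine ⟨(‖M‖ + 1) * K, by positivity, k, hk, fun x hx y hy => ?_⟩
  rw [← map_sub, mul_assoc]
  refine (M.le_opNorm _).trans ?_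
  gcongr
  · linarith
  · exact h x hx y hy

theorem LocallyHolder.comp_neg {g : ℝ → H} (hg : LocallyHolder g) :
    LocallyHolder fun x => g (-x) := by
  intro N hN
  obtain ⟨K, hK, k, hk, h⟩ := hg N hN
  refine ⟨K, hK, k, hk, fun x hx y hy => ?_⟩
  have := h (-x) ⟨by linarith [hx.2], by linarith [hx.1]⟩ (-y) ⟨by linarith [hy.2], by linarith [hy.1]⟩
  rwa [show -x - -y = -(x - y) by ring, abs_neg] at this

/-- The bounded solution `x ↦ ∫₀^∞ exp (-τ R⁻¹) g (x - τ) dτ` of `v' = -R⁻¹ v + g` on the line. -/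
def invConv (R : H →L[ℂ] H) (g : ℝ → H) (x : ℝ) : H :=
  ∫ τ in Ioi (0 : ℝ), invSemigroup R τ (g (x - τ))

/-- The derivative of `invConv R g`. -/
def invConvDeriv (R : H →L[ℂ] H) (g : ℝ → H) (x : ℝ) : H :=
  ∫ τ in Ioi (0 : ℝ), invSemigroupDeriv R τ (g (x - τ) - g x)

section

variable {R : H →L[ℂ] H}

theorem integrableOn_exp_decayRate (C : ℝ) :
    IntegrableOn (fun τ => Real.exp (-(decayRate R * τ)) * C) (Ioi 0) := by
  have := (exp_neg_integrableOn_Ioi 0 (decayRate_pos R)).mul_const C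
  simpa only [neg_mul, IntegrableOn] using this

theorem norm_invSemigroup_apply_le (hR : 0 ≤ R) {γ : H} {C τ : ℝ} (hτ : 0 < τ) (hγ : ‖γ‖ ≤ C) :
    ‖invSemigroup R τ γ‖ ≤ Real.exp (-(decayRate R * τ)) * C :=
  (ContinuousLinearMap.le_of_opNorm_le _ (norm_invSemigroup_le_exp hR hτ) _).trans (by gcongr)

theorem aestronglyMeasurable_invSemigroup_apply (hR : 0 ≤ R) {γ : ℝ → H} (hγ : Continuous γ) :
    AEStronglyMeasurable (fun τ => invSemigroup R τ (γ τ)) (volume.restrict (Ioi 0)) :=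
  ((continuousOn_invSemigroup hR).clm_apply hγ.continuousOn).aestronglyMeasurable
    measurableSet_Ioi

theorem integrableOn_invSemigroup_apply (hR : 0 ≤ R) {γ : ℝ → H} (hγ : Continuous γ) {C : ℝ}
    (hC : ∀ τ, ‖γ τ‖ ≤ C) : IntegrableOn (fun τ => invSemigroup R τ (γ τ)) (Ioi 0) := by
  refine (integrableOn_exp_decayRate (R := R) C).mono'
    (aestronglyMeasurable_invSemigroup_apply hR hγ) ?_
  exact (ae_restrict_iff' measurableSet_Ioi).2
    (Eventually.of_forall fun τ hτ => norm_invSemigroup_apply_le hR hτ (hC τ))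

theorem norm_integral_invSemigroup_apply_le (hR : 0 ≤ R) {γ : ℝ → H} {C : ℝ}
    (hC : ∀ τ, ‖γ τ‖ ≤ C) :
    ‖∫ τ in Ioi (0 : ℝ), invSemigroup R τ (γ τ)‖
      ≤ ∫ τ in Ioi (0 : ℝ), Real.exp (-(decayRate R * τ)) * C := by
  refine norm_integral_le_of_norm_le (integrableOn_exp_decayRate (R := R) C) ?_
  exact (ae_restrict_iff' measurableSet_Ioi).2
    (Eventually.of_forall fun τ hτ => norm_invSemigroup_apply_le hR hτ (hC τ))

/-- Integration by parts against the semigroup. -/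
theorem integral_invSemigroup_apply (hR : 0 ≤ R) {γ γ' : ℝ → H} {C C' : ℝ}
    (hγ : ∀ τ, HasDerivAt γ (γ' τ) τ) (hγ' : Continuous γ') (hC : ∀ τ, ‖γ τ‖ ≤ C)
    (hC' : ∀ τ, ‖γ' τ‖ ≤ C') :
    ∫ τ in Ioi (0 : ℝ), invSemigroup R τ (γ τ)
      = R (γ 0) + R (∫ τ in Ioi (0 : ℝ), invSemigroup R τ (γ' τ)) := by
  have hcont : Continuous γ := continuous_iff_continuousAt.2 fun τ => (hγ τ).continuousAt
  have hi := integrableOn_invSemigroup_apply hR hcont hC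
  have hi' := integrableOn_invSemigroup_apply hR hγ' hC'
  have hRi' : IntegrableOn (fun τ => R (invSemigroup R τ (γ' τ))) (Ioi 0) :=
    R.integrable_comp hi'
  have hfun : ∀ τ ∈ Ioi (0 : ℝ), HasDerivAt (fun τ => (R * invSemigroup R τ) (γ τ))
      (-invSemigroup R τ (γ τ) + R (invSemigroup R τ (γ' τ))) τ := by
    intro τ hτ
    have := ((ContinuousLinearMap.restrictScalarsL ℂ H H ℝ ℝ).hasFDerivAt.comp_hasDerivAt τ
      (hasDerivAt_mul_invSemigroup hR hτ)).clm_apply (hγ τ)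
    simpa using this
  have h0 : ContinuousWithinAt (fun τ => (R * invSemigroup R τ) (γ τ)) (Ici 0) 0 := by
    refine ContinuousWithinAt.clm_apply ?_ hcont.continuousWithinAt
    rw [ContinuousWithinAt, invSemigroup_zero, mul_one, tendsto_iff_norm_sub_tendsto_zero]
    refine squeeze_zero' (g := fun τ => τ) (Eventually.of_forall fun _ => norm_nonneg _) ?_
      (tendsto_nhdsWithin_of_tendsto_nhds tendsto_id)
    filter_upwards [self_mem_nhdsWithin] with τ hτ using norm_mul_invSemigroup_sub_le hR hτ
  have hlim : Tendsto (fun τ => (R * invSemigroup R τ) (γ τ)) atTop (𝓝 0) := by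
    have hexp : Tendsto (fun τ => ‖R‖ * (Real.exp (-(decayRate R * τ)) * C)) atTop (𝓝 0) := by
      have h1 : Tendsto (fun τ => decayRate R * τ) atTop atTop :=
        tendsto_id.const_mul_atTop (decayRate_pos R)
      have h2 := ((Real.tendsto_exp_neg_atTop_nhds_zero.comp h1).mul_const C).const_mul ‖R‖
      simpa using h2
    refine squeeze_zero_norm' ?_ hexp
    filter_upwards [Ioi_mem_atTop (0 : ℝ)] with τ hτ
    exact (R.le_opNorm _).trans (mul_le_mul_of_nonneg_left
      (norm_invSemigroup_apply_le hR hτ (hC τ)) (norm_nonneg _))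
  have key := integral_Ioi_of_hasDerivAt_of_tendsto h0 hfun (hi.neg.add hRi') hlim
  rw [integral_add (f := fun τ => -invSemigroup R τ (γ τ)) hi.neg hRi', integral_neg,
    R.integral_comp_comm hi', invSemigroup_zero,
    mul_one, zero_sub] at key
  rw [← sub_eq_zero] at key ⊢
  rw [← neg_eq_zero, ← key]
  abel

variable {g : ℝ → H} {C : ℝ}

theorem norm_invConv_le (hR : 0 ≤ R) (hC : ∀ x, ‖g x‖ ≤ C) (x : ℝ) :
    ‖invConv R g x‖ ≤ ∫ τ in Ioi (0 : ℝ), Real.exp (-(decayRate R * τ)) * C :=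
  norm_integral_invSemigroup_apply_le hR fun τ => hC (x - τ)

theorem continuous_invConv (hR : 0 ≤ R) (hg : Continuous g) (hC : ∀ x, ‖g x‖ ≤ C) :
    Continuous (invConv R g) := by
  refine continuous_of_dominated (bound := fun τ => Real.exp (-(decayRate R * τ)) * C)
    (fun x => aestronglyMeasurable_invSemigroup_apply hR (by fun_prop)) (fun x => ?_)
    (integrableOn_exp_decayRate C) (Eventually.of_forall fun τ => by fun_prop)
  exact (ae_restrict_iff' measurableSet_Ioi).2
    (Eventually.of_forall fun τ hτ => norm_invSemigroup_apply_le hR hτ (hC _))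

/-- Local domination of the integrand of `invConvDeriv`. -/
theorem exists_invSemigroupDeriv_bound (hR : 0 ≤ R) (hg : LocallyHolder g) (hC : ∀ x, ‖g x‖ ≤ C)
    (x₀ : ℝ) : ∃ bound : ℝ → ℝ, IntegrableOn bound (Ioi 0) ∧
      ∀ x ∈ Metric.ball x₀ 1, ∀ τ ∈ Ioi (0 : ℝ),
        ‖invSemigroupDeriv R τ (g (x - τ) - g x)‖ ≤ bound τ := by
  obtain ⟨K, hK, k, hk, h⟩ := hg (|x₀| + 2) (by positivity)
  have hC0 : 0 ≤ C := (norm_nonneg _).trans (hC 0)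
  have hd := decayRate_pos R
  have hd2 := half_pos hd
  refine ⟨fun τ => (Ioc (0 : ℝ) 1).indicator (fun τ => 2 * K * τ ^ (k - 1)) τ
    + 4 * C * Real.exp (-(decayRate R / 2) * τ), ?_, ?_⟩
  · refine Integrable.add ?_ ((exp_neg_integrableOn_Ioi 0 hd2).const_mul _)
    refine IntegrableOn.integrable_indicator ?_ measurableSet_Ioc |>.integrableOn
    have := intervalIntegral.intervalIntegrable_rpow' (a := 0) (b := 1) (r := k - 1)
      (by linarith [hk.1])
    rw [intervalIntegrable_iff_integrableOn_Ioc_of_le zero_le_one] at this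
    exact this.const_mul _
  · intro x hx τ hτ
    rw [mem_Ioi] at hτ
    rw [Metric.mem_ball, Real.dist_eq, abs_lt] at hx
    have hn := norm_invSemigroupDeriv_le hR hτ
    have hle := ContinuousLinearMap.le_of_opNorm_le _ hn (g (x - τ) - g x)
    have he1 : Real.exp (-(decayRate R / 2 * τ)) ≤ 1 :=
      Real.exp_le_one_iff.2 (by have := mul_pos hd2 hτ; linarith)
    refine hle.trans ?_
    beta_reduce
    rcases le_or_gt τ 1 with h1 | h1
    · rw [indicator_of_mem (show τ ∈ Ioc (0 : ℝ) 1 from ⟨hτ, h1⟩)]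
      have hh := h (x - τ) ⟨by linarith [neg_abs_le x₀], by linarith [le_abs_self x₀]⟩ x
        ⟨by linarith [neg_abs_le x₀], by linarith [le_abs_self x₀]⟩
      rw [show x - τ - x = -τ by ring, abs_neg, abs_of_pos hτ] at hh
      calc 2 * τ⁻¹ * Real.exp (-(decayRate R / 2 * τ)) * ‖g (x - τ) - g x‖
          ≤ 2 * τ⁻¹ * 1 * (K * τ ^ k) := by gcongr
        _ = 2 * K * τ ^ (k - 1) := by
          rw [Real.rpow_sub_one hτ.ne']
          field_simp
        _ ≤ _ := by
          have : 0 ≤ 4 * C * Real.exp (-(decayRate R / 2) * τ) := by positivity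
          linarith
    · rw [indicator_of_notMem (fun hm : τ ∈ Ioc (0 : ℝ) 1 => h1.not_ge hm.2), zero_add]
      have hgg : ‖g (x - τ) - g x‖ ≤ 2 * C :=
        (norm_sub_le _ _).trans (by linarith [hC (x - τ), hC x])
      have hinv : τ⁻¹ ≤ 1 := inv_le_one_of_one_le₀ h1.le
      calc 2 * τ⁻¹ * Real.exp (-(decayRate R / 2 * τ)) * ‖g (x - τ) - g x‖
          ≤ 2 * 1 * Real.exp (-(decayRate R / 2 * τ)) * (2 * C) := by gcongr
        _ = _ := by rw [neg_mul]; ring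

theorem aestronglyMeasurable_invSemigroupDeriv_apply (hR : 0 ≤ R) (hg : Continuous g) (x : ℝ) :
    AEStronglyMeasurable (fun τ => invSemigroupDeriv R τ (g (x - τ) - g x))
      (volume.restrict (Ioi 0)) :=
  ((continuousOn_invSemigroupDeriv hR).clm_apply
    (by fun_prop : Continuous fun τ => g (x - τ) - g x).continuousOn).aestronglyMeasurable
    measurableSet_Ioi

theorem continuous_invConvDeriv (hR : 0 ≤ R) (hg : LocallyHolder g) (hC : ∀ x, ‖g x‖ ≤ C) :
    Continuous (invConvDeriv R g) := by
  have hgc := hg.continuous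
  rw [continuous_iff_continuousAt]
  intro x₀
  obtain ⟨bound, hb, hle⟩ := exists_invSemigroupDeriv_bound hR hg hC x₀
  refine continuousAt_of_dominated
    (Eventually.of_forall fun x => aestronglyMeasurable_invSemigroupDeriv_apply hR hgc x) ?_ hb
    (Eventually.of_forall fun τ => by fun_prop)
  filter_upwards [Metric.ball_mem_nhds x₀ one_pos] with x hx
  exact (ae_restrict_iff' measurableSet_Ioi).2 (Eventually.of_forall fun τ hτ => hle x hx τ hτ)

theorem apply_invConvDeriv (hR : 0 ≤ R) (hg : LocallyHolder g) (hC : ∀ x, ‖g x‖ ≤ C) (x : ℝ) :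
    invConv R g x = R (g x - invConvDeriv R g x) := by
  have hgc := hg.continuous
  obtain ⟨bound, hb, hle⟩ := exists_invSemigroupDeriv_bound hR hg hC x
  have hi : IntegrableOn (fun τ => invSemigroupDeriv R τ (g (x - τ) - g x)) (Ioi 0) :=
    hb.mono' (aestronglyMeasurable_invSemigroupDeriv_apply hR hgc x)
      ((ae_restrict_iff' measurableSet_Ioi).2
        (Eventually.of_forall fun τ hτ => hle x (Metric.mem_ball_self one_pos) τ hτ))
  have hconst := integral_invSemigroup_apply hR (γ := fun _ => g x) (γ' := fun _ => 0) (C := C)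
    (C' := 0) (fun τ => hasDerivAt_const τ _) continuous_const (fun _ => hC x) (by simp)
  simp only [map_zero, integral_zero, add_zero] at hconst
  have e : R (invConvDeriv R g x)
      = ∫ τ in Ioi (0 : ℝ), (invSemigroup R τ (g x) - invSemigroup R τ (g (x - τ))) := by
    rw [invConvDeriv, ← R.integral_comp_comm hi]
    refine setIntegral_congr_fun measurableSet_Ioi fun τ hτ => ?_
    have := congrArg (fun M : H →L[ℂ] H => M (g (x - τ) - g x)) (mul_invSemigroupDeriv hR hτ)
    simpa using this
  rw [integral_sub (integrableOn_invSemigroup_apply hR continuous_const fun _ => hC x)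
    (integrableOn_invSemigroup_apply hR (by fun_prop) fun τ => hC (x - τ)), hconst] at e
  rw [map_sub, e, invConv]
  abel

theorem hasDerivAt_integral_window (hg : Continuous g) (x τ : ℝ) :
    HasDerivAt (fun x => ∫ s in (-τ)..(x - τ), g s) (g (x - τ)) x := by
  have h := (intervalIntegral.integral_hasDerivAt_right (hg.intervalIntegrable (-τ) (x - τ))
    (hg.stronglyMeasurableAtFilter _ _) hg.continuousAt)
  simpa [Function.comp_def] using h.scomp x ((hasDerivAt_id x).sub_const τ)

theorem hasDerivAt_integral_window_left (hg : Continuous g) (x τ : ℝ) :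
    HasDerivAt (fun τ => ∫ s in (-τ)..(x - τ), g s) (g (-τ) - g (x - τ)) τ := by
  have hG : ∀ y, HasDerivAt (fun y => ∫ s in (0 : ℝ)..y, g s) (g y) y := fun y =>
    intervalIntegral.integral_hasDerivAt_right (hg.intervalIntegrable 0 y)
      (hg.stronglyMeasurableAtFilter _ _) hg.continuousAt
  have h1 := (hG (x - τ)).scomp τ ((hasDerivAt_id τ).const_sub x)
  have h2 := (hG (-τ)).scomp τ (hasDerivAt_neg τ)
  have h3 := h1.sub h2
  refine (h3.congr_deriv ?_).congr_of_eventuallyEq (Eventually.of_forall fun y => ?_)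
  · simp only [neg_smul, one_smul]
    abel
  · simp only [Pi.sub_apply, Function.comp]
    rw [intervalIntegral.integral_interval_sub_left (hg.intervalIntegrable _ _)
      (hg.intervalIntegrable _ _)]

theorem norm_integral_window_le (hC : ∀ x, ‖g x‖ ≤ C) (x τ : ℝ) :
    ‖∫ s in (-τ)..(x - τ), g s‖ ≤ C * |x| := by
  have := intervalIntegral.norm_integral_le_of_norm_le_const (a := -τ) (b := x - τ)
    (f := g) (C := C) fun s _ => hC s
  simpa using this

theorem hasDerivAt_integral_invSemigroup_window (hR : 0 ≤ R) (hg : Continuous g)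
    (hC : ∀ x, ‖g x‖ ≤ C) (x : ℝ) :
    HasDerivAt (fun x => ∫ τ in Ioi (0 : ℝ), invSemigroup R τ (∫ s in (-τ)..(x - τ), g s))
      (invConv R g x) x := by
  have hcont : ∀ x, Continuous fun τ => ∫ s in (-τ)..(x - τ), g s := fun x =>
    continuous_iff_continuousAt.2 fun τ => (hasDerivAt_integral_window_left hg x τ).continuousAt
  refine (hasDerivAt_integral_of_dominated_loc_of_deriv_le (s := univ)
    (F' := fun x τ => invSemigroup R τ (g (x - τ)))
    (bound := fun τ => Real.exp (-(decayRate R * τ)) * C) univ_mem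
    (Eventually.of_forall fun x => aestronglyMeasurable_invSemigroup_apply hR (hcont x))
    (integrableOn_invSemigroup_apply hR (hcont x) fun τ => norm_integral_window_le hC x τ)
    (aestronglyMeasurable_invSemigroup_apply hR (by fun_prop))
    ?_ (integrableOn_exp_decayRate C) (Eventually.of_forall fun τ x _ => ?_)).2
  · exact (ae_restrict_iff' measurableSet_Ioi).2
      (Eventually.of_forall fun τ hτ x _ => norm_invSemigroup_apply_le hR hτ (hC _))
  · exact ((invSemigroup R τ).restrictScalars ℝ).hasFDerivAt.comp_hasDerivAt x
      (hasDerivAt_integral_window hg x τ)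

theorem hasDerivAt_invConv (hR : 0 ≤ R) (hinj : Function.Injective R) (hg : LocallyHolder g)
    (hC : ∀ x, ‖g x‖ ≤ C) (x : ℝ) :
    HasDerivAt (invConv R g) (invConvDeriv R g x) x := by
  have hgc := hg.continuous
  have hvc := continuous_invConv hR hgc hC
  have hwc := continuous_invConvDeriv hR hg hC
  have hprim : ∀ y, invConv R g y = invConv R g 0 + ∫ s in (0 : ℝ)..y, invConvDeriv R g s := by
    intro y
    apply hinj
    have hparts := integral_invSemigroup_apply hR
      (fun τ => hasDerivAt_integral_window_left hgc y τ) (by fun_prop)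
      (fun τ => norm_integral_window_le hC y τ) (C' := 2 * C)
      (fun τ => (norm_sub_le _ _).trans (by linarith [hC (-τ), hC (y - τ)]))
    simp only [map_sub, neg_zero, sub_zero] at hparts
    rw [integral_sub (integrableOn_invSemigroup_apply hR (by fun_prop) fun τ => hC (-τ))
      (integrableOn_invSemigroup_apply hR (by fun_prop) fun τ => hC (y - τ))] at hparts
    have hftc := intervalIntegral.integral_eq_sub_of_hasDerivAt (a := 0) (b := y)
      (fun z _ => hasDerivAt_integral_invSemigroup_window hR hgc hC z)
      (hvc.intervalIntegrable _ _)
    simp only [zero_sub, intervalIntegral.integral_same, map_zero, integral_zero, sub_zero]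
      at hftc
    have hfubini : ∫ z in (0 : ℝ)..y, invConv R g z
        = R ((∫ s in (0 : ℝ)..y, g s) - ∫ s in (0 : ℝ)..y, invConvDeriv R g s) := by
      rw [← intervalIntegral.integral_sub (hgc.intervalIntegrable _ _)
        (hwc.intervalIntegrable _ _), ← R.intervalIntegral_comp_comm
        ((hgc.intervalIntegrable _ _).sub (hwc.intervalIntegrable _ _))]
      exact intervalIntegral.integral_congr fun z _ => apply_invConvDeriv hR hg hC z
    have h0 : invConv R g 0 = ∫ τ in Ioi (0 : ℝ), invSemigroup R τ (g (-τ)) := by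
      simp only [invConv, zero_sub]
    rw [← hftc, hfubini, ← h0, ← invConv, map_sub, map_sub] at hparts
    rw [map_add]
    have := sub_eq_zero.2 hparts
    rw [← sub_eq_zero, ← this]
    abel
  rw [funext hprim]
  exact (intervalIntegral.integral_hasDerivAt_right (hwc.intervalIntegrable 0 x)
    (hwc.stronglyMeasurableAtFilter _ _) hwc.continuousAt).const_add _

theorem map_invConv_of_commute (hR : 0 ≤ R) {M : H →L[ℂ] H} (hM : Commute R M)
    (hg : Continuous g) (hC : ∀ x, ‖g x‖ ≤ C) (x : ℝ) :
    M (invConv R g x) = invConv R (fun y => M (g y)) x := by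
  rw [invConv, ← M.integral_comp_comm
    (integrableOn_invSemigroup_apply hR (by fun_prop) fun τ => hC (x - τ)), invConv]
  refine integral_congr_ae (Eventually.of_forall fun τ => ?_)
  exact (congrArg (fun N : H →L[ℂ] H => N (g (x - τ))) (hM.invSemigroup τ).eq).symm

end

/-- The sign `Q` of an invertible self-adjoint `W` satisfies `T Q ≥ 0` whenever `W T ≥ 0`. -/
theorem exists_sign_operator {W T : H →L[ℂ] H} (hW : IsSelfAdjoint W) (hWu : IsUnit W)
    (hT : IsSelfAdjoint T) (hWT : 0 ≤ W * T) :
    ∃ Q : H →L[ℂ] H, IsSelfAdjoint Q ∧ Q * Q = 1 ∧ Commute Q T ∧ Commute Q W ∧ 0 ≤ T * Q ∧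
      W ≤ W * Q := by
  have hcomm : Commute W T := by
    have h : star (W * T) = W * T := IsSelfAdjoint.of_nonneg hWT
    rw [star_mul, hW.star_eq, hT.star_eq] at h
    exact h.symm
  have hne : ∀ x ∈ spectrum ℝ W, x ≠ 0 := by
    rintro x hx rfl
    exact spectrum.zero_notMem ℝ hWu hx
  have hs : ContinuousOn (fun x : ℝ => x * |x|⁻¹) (spectrum ℝ W) :=
    continuousOn_id.mul (continuousOn_id.abs.inv₀ fun x hx => abs_ne_zero.2 (hne x hx))
  have hm : ContinuousOn (fun x : ℝ => (√|x|)⁻¹) (spectrum ℝ W) :=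
    (continuousOn_id.abs.sqrt).inv₀ fun x hx => (Real.sqrt_pos.2 (abs_pos.2 (hne x hx))).ne'
  set Q := cfc (fun x : ℝ => x * |x|⁻¹) W with hQ
  set M := cfc (fun x : ℝ => (√|x|)⁻¹) W with hM
  have hQT : Commute Q T := hcomm.cfc_real _
  have hMT : Commute M T := hcomm.cfc_real _
  have hWMM : W * (M * M) = Q := by
    rw [hM, ← cfc_mul _ _ W hm hm]
    nth_rewrite 1 [← cfc_id' ℝ W]
    rw [← cfc_mul (fun x : ℝ => x) (fun x => (√|x|)⁻¹ * (√|x|)⁻¹) W (by fun_prop) (hm.mul hm)]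
    refine cfc_congr fun x _ => ?_
    rw [← mul_inv, Real.mul_self_sqrt (abs_nonneg x)]
  refine ⟨Q, cfc_predicate _ _, ?_, hQT, (Commute.refl W).cfc_real _, ?_, ?_⟩
  · rw [hQ, ← cfc_mul _ _ W hs hs, ← cfc_one ℝ W]
    refine cfc_congr fun x hx => ?_
    have := abs_ne_zero.2 (hne x hx)
    have h2 : x * x = |x| * |x| := (abs_mul_abs_self x).symm
    simp only [Pi.one_apply]
    field_simp
    nlinarith
  · have hMsa : IsSelfAdjoint M := cfc_predicate _ _
    have h := hMsa.conjugate_nonneg hWT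
    have hMW : Commute M W := (Commute.refl W).cfc_real _
    have e : M * (W * T) * M = T * Q := by
      rw [← hWMM, hcomm.eq, ← mul_assoc, hMT.eq, mul_assoc, mul_assoc, ← mul_assoc M,
        hMW.eq, mul_assoc]
    rwa [e] at h
  · have e : W * Q = cfc (fun x : ℝ => x * (x * |x|⁻¹)) W := by
      rw [cfc_mul (fun x : ℝ => x) _ W (by fun_prop) hs, cfc_id' ℝ W]
    rw [e]
    nth_rewrite 1 [← cfc_id' ℝ W]
    refine cfc_mono (fun x hx => ?_) (by fun_prop) (continuousOn_id.mul hs)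
    have := abs_ne_zero.2 (hne x hx)
    have h2 : x * (x * |x|⁻¹) = |x| := by
      field_simp
      exact (sq_abs x).symm
    rw [h2]
    exact le_abs_self x

/-- Solvability of the boundary condition on the spectral subspace `Q a = a`. -/
theorem exists_apply_symm_eq (S : H ≃L[ℂ] H) {P W Q : H →L[ℂ] H}
    (hP : IsSelfAdjoint P) (hPP : P * P = P)
    (hPW : ∀ φ, P φ = φ → W (S φ) = ContinuousLinearMap.adjoint (S.symm : H →L[ℂ] H) φ)
    (hQ : IsSelfAdjoint Q) (hQQ : Q * Q = 1) (hQW : Commute Q W) (hWQ : W ≤ W * Q)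
    {η : H} (hη : P η = η) : ∃ a, Q a = a ∧ P (S.symm a) = η := by
  set E : H →L[ℂ] H := (2⁻¹ : ℂ) • (1 + Q) with hE
  have hQE : ∀ z, Q (E z) = E z := fun z => by
    have := congrArg (fun M : H →L[ℂ] H => M z) hQQ
    simp only [mul_apply_eq_comp, one_apply_eq_self] at this
    simp [hE, this, add_comm]
  have hEsa : IsSelfAdjoint E := by
    rw [hE]
    refine IsSelfAdjoint.smul ?_ ((IsSelfAdjoint.one _).add hQ)
    simp [IsSelfAdjoint]
  have hEW : Commute E W := ((Commute.one_left W).add_left hQW).smul_left _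
  set C : H →L[ℂ] H := P * (S.symm : H →L[ℂ] H) * E with hC
  have hCadj : ∀ z, star C z = E (star (S.symm : H →L[ℂ] H) (P z)) := fun z => by
    rw [hC, star_mul, star_mul, hEsa.star_eq, hP.star_eq]
    rfl
  have hPPz : ∀ z, P (P z) = P z := fun z => congrArg (fun M : H →L[ℂ] H => M z) hPP
  have hbelow : ∀ z, ‖P z‖ ≤ ‖(S : H →L[ℂ] H)‖ * ‖star C z‖ := by
    intro z
    set φ := P z with hφ
    have hWφ := hPW φ (hPPz z)
    have h1 : RCLike.re ⟪W (S φ), S φ⟫_ℂ ≤ RCLike.re ⟪(W * E) (S φ), S φ⟫_ℂ := by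
      have hpos := (((ContinuousLinearMap.le_def _ _).1 hWQ).re_inner_nonneg_left (S φ))
      have e : ⟪(W * E) (S φ), S φ⟫_ℂ
          = ⟪W (S φ), S φ⟫_ℂ + (2⁻¹ : ℂ) * ⟪(W * Q - W) (S φ), S φ⟫_ℂ := by
        simp only [hE, mul_apply_eq_comp, smul_apply, add_apply, one_apply_eq_self, map_smul,
          map_add, sub_apply, inner_smul_left, inner_add_left, inner_sub_left, map_inv₀,
          map_ofNat]
        ring
      have hre : ((2⁻¹ : ℂ) * ⟪(W * Q - W) (S φ), S φ⟫_ℂ).re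
          = 2⁻¹ * (⟪(W * Q - W) (S φ), S φ⟫_ℂ).re := by
        rw [show (2⁻¹ : ℂ) = ((2⁻¹ : ℝ) : ℂ) by push_cast; rfl, Complex.re_ofReal_mul]
      rw [e, map_add]
      change _ ≤ _ + ((2⁻¹ : ℂ) * ⟪(W * Q - W) (S φ), S φ⟫_ℂ).re
      rw [hre]
      have : 0 ≤ (⟪(W * Q - W) (S φ), S φ⟫_ℂ).re := hpos
      linarith
    have h2 : ⟪W (S φ), S φ⟫_ℂ = ⟪φ, φ⟫_ℂ := by
      rw [hWφ, ContinuousLinearMap.adjoint_inner_left]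
      simp
    have h3 : (W * E) (S φ) = star C z := by
      rw [← hEW.eq, hCadj, mul_apply_eq_comp, hWφ]
      rfl
    rw [h2, h3, inner_self_eq_norm_sq] at h1
    have h4 : RCLike.re ⟪star C z, S φ⟫_ℂ ≤ ‖star C z‖ * (‖(S : H →L[ℂ] H)‖ * ‖φ‖) :=
      (RCLike.re_le_norm _).trans ((norm_inner_le_norm _ _).trans
        (mul_le_mul_of_nonneg_left ((S : H →L[ℂ] H).le_opNorm φ) (norm_nonneg _)))
    rcases (norm_nonneg φ).eq_or_lt with h0 | h0
    · rw [← h0]; positivity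
    · refine le_of_mul_le_mul_right ?_ h0
      nlinarith
  set V : H →L[ℂ] H := C * star C + (1 - P) with hV
  have hsplit : ∀ z, ‖z‖ ^ 2 = ‖P z‖ ^ 2 + ‖z - P z‖ ^ 2 := by
    intro z
    have horth : ⟪P z, z - P z⟫_ℂ = 0 := by
      rw [← ContinuousLinearMap.adjoint_inner_right, hP.adjoint_eq, map_sub, hPPz, sub_self,
        inner_zero_right]
    have := norm_add_sq_eq_norm_sq_add_norm_sq_of_inner_eq_zero (P z) (z - P z) horth
    rw [add_sub_cancel] at this
    nlinarith
  have hVinner : ∀ z, ⟪V z, z⟫_ℂ = ((‖star C z‖ ^ 2 + ‖z - P z‖ ^ 2 : ℝ) : ℂ) := by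
    intro z
    have h1 : ⟪C (star C z), z⟫_ℂ = ((‖star C z‖ ^ 2 : ℝ) : ℂ) := by
      rw [← ContinuousLinearMap.adjoint_inner_right, ← ContinuousLinearMap.star_eq_adjoint,
        inner_self_eq_norm_sq_to_K]
      push_cast; rfl
    have h2 : ⟪z - P z, z⟫_ℂ = ((‖z - P z‖ ^ 2 : ℝ) : ℂ) := by
      have h3 : ⟪z - P z, P z⟫_ℂ = 0 := by
        rw [← ContinuousLinearMap.adjoint_inner_left, hP.adjoint_eq, map_sub, hPPz, sub_self,
          inner_zero_left]
      have h4 : ⟪z - P z, z⟫_ℂ = ⟪z - P z, z - P z⟫_ℂ := by rw [inner_sub_right, h3, sub_zero]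
      rw [h4, inner_self_eq_norm_sq_to_K]
      push_cast; rfl
    rw [hV, add_apply, inner_add_left, mul_apply_eq_comp, sub_apply, one_apply_eq_self, h1, h2]
    push_cast; rfl
  have hunit : IsUnit V := by
    set s := ‖(S : H →L[ℂ] H)‖ with hs
    have hc : 0 < (s ^ 2 + 1)⁻¹ := by positivity
    refine ContinuousLinearMap.isUnit_of_forall_le_norm_inner_map V
      (c := ⟨(s ^ 2 + 1)⁻¹, hc.le⟩) hc fun z => ?_
    rw [hVinner, Complex.norm_real, Real.norm_of_nonneg (by positivity)]
    change ‖z‖ ^ 2 * (s ^ 2 + 1)⁻¹ ≤ _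
    rw [← div_eq_mul_inv, div_le_iff₀ (by positivity), hsplit z]
    have h1 : ‖P z‖ ^ 2 ≤ (s * ‖star C z‖) ^ 2 := by gcongr; exact hbelow z
    nlinarith [sq_nonneg ‖star C z‖, mul_nonneg (sq_nonneg s) (sq_nonneg ‖z - P z‖)]
  obtain ⟨u, hu⟩ := hunit
  have hz : V ((↑u⁻¹ : H →L[ℂ] H) η) = η := by
    rw [← hu, ← mul_apply_eq_comp, Units.mul_inv, one_apply_eq_self]
  set z := (↑u⁻¹ : H →L[ℂ] H) η
  refine ⟨E (star C z), hQE _, ?_⟩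
  have h1 : P (V z) = C (star C z) := by
    rw [hV, add_apply, sub_apply, one_apply_eq_self, mul_apply_eq_comp, map_add, map_sub, hPPz,
      sub_self, add_zero, hC]
    exact hPPz _
  rw [hz, hη] at h1
  exact h1.symm

/-- The bounded solutions of `χ = T (g - χ')` on the half-line, parametrized by the spectral
subspace `Q a = a`. -/
theorem exists_bounded_solution {T Q : H →L[ℂ] H} (hQQ : Q * Q = 1) (hQT : Commute Q T)
    (hTQ : 0 ≤ T * Q) (hTinj : Function.Injective T) {g : ℝ → H} (hg : LocallyHolder g) {C : ℝ}
    (hC : ∀ x, ‖g x‖ ≤ C) :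
    ∃ b, ∀ a, Q a = a → ∃ χ χ' : ℝ → H, ContinuousOn χ (Ici 0) ∧ ContinuousOn χ' (Ioi 0) ∧
      (∀ x ∈ Ioi (0 : ℝ), HasDerivAt χ (χ' x) x ∧ χ x = T (g x - χ' x)) ∧ χ 0 = a + b ∧
      ∃ D : ℝ, ∀ x ∈ Ici (0 : ℝ), ‖χ x‖ ≤ D := by
  set R := T * Q with hRdef
  have hQQz : ∀ z, Q (Q z) = z := fun z => congrArg (fun M : H →L[ℂ] H => M z) hQQ
  have hRinj : Function.Injective R := hTinj.comp (fun x y h => by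
    have h' : Q x = Q y := h
    rw [← hQQz x, h', hQQz])
  have hRQ : Commute R Q := (hQT.symm).mul_left (Commute.refl Q)
  have hT : ∀ z, T z = R (Q z) := fun z => by
    rw [hRdef, mul_apply_eq_comp, hQQz]
  set E : H →L[ℂ] H := (2⁻¹ : ℂ) • (1 + Q) with hE
  set F : H →L[ℂ] H := (2⁻¹ : ℂ) • (1 - Q) with hF
  have hQE : ∀ z, Q (E z) = E z := fun z => by simp [hE, hQQz, add_comm]
  have hQF : ∀ z, Q (F z) = -F z := fun z => by
    simp only [hF, smul_apply, sub_apply, one_apply_eq_self, map_smul, map_sub, hQQz,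
      ← smul_neg, neg_sub]
  have hEF : ∀ z, E z + F z = z := fun z => by
    simp only [hE, hF, smul_apply, sub_apply, add_apply, one_apply_eq_self, ← smul_add,
      add_add_sub_cancel, ← two_smul ℂ z, smul_smul]
    norm_num
  have hCE : ∀ x, ‖E (g x)‖ ≤ ‖E‖ * C := fun x =>
    (E.le_opNorm _).trans (mul_le_mul_of_nonneg_left (hC x) (norm_nonneg _))
  have hCF : ∀ x, ‖F (g (-x))‖ ≤ ‖F‖ * C := fun x =>
    (F.le_opNorm _).trans (mul_le_mul_of_nonneg_left (hC _) (norm_nonneg _))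
  have hgE : LocallyHolder fun x => E (g x) := hg.map E
  have hgF : LocallyHolder fun x => F (g (-x)) := hg.comp_neg.map F
  set p := invConv R fun x => E (g x) with hp
  set p' := invConvDeriv R fun x => E (g x) with hp'
  set m := invConv R fun x => F (g (-x)) with hm
  set m' := invConvDeriv R fun x => F (g (-x)) with hm'
  have hQp : ∀ x, Q (p x) = p x := fun x => by
    rw [hp, map_invConv_of_commute hTQ hRQ hgE.continuous hCE]
    simp only [hQE]
  have hQm : ∀ x, Q (m x) = -m x := fun x => by
    rw [hm, map_invConv_of_commute hTQ hRQ hgF.continuous hCF]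
    simp only [hQF, invConv, map_neg, integral_neg]
  have hdp : ∀ x, HasDerivAt p (p' x) x := hasDerivAt_invConv hTQ hRinj hgE hCE
  have hdm : ∀ x, HasDerivAt m (m' x) x := hasDerivAt_invConv hTQ hRinj hgF hCF
  have hQd : ∀ {u u' : ℝ → H} (x : ℝ), HasDerivAt u (u' x) x →
      HasDerivAt (fun y => Q (u y)) (Q (u' x)) x := fun x h =>
    (Q.restrictScalars ℝ).hasFDerivAt.comp_hasDerivAt x h
  have hQp' : ∀ x, Q (p' x) = p' x := fun x => by
    have h := hQd x (hdp x)
    simp only [hQp] at h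
    exact h.unique (hdp x)
  have hQm' : ∀ x, Q (m' x) = -m' x := fun x => by
    have h := hQd x (hdm x)
    simp only [hQm] at h
    exact h.unique (hdm x).neg
  refine ⟨p 0 - m 0, fun a ha => ⟨fun x => invSemigroup R x a + p x - m (-x),
    fun x => invSemigroupDeriv R x a + p' x + m' (-x), ?_, ?_, ?_, ?_, ?_⟩⟩
  · have hpc : Continuous p := continuous_invConv hTQ hgE.continuous hCE
    have hmc : Continuous m := continuous_invConv hTQ hgF.continuous hCF
    refine ContinuousOn.sub (ContinuousOn.add ?_ hpc.continuousOn)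
      (hmc.comp continuous_neg).continuousOn
    intro x hx
    rcases (mem_Ici.1 hx).eq_or_lt with rfl | hx
    · exact continuousWithinAt_invSemigroup_zero hTQ hRinj a
    · exact ((hasDerivAt_invSemigroup hTQ hx).continuousAt.clm_apply
        continuousAt_const).continuousWithinAt
  · have hpc : Continuous p' := continuous_invConvDeriv hTQ hgE hCE
    have hmc : Continuous m' := continuous_invConvDeriv hTQ hgF hCF
    exact (((continuousOn_invSemigroupDeriv hTQ).clm_apply continuousOn_const).add
      hpc.continuousOn).add (hmc.comp continuous_neg).continuousOn
  · intro x hx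
    constructor
    · have h1 : HasDerivAt (fun x => invSemigroup R x a) (invSemigroupDeriv R x a) x := by
        have := ((ContinuousLinearMap.restrictScalarsL ℂ H H ℝ ℝ).hasFDerivAt.comp_hasDerivAt x
          (hasDerivAt_invSemigroup hTQ hx)).clm_apply (hasDerivAt_const x a)
        simpa using this
      have h2 : HasDerivAt (fun x => m (-x)) (-m' (-x)) x := by
        simpa [Function.comp_def] using (hdm (-x)).scomp x (hasDerivAt_neg x)
      have h3 := (h1.add (hdp x)).sub h2
      rw [sub_neg_eq_add] at h3
      exact h3
    · have hD : R (invSemigroupDeriv R x a) = -invSemigroup R x a :=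
        congrArg (fun M : H →L[ℂ] H => M a) (mul_invSemigroupDeriv hTQ hx)
      have hQD : Q (invSemigroupDeriv R x a) = invSemigroupDeriv R x a := by
        have := congrArg (fun M : H →L[ℂ] H => M a) (hRQ.invSemigroupDeriv x).eq
        simp only [mul_apply_eq_comp, ha] at this
        exact this.symm
      have h1 : p x = R (E (g x) - p' x) := apply_invConvDeriv hTQ hgE hCE x
      have h2 : m (-x) = R (F (g (- -x)) - m' (-x)) := apply_invConvDeriv hTQ hgF hCF (-x)
      rw [neg_neg] at h2
      have hQg : Q (g x) = E (g x) - F (g x) := by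
        conv_lhs => rw [← hEF (g x)]
        rw [map_add, hQE, hQF, sub_eq_add_neg]
      rw [hT]
      simp only [map_sub, map_add, hQg, hQD, hQp', hQm', hD, map_neg] at h1 h2 ⊢
      rw [h1, h2]
      abel
  · simp only [invSemigroup_zero, one_apply_eq_self, neg_zero]
    abel
  · refine ⟨‖a‖ + (∫ τ in Ioi (0 : ℝ), Real.exp (-(decayRate R * τ)) * (‖E‖ * C))
      + ∫ τ in Ioi (0 : ℝ), Real.exp (-(decayRate R * τ)) * (‖F‖ * C), fun x _ => ?_⟩
    refine (norm_sub_le _ _).trans (add_le_add ((norm_add_le _ _).trans (add_le_add ?_ ?_)) ?_)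
    · exact ((invSemigroup R x).le_of_opNorm_le (norm_invSemigroup_le_one hTQ x) a).trans
        (by rw [one_mul])
    · exact norm_invConv_le hTQ hCE x
    · exact norm_invConv_le hTQ hCF (-x)

theorem LinearPMap.inner_apply_left_of_isSelfAdjoint {A : H →ₗ.[ℂ] H} (hA : IsSelfAdjoint A)
    (x y : A.domain) : ⟪A x, (y : H)⟫_ℂ = ⟪(x : H), A y⟫_ℂ := by
  have h := LinearPMap.adjoint_isFormalAdjoint (T := A) hA.dense_domain
  rw [LinearPMap.isSelfAdjoint_def.1 hA] at h
  exact h x y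

/-- A self-adjoint operator bounded below by a positive constant has a bounded right inverse. -/
theorem exists_rightInverse_of_le_inner {L : H →ₗ.[ℂ] H} (hL : IsSelfAdjoint L) {c : ℝ}
    (hc : 0 < c) (hunif : ∀ h : L.domain, ((c * ‖(h : H)‖ ^ 2 : ℝ) : ℂ) ≤ ⟪L h, (h : H)⟫_ℂ) :
    ∃ N : H →L[ℂ] H, ∀ y, ∃ hy : N y ∈ L.domain, L ⟨N y, hy⟩ = y := by
  have hbound : ∀ h : L.domain, ‖(h : H)‖ ≤ c⁻¹ * ‖L h‖ := by
    intro h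
    have h1 : c * ‖(h : H)‖ ^ 2 ≤ ‖L h‖ * ‖(h : H)‖ :=
      (Complex.le_def.1 (hunif h)).1.trans
        ((Complex.re_le_norm _).trans (norm_inner_le_norm _ _))
    rw [inv_mul_eq_div, le_div_iff₀ hc]
    rcases (norm_nonneg (h : H)).eq_or_lt with h0 | h0
    · rw [← h0, zero_mul]; positivity
    · refine le_of_mul_le_mul_right ?_ h0
      nlinarith
  have : CompleteSpace L.graph :=
    (show IsClosed (L.graph : Set (H × H)) from hL.isClosed).completeSpace_coe
  set q : L.graph →L[ℂ] H := (ContinuousLinearMap.snd ℂ H H).comp L.graph.subtypeL with hq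
  have hgraph : ∀ p : L.graph, ∃ h : L.domain, (h : H) = (p : H × H).1 ∧ L h = q p :=
    fun p => (LinearPMap.mem_graph_iff _).1 p.2
  have hanti : AntilipschitzWith (Real.toNNReal (max c⁻¹ 1)) q := by
    refine ContinuousLinearMap.antilipschitz_of_bound q fun p => ?_
    obtain ⟨h, h1, h2⟩ := hgraph p
    rw [Real.coe_toNNReal _ (by positivity)]
    have hp : ‖p‖ = max ‖(p : H × H).1‖ ‖q p‖ := rfl
    rw [hp, ← h1]
    refine max_le ?_ ?_
    · rw [← h2]
      exact (hbound h).trans (by gcongr; exact le_max_left _ _)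
    · exact le_mul_of_one_le_left (norm_nonneg _) (le_max_right _ _)
  have hclosed : IsClosed (q.range : Set H) :=
    hanti.isClosed_range q.uniformContinuous
  have hker : q.ker = ⊥ := LinearMap.ker_eq_bot.2 hanti.injective
  have hrange : q.range = ⊤ := by
    have : CompleteSpace q.range := hclosed.completeSpace_coe
    rw [← Submodule.orthogonal_eq_bot_iff, Submodule.eq_bot_iff]
    intro y hy
    have h0 : ∀ x : L.domain, ⟪(0 : H), (x : H)⟫_ℂ = ⟪y, L x⟫_ℂ := fun x => by
      rw [inner_zero_left]
      exact ((Submodule.mem_orthogonal' _ _).1 hy _ ⟨⟨_, L.mem_graph x⟩, rfl⟩).symm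
    have hdom := LinearPMap.mem_adjoint_domain_of_exists y ⟨0, h0⟩
    have happ := LinearPMap.adjoint_apply_eq hL.dense_domain ⟨y, hdom⟩ h0
    have hLL := LinearPMap.isSelfAdjoint_def.1 hL
    have : ∃ hy' : y ∈ L.domain, L ⟨y, hy'⟩ = 0 := by
      rw [← hLL]
      exact ⟨hdom, happ⟩
    obtain ⟨hy', h1⟩ := this
    have := hbound ⟨y, hy'⟩
    rw [h1, norm_zero, mul_zero] at this
    exact norm_le_zero_iff.1 this
  let e := ContinuousLinearEquiv.ofBijective q hker hrange
  refine ⟨(ContinuousLinearMap.fst ℂ H H).comp (L.graph.subtypeL.comp (e.symm : H →L[ℂ] L.graph)),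
    fun y => ?_⟩
  obtain ⟨h, h1, h2⟩ := hgraph (e.symm y)
  have h3 : q (e.symm y) = y := e.apply_symm_apply y
  rw [h3] at h2
  change ∃ hy : ((e.symm y : L.graph) : H × H).1 ∈ L.domain, L ⟨_, hy⟩ = y
  simp only [← h1]
  exact ⟨h.2, h2⟩

theorem IsSignatureOperator.apply_apply {J : H →L[ℂ] H} (hJ : IsSignatureOperator J) (z : H) :
    J (J z) = z :=
  congrArg (fun M : H →L[ℂ] H => M z) hJ.2

theorem IsSignatureOperator.inner_apply_left {J : H →L[ℂ] H} (hJ : IsSignatureOperator J)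
    (y z : H) : ⟪J y, z⟫_ℂ = ⟪y, J z⟫_ℂ := by
  rw [← ContinuousLinearMap.adjoint_inner_right, hJ.1.adjoint_eq]

theorem IsSignatureOperator.norm_apply {J : H →L[ℂ] H} (hJ : IsSignatureOperator J) (z : H) :
    ‖J z‖ = ‖z‖ := by
  rw [@norm_eq_sqrt_re_inner ℂ, hJ.inner_apply_left, hJ.apply_apply, ← norm_eq_sqrt_re_inner]

theorem Pplus_apply_eq_self_iff {J : H →L[ℂ] H} {z : H} : Pplus J z = z ↔ J z = z := by
  simp only [Pplus, smul_apply, add_apply, ContinuousLinearMap.id_apply]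
  rw [inv_smul_eq_iff₀ two_ne_zero, two_smul, add_right_inj]

theorem Pplus_apply_eq_zero_iff {J : H →L[ℂ] H} {z : H} : Pplus J z = 0 ↔ J z = -z := by
  simp only [Pplus, smul_apply, add_apply, ContinuousLinearMap.id_apply]
  rw [smul_eq_zero_iff_right (by norm_num), add_comm, add_eq_zero_iff_eq_neg]

theorem IsSignatureOperator.Pplus_isSelfAdjoint {J : H →L[ℂ] H} (hJ : IsSignatureOperator J) :
    IsSelfAdjoint (Pplus J) := by
  refine IsSelfAdjoint.smul ?_ ((IsSelfAdjoint.one _).add hJ.1)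
  simp [IsSelfAdjoint]

theorem IsSignatureOperator.Pplus_mul_self {J : H →L[ℂ] H} (hJ : IsSignatureOperator J) :
    Pplus J * Pplus J = Pplus J := by
  ext z
  rw [mul_apply_eq_comp, Pplus_apply_eq_self_iff]
  simp only [Pplus, smul_apply, add_apply, ContinuousLinearMap.id_apply, map_smul, map_add,
    hJ.apply_apply, add_comm]

/-- A bounded solution of the homogeneous equation with `P₊ ψ(0) = 0` vanishes. -/
theorem eq_zero_of_bounded_solution {J : H →L[ℂ] H} (hJ : IsSignatureOperator J)
    {L : H →ₗ.[ℂ] H} {c : ℝ} (hc : 0 < c)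
    (hunif : ∀ h : L.domain, ((c * ‖(h : H)‖ ^ 2 : ℝ) : ℂ) ≤ ⟪L h, (h : H)⟫_ℂ)
    {ψ : ℝ → H} (hψ : ContinuousOn ψ (Ici 0))
    (hsol : ∀ x ∈ Ioi (0 : ℝ), ∃ hx : ψ x ∈ L.domain, HasDerivAt ψ (-J (L ⟨ψ x, hx⟩)) x)
    (h0 : Pplus J (ψ 0) = 0) {C : ℝ} (hC : ∀ x ∈ Ici (0 : ℝ), ‖ψ x‖ ≤ C) :
    ∀ x ∈ Ici (0 : ℝ), ψ x = 0 := by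
  set G : ℝ → ℝ := fun x => (⟪J (ψ x), ψ x⟫_ℂ).re with hG
  have hGc : ContinuousOn G (Ici 0) :=
    Complex.continuous_re.comp_continuousOn ((J.continuous.comp_continuousOn hψ).inner hψ)
  have hGabs : ∀ x, |G x| ≤ ‖ψ x‖ ^ 2 := fun x =>
    (Complex.abs_re_le_norm _).trans ((norm_inner_le_norm _ _).trans
      (by rw [hJ.norm_apply, sq]))
  have hder : ∀ x ∈ Ioi (0 : ℝ), ∃ d, HasDerivAt G d x ∧ d ≤ -(2 * c * ‖ψ x‖ ^ 2) := by
    intro x hx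
    obtain ⟨hd, h⟩ := hsol x hx
    have hJψ : HasDerivAt (fun y => J (ψ y)) (-L ⟨ψ x, hd⟩) x := by
      have := (J.restrictScalars ℝ).hasFDerivAt.comp_hasDerivAt x h
      simpa [Function.comp_def, hJ.apply_apply] using this
    refine ⟨_, Complex.reCLM.hasFDerivAt.comp_hasDerivAt x (hJψ.inner ℂ h), ?_⟩
    have h1 : c * ‖ψ x‖ ^ 2 ≤ (⟪L ⟨ψ x, hd⟩, ψ x⟫_ℂ).re := (Complex.le_def.1 (hunif ⟨ψ x, hd⟩)).1
    have h2 : (⟪ψ x, L ⟨ψ x, hd⟩⟫_ℂ).re = (⟪L ⟨ψ x, hd⟩, ψ x⟫_ℂ).re :=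
      inner_re_symm (𝕜 := ℂ) _ _
    rw [Complex.reCLM_apply, inner_neg_right, inner_neg_left, hJ.inner_apply_left,
      hJ.apply_apply, Complex.add_re, Complex.neg_re, Complex.neg_re, h2]
    linarith
  have hG0 : G 0 = -‖ψ 0‖ ^ 2 := by
    simp only [hG]
    rw [Pplus_apply_eq_zero_iff.1 h0, inner_neg_left, Complex.neg_re]
    exact congrArg Neg.neg (inner_self_eq_norm_sq (𝕜 := ℂ) (ψ 0))
  have hanti : AntitoneOn G (Ici 0) := by
    refine antitoneOn_of_deriv_nonpos (convex_Ici 0) hGc ?_ ?_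
    · intro x hx
      rw [interior_Ici] at hx
      obtain ⟨d, hd, -⟩ := hder x hx
      exact hd.differentiableAt.differentiableWithinAt
    · intro x hx
      rw [interior_Ici] at hx
      obtain ⟨d, hd, hle⟩ := hder x hx
      rw [hd.deriv]
      exact hle.trans (by rw [neg_nonpos]; positivity)
  have hzero : ∀ x ∈ Ici (0 : ℝ), G x = 0 := by
    intro x hx
    have hle : G x ≤ 0 := (hanti self_mem_Ici hx hx).trans (by rw [hG0, neg_nonpos]; positivity)
    by_contra hne
    have hlt : G x < 0 := lt_of_le_of_ne hle hne
    have hC2 : ∀ y ∈ Ici (0 : ℝ), -C ^ 2 ≤ G y := fun y hy => by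
      have h1 : ‖ψ y‖ ^ 2 ≤ C ^ 2 := by gcongr; exact hC y hy
      linarith [(abs_le.1 (hGabs y)).1]
    have hslope : ∀ y ∈ Ici x, G y - G x ≤ 2 * c * G x * (y - x) := by
      intro y hy
      have hsub : Ici x ⊆ Ici (0 : ℝ) := Ici_subset_Ici.2 hx
      refine Convex.image_sub_le_mul_sub_of_deriv_le (convex_Ici x) (hGc.mono hsub) ?_ ?_ x
        self_mem_Ici y hy hy
      · intro z hz
        rw [interior_Ici] at hz
        obtain ⟨d, hd, -⟩ := hder z (mem_Ioi.2 ((mem_Ici.1 hx).trans_lt hz))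
        exact hd.differentiableAt.differentiableWithinAt
      · intro z hz
        rw [interior_Ici] at hz
        obtain ⟨d, hd, hdle⟩ := hder z (mem_Ioi.2 ((mem_Ici.1 hx).trans_lt hz))
        have h1 : G z ≤ G x := hanti hx (hsub (mem_Ioi.1 hz).le) (mem_Ioi.1 hz).le
        have h2 := (abs_le.1 (hGabs z)).1
        rw [hd.deriv]
        nlinarith
    have hpos : 0 < 2 * c * (-G x) := by have := neg_pos.2 hlt; positivity
    set t := (C ^ 2 + 1) / (2 * c * (-G x)) with ht
    have ht0 : 0 ≤ t := by positivity
    have h1 := hslope (x + t) (mem_Ici.2 (by linarith))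
    have h2 := hC2 (x + t) (mem_Ici.2 (add_nonneg hx ht0))
    have h3 : 2 * c * (-G x) * t = C ^ 2 + 1 := mul_div_cancel₀ _ hpos.ne'
    nlinarith
  intro x hx
  rcases (mem_Ici.1 hx).eq_or_lt with rfl | hx
  · have h1 := hzero 0 self_mem_Ici
    rw [hG0, neg_eq_zero] at h1
    exact norm_eq_zero.1 (pow_eq_zero_iff two_ne_zero |>.1 h1)
  · obtain ⟨d, hd, hle⟩ := hder x hx
    have h1 : HasDerivAt G 0 x := by
      refine (hasDerivAt_const x (0 : ℝ)).congr_of_eventuallyEq ?_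
      filter_upwards [Ioi_mem_nhds hx] with y hy using hzero y (mem_Ioi.1 hy).le
    rw [hd.unique h1] at hle
    have h2 : ‖ψ x‖ ^ 2 ≤ 0 := by nlinarith
    exact norm_eq_zero.1 (pow_eq_zero_iff two_ne_zero |>.1 (le_antisymm h2 (sq_nonneg _)))

theorem locallyHolder_comp_max {f : ℝ → H}
    (hf : ∀ x₁ > (0 : ℝ), ∃ K > (0 : ℝ), ∃ k ∈ Ioc (0 : ℝ) 1,
      ∀ x ∈ Icc (0 : ℝ) x₁, ∀ y ∈ Icc (0 : ℝ) x₁, ‖f x - f y‖ ≤ K * |x - y| ^ k) :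
    LocallyHolder fun x => f (max x 0) := by
  intro N hN
  obtain ⟨K, hK, k, hk, h⟩ := hf N hN
  refine ⟨K, hK, k, hk, fun x hx y hy => ?_⟩
  refine (h _ ⟨le_max_right _ _, max_le hx.2 hN.le⟩
    _ ⟨le_max_right _ _, max_le hy.2 hN.le⟩).trans ?_
  gcongr ?_ * ?_
  refine Real.rpow_le_rpow (abs_nonneg _) ?_ hk.1.le
  exact abs_max_sub_max_le_abs x y 0

/-- A bounded solution exists for every bounded locally Hölder right-hand side. -/
theorem exists_bounded_strongSolution {J : H →L[ℂ] H} (hJ : IsSignatureOperator J)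
    {L : H →ₗ.[ℂ] H} (hL : IsSelfAdjoint L) {c : ℝ} (hc : 0 < c)
    (hunif : ∀ h : L.domain, ((c * ‖(h : H)‖ ^ 2 : ℝ) : ℂ) ≤ ⟪L h, (h : H)⟫_ℂ)
    (hsim : SimilarToSelfAdjoint (pmapComp J L)) {f : ℝ → H}
    (hf : ∀ x₁ > (0 : ℝ), ∃ K > (0 : ℝ), ∃ k ∈ Ioc (0 : ℝ) 1,
      ∀ x ∈ Icc (0 : ℝ) x₁, ∀ y ∈ Icc (0 : ℝ) x₁, ‖f x - f y‖ ≤ K * |x - y| ^ k)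
    {C : ℝ} (hC : ∀ x ∈ Ici (0 : ℝ), ‖f x‖ ≤ C) {φ : H} (hφ : J φ = φ) :
    ∃ ψ : ℝ → H, ContinuousOn ψ (Ici 0) ∧ IsStrongSolutionOn (pmapComp J L) f ψ (Ioi 0) ∧
      Pplus J (ψ 0) = φ ∧ ∃ D : ℝ, ∀ x ∈ Ici (0 : ℝ), ‖ψ x‖ ≤ D := by
  obtain ⟨N, hN⟩ := exists_rightInverse_of_le_inner hL hc hunif
  obtain ⟨S, A, hA, hAdom, hAS⟩ := hsim
  have hNpos : 0 ≤ N := by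
    rw [ContinuousLinearMap.nonneg_iff_isPositive, ContinuousLinearMap.isPositive_iff_complex]
    intro y
    obtain ⟨hy, hLy⟩ := hN y
    have h := hunif ⟨N y, hy⟩
    rw [hLy] at h
    have h1 : 0 ≤ ⟪y, N y⟫_ℂ := le_trans (by exact_mod_cast (by positivity)) h
    rw [← inner_conj_symm, Complex.le_def] at h1
    obtain ⟨h2, h3⟩ := h1
    rw [Complex.conj_re] at h2
    rw [Complex.conj_im] at h3
    refine ⟨Complex.ext rfl ?_, h2⟩
    rw [Complex.ofReal_im]
    exact zero_eq_neg.1 h3 |>.symm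
  set Si : H →L[ℂ] H := (S.symm : H →L[ℂ] H) with hSi
  have hSSi : (S : H →L[ℂ] H) * Si = 1 := by ext z; simp [hSi]
  have hSiS : Si * (S : H →L[ℂ] H) = 1 := by ext z; simp [hSi]
  set T : H →L[ℂ] H := (S : H →L[ℂ] H) * N * J * Si with hT
  have hTA : ∀ u, ∃ hu : T u ∈ A.domain, A ⟨T u, hu⟩ = u := by
    intro u
    obtain ⟨hy, hLy⟩ := hN (J (Si u))
    have hmem : S (N (J (Si u))) ∈ A.domain := by
      rw [← SetLike.mem_coe, hAdom]
      exact ⟨_, hy, rfl⟩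
    refine ⟨hmem, (hAS ⟨_, hy⟩ hmem).trans ?_⟩
    change S (J (L ⟨_, hy⟩)) = u
    rw [hLy, hJ.apply_apply]
    exact S.apply_symm_apply u
  have hTinj : Function.Injective T := by
    intro u v huv
    obtain ⟨hu, hu'⟩ := hTA u
    obtain ⟨hv, hv'⟩ := hTA v
    rw [← hu', ← hv']
    simp only [huv]
  have hTsa : IsSelfAdjoint T := by
    rw [ContinuousLinearMap.isSelfAdjoint_iff_isSymmetric]
    intro u v
    obtain ⟨hu, hu'⟩ := hTA u
    obtain ⟨hv, hv'⟩ := hTA v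
    have h := LinearPMap.inner_apply_left_of_isSelfAdjoint hA ⟨T u, hu⟩ ⟨T v, hv⟩
    rw [hu', hv'] at h
    exact h.symm
  set W : H →L[ℂ] H := star Si * J * Si with hW
  have hWsa : IsSelfAdjoint W := hJ.1.conjugate' Si
  have hJJ : J * J = 1 := hJ.2
  have hSiu : IsUnit Si := ⟨⟨Si, S, hSiS, hSSi⟩, rfl⟩
  have hWu : IsUnit W := (hSiu.star.mul ⟨⟨J, J, hJJ, hJJ⟩, rfl⟩).mul hSiu
  have hWT : 0 ≤ W * T := by
    have e : W * T = star (J * Si) * N * (J * Si) := by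
      rw [star_mul, hJ.1.star_eq, hW, hT]
      calc star Si * J * Si * ((S : H →L[ℂ] H) * N * J * Si)
          = star Si * J * (Si * (S : H →L[ℂ] H)) * N * J * Si := by simp only [mul_assoc]
        _ = star Si * J * N * (J * Si) := by rw [hSiS, mul_one]; simp only [mul_assoc]
    rw [e]
    exact star_left_conjugate_nonneg hNpos _
  obtain ⟨Q, hQ, hQQ, hQT, hQW, hTQ, hWQ⟩ := exists_sign_operator hWsa hWu hTsa hWT
  have hg : LocallyHolder fun x => (S : H →L[ℂ] H) (f (max x 0)) :=
    (locallyHolder_comp_max hf).map _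
  have hgC : ∀ x, ‖(S : H →L[ℂ] H) (f (max x 0))‖ ≤ ‖(S : H →L[ℂ] H)‖ * C := fun x =>
    (ContinuousLinearMap.le_opNorm _ _).trans
      (mul_le_mul_of_nonneg_left (hC _ (mem_Ici.2 (le_max_right _ _))) (norm_nonneg _))
  obtain ⟨b, hb⟩ := exists_bounded_solution hQQ hQT hTQ hTinj hg hgC
  have hPη : Pplus J (φ - Pplus J (Si b)) = φ - Pplus J (Si b) := by
    rw [map_sub, Pplus_apply_eq_self_iff.2 hφ, ← mul_apply_eq_comp, hJ.Pplus_mul_self]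
  obtain ⟨a, ha, hPa⟩ := exists_apply_symm_eq S hJ.Pplus_isSelfAdjoint hJ.Pplus_mul_self
    (fun z hz => by
      rw [hW, mul_apply_eq_comp, mul_apply_eq_comp, ← ContinuousLinearMap.star_eq_adjoint]
      congr 1
      change J (S.symm (S z)) = z
      rw [S.symm_apply_apply, Pplus_apply_eq_self_iff.1 hz]) hQ hQQ hQW hWQ hPη
  obtain ⟨χ, χ', hχ, hχ', hsol, hχ0, D, hD⟩ := hb a ha
  refine ⟨fun x => Si (χ x), Si.continuous.comp_continuousOn hχ,
    ⟨fun x => Si (χ' x), Si.continuous.comp_continuousOn hχ', fun x hx => ?_⟩, ?_,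
    ‖Si‖ * D, fun x hx => ?_⟩
  · obtain ⟨hd, he⟩ := hsol x hx
    refine ⟨(Si.restrictScalars ℝ).hasFDerivAt.comp_hasDerivAt x hd, ?_⟩
    have hSiz : ∀ z, Si (S z) = z := S.symm_apply_apply
    have h1 : Si (χ x) = N (J (f x - Si (χ' x))) := by
      rw [he, max_eq_left (mem_Ioi.1 hx).le]
      simp only [hT, mul_apply_eq_comp, map_sub, ContinuousLinearEquiv.coe_coe, hSiz]
    obtain ⟨hy, hLy⟩ := hN (J (f x - Si (χ' x)))
    simp only [h1]
    refine ⟨hy, ?_⟩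
    change _ = -J (L ⟨_, hy⟩) + f x
    rw [hLy, hJ.apply_apply]
    abel
  · simp only [hχ0, map_add]
    exact (congrArg (· + Pplus J (Si b)) hPa).trans (sub_add_cancel _ _)
  · exact (Si.le_opNorm _).trans (mul_le_mul_of_nonneg_left (hD x hx) (norm_nonneg _))

/-- If `L = L* ≥ lam0 > 0` is uniformly positive and `B = JL` is similar to a
self-adjoint operator, `f` is locally Hölder continuous on `[0, ∞)` and bounded, then the
half-space problem `dψ/dx = -Bψ + f`, `P₊ψ(0) = φ₊`, `‖ψ(x)‖ = O(1)` has a unique solution. -/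
theorem statement17 (J : H →L[ℂ] H) (hJ : IsSignatureOperator J)
    (L : H →ₗ.[ℂ] H) (hdense : Dense (L.domain : Set H))
    (hLsa : IsSelfAdjoint L)
    (lam0 : ℝ) (hlam0 : 0 < lam0)
    (hunif : ∀ h : L.domain, ((lam0 * ‖(h : H)‖ ^ 2 : ℝ) : ℂ) ≤ ⟪L h, (h : H)⟫_ℂ)
    (hsim : SimilarToSelfAdjoint (pmapComp J L))
    (f : ℝ → H)
    (hf : ∀ x₁ > (0 : ℝ), ∃ K > (0 : ℝ), ∃ k ∈ Set.Ioc (0 : ℝ) 1,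
      ∀ x ∈ Set.Icc (0 : ℝ) x₁, ∀ y ∈ Set.Icc (0 : ℝ) x₁, ‖f x - f y‖ ≤ K * |x - y| ^ k)
    (hfbdd : ∃ Cf : ℝ, ∀ x ∈ Set.Ici (0 : ℝ), ‖f x‖ ≤ Cf)
    (φp : H) (hφp : J φp = φp) :
    (∃ ψ : ℝ → H,
        ContinuousOn ψ (Set.Ici 0) ∧
        IsStrongSolutionOn (pmapComp J L) f ψ (Set.Ioi 0) ∧
        Pplus J (ψ 0) = φp ∧
        (∃ C : ℝ, ∀ x ∈ Set.Ici (0 : ℝ), ‖ψ x‖ ≤ C)) ∧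
    (∀ ψ₁ ψ₂ : ℝ → H,
        (ContinuousOn ψ₁ (Set.Ici 0) ∧
          IsStrongSolutionOn (pmapComp J L) f ψ₁ (Set.Ioi 0) ∧
          Pplus J (ψ₁ 0) = φp ∧
          (∃ C : ℝ, ∀ x ∈ Set.Ici (0 : ℝ), ‖ψ₁ x‖ ≤ C)) →
        (ContinuousOn ψ₂ (Set.Ici 0) ∧
          IsStrongSolutionOn (pmapComp J L) f ψ₂ (Set.Ioi 0) ∧
          Pplus J (ψ₂ 0) = φp ∧
          (∃ C : ℝ, ∀ x ∈ Set.Ici (0 : ℝ), ‖ψ₂ x‖ ≤ C)) →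
        Set.EqOn ψ₁ ψ₂ (Set.Ici 0)) := by
  constructor
  · obtain ⟨Cf, hCf⟩ := hfbdd
    exact exists_bounded_strongSolution hJ hLsa hlam0 hunif hsim hf hCf hφp
  · rintro ψ₁ ψ₂ ⟨hc₁, ⟨ψ₁', -, hs₁⟩, hP₁, C₁, hC₁⟩ ⟨hc₂, ⟨ψ₂', -, hs₂⟩, hP₂, C₂, hC₂⟩ x hx
    refine sub_eq_zero.1 (eq_zero_of_bounded_solution hJ hlam0 hunif (ψ := fun x => ψ₁ x - ψ₂ x)
      (hc₁.sub hc₂) (fun y hy => ?_) ?_ (C := C₁ + C₂) (fun y hy => ?_) x hx)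
    · obtain ⟨hd₁, hy₁, e₁⟩ := hs₁ y hy
      obtain ⟨hd₂, hy₂, e₂⟩ := hs₂ y hy
      have hLdom₁ : ψ₁ y ∈ L.domain := hy₁
      have hLdom₂ : ψ₂ y ∈ L.domain := hy₂
      refine ⟨L.domain.sub_mem hLdom₁ hLdom₂, ?_⟩
      have h := hd₁.sub hd₂
      have hLsub : L ⟨ψ₁ y - ψ₂ y, L.domain.sub_mem hLdom₁ hLdom₂⟩
          = L ⟨ψ₁ y, hLdom₁⟩ - L ⟨ψ₂ y, hLdom₂⟩ := L.map_sub ⟨ψ₁ y, hLdom₁⟩ ⟨ψ₂ y, hLdom₂⟩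
      have e : ψ₁' y - ψ₂' y = -J (L ⟨ψ₁ y, hLdom₁⟩ - L ⟨ψ₂ y, hLdom₂⟩) := by
        rw [e₁, e₂, map_sub]
        change -J (L ⟨ψ₁ y, hLdom₁⟩) + f y - (-J (L ⟨ψ₂ y, hLdom₂⟩) + f y) = _
        abel
      rw [hLsub, ← e]
      exact h
    · rw [map_sub, hP₁, hP₂, sub_self]
    · exact (norm_sub_le _ _).trans (add_le_add (hC₁ y hy) (hC₂ y hy))

end
end
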